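/- arXiv:1305.6162 — 2 statements merged into one kernel-verified Lean document; each statement's English description precedes it below -/
import Mathlib

section
/- The assignment C_i ↦ Ȟ_i + q·id defines an isomorphism of ℂ(q)-algebras STL_n ≅ End_{U_q(gl(1|1))}(V^{⊗n}); equivalently, the operators C_i = Ȟ_i + q·id on V^{⊗n} satisfy the relations of STL_n, and the kernel of the surjection H_n → End_{U_q(gl(1|1))}(V^{⊗n}), H_i ↦ Ȟ_i, is generated as a two-sided ideal by the elements C_{i-1}C_{i+1}C_i((q+q^{-1})-C_{i-1})((q+q^{-1})-C_{i+1}) and ((q+q^{-1})-C_{i-1})((q+q^{-1})-C_{i+1})C_iC_{i-1}C_{i+1} for i = 2,...,n-2, where C_i = H_i + q. -/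
open scoped Classical

set_option maxHeartbeats 1000000
set_option synthInstance.maxHeartbeats 200000

noncomputable section

abbrev K : Type := RatFunc ℂ

noncomputable def q : K := RatFunc.X

/-- The quantum integer `[k] = (q^k - q^{-k})/(q - q^{-1})`. -/
noncomputable def qnum (k : ℕ) : K := (q ^ k - q⁻¹ ^ k) / (q - q⁻¹)

/-- The quantum factorial `[k]! = [k][k-1]⋯[1]`. -/
noncomputable def qfact : ℕ → K
  | 0 => 1
  | k + 1 => qnum (k + 1) * qfact k

/-- The underlying vector space of `V(a_1) ⊗ ⋯ ⊗ V(a_n)`, with standard basis indexed by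
sequences `η ∈ {0,1}^n`. -/
abbrev V (n : ℕ) : Type := (Fin n → Fin 2) → K

/-- The standard basis vector `v_η`. -/
noncomputable def eb {n : ℕ} (η : Fin n → Fin 2) : V n := fun γ => if γ = η then 1 else 0

/-- The number of `1`s in `γ` strictly before position `i` (the Koszul sign exponent). -/
def onesBefore {n : ℕ} (γ : Fin n → Fin 2) (i : Fin n) : ℕ :=
  (Finset.univ.filter (fun k => k < i ∧ γ k = 1)).card

/-- The action of `E` on `V(a_1) ⊗ ⋯ ⊗ V(a_n)` (via the iterated comultiplication
`Δ(E) = E ⊗ K⁻¹ + 1 ⊗ E`, with the Koszul sign rule). -/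
noncomputable def Eop (a : ℕ → ℕ) (n : ℕ) : Module.End K (V n) where
  toFun f := fun γ => ∑ i : Fin n,
    if γ i = 0 then
      ((-1 : K) ^ onesBefore γ i) * qnum (a i)
        * q ^ (-((∑ j ∈ Finset.univ.filter (fun j => i < j), a j : ℕ) : ℤ))
        * f (Function.update γ i 1)
    else 0
  map_add' f g := by
    funext γ
    simp only [Pi.add_apply, ← Finset.sum_add_distrib]
    refine Finset.sum_congr rfl fun i _ => ?_
    split_ifs <;> ring
  map_smul' c f := by
    funext γ
    simp only [Pi.smul_apply, smul_eq_mul, RingHom.id_apply, Finset.mul_sum]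
    refine Finset.sum_congr rfl fun i _ => ?_
    split_ifs <;> ring

/-- The action of `F` on `V(a_1) ⊗ ⋯ ⊗ V(a_n)` (via the iterated comultiplication
`Δ(F) = F ⊗ 1 + K ⊗ F`, with the Koszul sign rule). -/
noncomputable def Fop (a : ℕ → ℕ) (n : ℕ) : Module.End K (V n) where
  toFun f := fun γ => ∑ i : Fin n,
    if γ i = 1 then
      ((-1 : K) ^ onesBefore γ i)
        * q ^ (∑ j ∈ Finset.univ.filter (fun j => j < i), a j)
        * f (Function.update γ i 0)
    else 0
  map_add' f g := by
    funext γ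
    simp only [Pi.add_apply, ← Finset.sum_add_distrib]
    refine Finset.sum_congr rfl fun i _ => ?_
    split_ifs <;> ring
  map_smul' c f := by
    funext γ
    simp only [Pi.smul_apply, smul_eq_mul, RingHom.id_apply, Finset.mul_sum]
    refine Finset.sum_congr rfl fun i _ => ?_
    split_ifs <;> ring

/-- The action of `q^h` for `h = c·h₁ + d·h₂` on `V(a_1) ⊗ ⋯ ⊗ V(a_n)`:
the basis vector `v^{a_i}_0` has weight `a_i ε₁` and `v^{a_i}_1` has weight
`(a_i - 1) ε₁ + ε₂`. -/
noncomputable def Kop (a : ℕ → ℕ) (n : ℕ) (c d : ℤ) : Module.End K (V n) where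
  toFun f := fun γ =>
    q ^ (∑ i : Fin n, (if γ i = 0 then c * (a i : ℤ) else c * ((a i : ℤ) - 1) + d)) * f γ
  map_add' f g := by
    funext γ
    simp only [Pi.add_apply]
    ring
  map_smul' c' f := by
    funext γ
    simp only [Pi.smul_apply, smul_eq_mul, RingHom.id_apply]
    ring

/-- The endomorphism `Ȟ_i` of `V^{⊗n}` (acting on the `i`-th and `(i+1)`-st tensor
factors, 0-based). -/
noncomputable def Hop (n : ℕ) (i : ℕ) (hi : i + 1 < n) : Module.End K (V n) where
  toFun f := fun γ =>
    if γ ⟨i, by omega⟩ = 0 ∧ γ ⟨i + 1, hi⟩ = 0 then q⁻¹ * f γ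
    else if γ ⟨i, by omega⟩ = 1 ∧ γ ⟨i + 1, hi⟩ = 1 then (-q) * f γ
    else if γ ⟨i, by omega⟩ = 0 ∧ γ ⟨i + 1, hi⟩ = 1 then
      f (fun k => γ (Equiv.swap ⟨i, by omega⟩ ⟨i + 1, hi⟩ k))
    else (q⁻¹ - q) * f γ + f (fun k => γ (Equiv.swap ⟨i, by omega⟩ ⟨i + 1, hi⟩ k))
  map_add' f g := by
    funext γ
    simp only [Pi.add_apply]
    split_ifs <;> ring
  map_smul' c f := by
    funext γ
    simp only [Pi.smul_apply, smul_eq_mul, RingHom.id_apply]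
    split_ifs <;> ring

/-- The constant sequence `(1,1,…)`: all tensor factors are the vector representation. -/
def one' : ℕ → ℕ := fun _ => 1

/-!
STATEMENT 8: `C_i ↦ Ȟ_i + q·id` defines an isomorphism of `ℂ(q)`-algebras
`STL_n ≅ End_{U_q(gl(1|1))}(V^{⊗n})`; equivalently, the kernel of the surjection
`H_n → End_{U_q(gl(1|1))}(V^{⊗n})`, `H_i ↦ Ȟ_i`, is generated as a two-sided ideal by
the elements `C_{i-1}C_{i+1}C_i((q+q⁻¹)-C_{i-1})((q+q⁻¹)-C_{i+1})` and
`((q+q⁻¹)-C_{i-1})((q+q⁻¹)-C_{i+1})C_iC_{i-1}C_{i+1}` (`C_i = H_i + q`).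

The Hecke algebra `H_n` and the super Temperley–Lieb algebra `STL_n` are presented
concretely as quotients (`RingQuot`) of the free algebra on `n-1` generators by their
defining relations.
-/

/-- The defining relations of the Hecke algebra `H_n`. -/
inductive heckeRel (n : ℕ) : FreeAlgebra K (Fin (n - 1)) → FreeAlgebra K (Fin (n - 1)) → Prop
  | comm (i j : Fin (n - 1)) (h : (i : ℕ) + 1 < j ∨ (j : ℕ) + 1 < i) :
      heckeRel n (FreeAlgebra.ι K i * FreeAlgebra.ι K j)
        (FreeAlgebra.ι K j * FreeAlgebra.ι K i)
  | braid (i j : Fin (n - 1)) (h : (j : ℕ) = (i : ℕ) + 1) :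
      heckeRel n (FreeAlgebra.ι K i * FreeAlgebra.ι K j * FreeAlgebra.ι K i)
        (FreeAlgebra.ι K j * FreeAlgebra.ι K i * FreeAlgebra.ι K j)
  | quad (i : Fin (n - 1)) :
      heckeRel n (FreeAlgebra.ι K i * FreeAlgebra.ι K i)
        ((q⁻¹ - q) • FreeAlgebra.ι K i + 1)

/-- The Hecke algebra `H_n` of the symmetric group `S_n`, presented by generators and
relations. -/
abbrev HeckeAlg (n : ℕ) : Type := RingQuot (heckeRel n)

/-- The standard generator `H_i` of the Hecke algebra. -/
noncomputable def Hgen (n : ℕ) (i : Fin (n - 1)) : HeckeAlg n :=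
  RingQuot.mkAlgHom K (heckeRel n) (FreeAlgebra.ι K i)

/-- The defining relations of the super Temperley–Lieb algebra `STL_n`. -/
inductive stlRel (n : ℕ) : FreeAlgebra K (Fin (n - 1)) → FreeAlgebra K (Fin (n - 1)) → Prop
  | sq (i : Fin (n - 1)) :
      stlRel n (FreeAlgebra.ι K i * FreeAlgebra.ι K i) ((q + q⁻¹) • FreeAlgebra.ι K i)
  | comm (i j : Fin (n - 1)) (h : (i : ℕ) + 1 < j ∨ (j : ℕ) + 1 < i) :
      stlRel n (FreeAlgebra.ι K i * FreeAlgebra.ι K j)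
        (FreeAlgebra.ι K j * FreeAlgebra.ι K i)
  | braid (i j : Fin (n - 1)) (h : (j : ℕ) = (i : ℕ) + 1) :
      stlRel n (FreeAlgebra.ι K i * FreeAlgebra.ι K j * FreeAlgebra.ι K i - FreeAlgebra.ι K i)
        (FreeAlgebra.ι K j * FreeAlgebra.ι K i * FreeAlgebra.ι K j - FreeAlgebra.ι K j)
  | z1 (a b c : Fin (n - 1)) (hb : (b : ℕ) = (a : ℕ) + 1) (hc : (c : ℕ) = (a : ℕ) + 2) :
      stlRel n (FreeAlgebra.ι K a * FreeAlgebra.ι K c * FreeAlgebra.ι K b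
          * ((q + q⁻¹) • 1 - FreeAlgebra.ι K a) * ((q + q⁻¹) • 1 - FreeAlgebra.ι K c)) 0
  | z2 (a b c : Fin (n - 1)) (hb : (b : ℕ) = (a : ℕ) + 1) (hc : (c : ℕ) = (a : ℕ) + 2) :
      stlRel n (((q + q⁻¹) • 1 - FreeAlgebra.ι K a) * ((q + q⁻¹) • 1 - FreeAlgebra.ι K c)
          * FreeAlgebra.ι K b * FreeAlgebra.ι K a * FreeAlgebra.ι K c) 0

/-- The super Temperley–Lieb algebra `STL_n`, presented by generators and relations. -/
abbrev STL (n : ℕ) : Type := RingQuot (stlRel n)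

/-- The generator `C_i` of `STL_n`. -/
noncomputable def Cgen (n : ℕ) (i : Fin (n - 1)) : STL n :=
  RingQuot.mkAlgHom K (stlRel n) (FreeAlgebra.ι K i)

/-- The algebra `End_{U_q(gl(1|1))}(V^{⊗n})` of endomorphisms of `V^{⊗n}` commuting with
the action of `E`, `F` and all `q^h`. -/
noncomputable def EndUq (n : ℕ) : Subalgebra K (Module.End K (V n)) :=
  Subalgebra.centralizer K
    ({Eop one' n, Fop one' n} ∪ {X | ∃ c d : ℤ, X = Kop one' n c d})

/-- `C_i` in the Hecke algebra: `C_i = H_i + q`. -/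
noncomputable def CH (n : ℕ) (i : Fin (n - 1)) : HeckeAlg n := Hgen n i + q • 1

/-!
The operators `Ȟ_k + q` are quadratic in free fermion modes,
`(ψ⁺_k - q⁻¹ ψ⁺_{k+1}) (q ψ_k - ψ_{k+1})`, while `E` and `F` are linear in the modes; this gives
both the relations of `STL_n` and the commutation with `U_q(gl(1|1))`.

Conversely, the relations of `STL_n` alone produce commuting idempotents which measure occupation
numbers: each is read off from its predecessor and the next generator, as with Jucys-Murphy
elements. In a module over `STL_n` a common eigenvector of these idempotents has as its weight a
subset of `{0, …, n - 2}`, and the generators act on such vectors by the seminormal form, in which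
exchanging an occupied and an empty neighbour is invertible. Every weight is thereby reached from
an initial segment `{0, …, r - 1}`, so an element of `STL_n` is determined by its action on vectors
of these `n` weights.

* Injectivity: the idempotents of the initial segments do not vanish on `V^{⊗n}`.
* Surjectivity: `EF + FE = [n]` makes `ker F` half of `V^{⊗n}`, and the vectors of the `n`
  seminormal orbits fill it. An operator commuting with `E`, `F` and `K` is determined on `ker F`,
  where `K` tells the orbits apart.
* Hecke algebra: its quotient by the two families of quintic elements satisfies the relations of
  `STL_n`, so the argument for injectivity applies to it.
-/

namespace SuperTL

section Local

variable {F A : Type*} [Field F] [Ring A] [Algebra F A]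

/-- In the seminormal form, a generator `D` exchanges two neighbouring occupation numbers, one of
which is measured by the idempotent `N`. This is the idempotent measuring the other one, read off
from the blocks of `D` with respect to `N`. -/
def nextOcc (l u : F) (N D : A) : A :=
  l⁻¹ • ((1 - N) * D * (1 - N) + N * D * N - u • N)

/-- The relations between an occupation idempotent `N` and a generator `D` with seminormal
coefficients `l`, `u`: they make `nextOcc l u N D` an idempotent. -/
structure SeminormalPair (l u : F) (N D : A) : Prop where
  idem : N * N = N
  sq : D * D = (l + u) • D
  rel : D * N * D - u • D = (l + u) • (N * D * N - u • N)

theorem commute_nextOcc_of_commute {l u : F} {N D x : A} (hN : Commute x N) (hD : Commute x D) :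
    Commute x (nextOcc l u N D) := by
  have hN' : Commute x (1 - N) := (Commute.one_right x).sub_right hN
  exact ((((hN'.mul_right hD).mul_right hN').add_right
    ((hN.mul_right hD).mul_right hN)).sub_right (hN.smul_right u)).smul_right _

namespace SeminormalPair

variable {l u : F} {N D : A}

theorem idem_assoc (h : SeminormalPair l u N D) (x : A) : N * (N * x) = N * x := by
  rw [← mul_assoc, h.idem]

theorem sq_assoc (h : SeminormalPair l u N D) (x : A) : D * (D * x) = (l + u) • (D * x) := by
  rw [← mul_assoc, h.sq, smul_mul_assoc]

theorem mul_mul (h : SeminormalPair l u N D) :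
    D * (N * D) = u • D + (l + u) • (N * (D * N)) - ((l + u) * u) • N := by
  have hrel := sub_eq_iff_eq_add.mp h.rel
  rw [← mul_assoc, hrel, mul_assoc]
  module

theorem mul_mul_assoc (h : SeminormalPair l u N D) (x : A) :
    D * (N * (D * x)) = u • (D * x) + (l + u) • (N * (D * (N * x))) - ((l + u) * u) • (N * x) := by
  simpa only [mul_assoc, add_mul, sub_mul, smul_mul_assoc] using congrArg (· * x) h.mul_mul

theorem compl (h : SeminormalPair l u N D) :
    SeminormalPair l u (1 - N) ((l + u) • 1 - D) where
  idem := by simp only [mul_sub, sub_mul, mul_one, one_mul, h.idem, sub_self, sub_zero]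
  sq := by
    simp only [mul_sub, sub_mul, mul_one, one_mul, smul_mul_assoc, mul_smul_comm, h.sq]
    module
  rel := by
    simp only [mul_sub, sub_mul, mul_one, one_mul, smul_mul_assoc, mul_smul_comm, smul_sub,
      mul_assoc, h.idem, h.sq, h.mul_mul]
    module

theorem nextOcc_compl (h : SeminormalPair l u N D) (hl : l ≠ 0) :
    nextOcc l u (1 - N) ((l + u) • 1 - D) = 1 - nextOcc l u N D := by
  simp only [nextOcc, mul_sub, sub_mul, mul_one, one_mul, smul_mul_assoc, mul_smul_comm, smul_sub,
    smul_add, mul_assoc, h.idem]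
  match_scalars <;> field_simp <;> ring

theorem commute_nextOcc (h : SeminormalPair l u N D) : Commute N (nextOcc l u N D) := by
  simp only [commute_iff_eq, nextOcc, mul_add, add_mul, mul_sub, sub_mul, mul_one, one_mul,
    smul_mul_assoc, mul_smul_comm, mul_assoc, h.idem, h.idem_assoc]
  module

theorem diag_zero (h : SeminormalPair l u N D) (hl : l ≠ 0) :
    (1 - N) * D * (1 - N) = l • ((1 - N) * nextOcc l u N D) := by
  simp only [nextOcc, mul_add, mul_sub, sub_mul, mul_one, one_mul, mul_smul_comm,
    smul_add, smul_sub, mul_assoc, h.idem, h.idem_assoc]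
  match_scalars <;> field_simp <;> ring

theorem diag_one (h : SeminormalPair l u N D) (hl : l ≠ 0) :
    N * D * N = l • (N * nextOcc l u N D) + u • N := by
  simp only [nextOcc, mul_add, mul_sub, sub_mul, mul_one, one_mul,
    mul_smul_comm, smul_add, smul_sub, mul_assoc, h.idem, h.idem_assoc]
  match_scalars <;> field_simp <;> ring

theorem nextOcc_idem (h : SeminormalPair l u N D) (hl : l ≠ 0) :
    nextOcc l u N D * nextOcc l u N D = nextOcc l u N D := by
  simp only [nextOcc, mul_add, add_mul, mul_sub, sub_mul, mul_one, one_mul, smul_mul_assoc,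
    mul_smul_comm, smul_add, smul_sub, mul_assoc, h.idem, h.idem_assoc, h.sq, h.sq_assoc,
    h.mul_mul, h.mul_mul_assoc]
  match_scalars <;> field_simp <;> ring

theorem commute_add_nextOcc (h : SeminormalPair l u N D) (hl : l ≠ 0) :
    Commute D (N + nextOcc l u N D) := by
  simp only [commute_iff_eq, nextOcc, mul_add, add_mul, mul_sub, sub_mul, mul_one, one_mul,
    smul_mul_assoc, mul_smul_comm, smul_add, smul_sub, mul_assoc, h.idem_assoc, h.idem,
    h.sq, h.sq_assoc, h.mul_mul, h.mul_mul_assoc]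
  match_scalars <;> field_simp <;> ring

theorem mul_nextOcc_mul (h : SeminormalPair l u N D) (hl : l ≠ 0) :
    D * (N * nextOcc l u N D) = (l + u) • (N * nextOcc l u N D) := by
  simp only [nextOcc, mul_add, mul_sub, sub_mul, mul_one, one_mul, mul_smul_comm, smul_add,
    smul_sub, mul_assoc, h.idem, h.idem_assoc, h.mul_mul_assoc]
  match_scalars <;> field_simp <;> ring

theorem nextOcc_mul_mul (h : SeminormalPair l u N D) (hl : l ≠ 0) :
    N * nextOcc l u N D * D = (l + u) • (N * nextOcc l u N D) := by
  simp only [nextOcc, mul_add, add_mul, mul_sub, sub_mul, mul_one, one_mul, smul_mul_assoc,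
    mul_smul_comm, smul_add, smul_sub, mul_assoc, h.idem, h.idem_assoc, h.mul_mul]
  match_scalars <;> field_simp <;> ring

theorem mul_compl_nextOcc (h : SeminormalPair l u N D) (hl : l ≠ 0) :
    D * ((1 - N) * (1 - nextOcc l u N D)) = 0 := by
  have := h.compl.mul_nextOcc_mul hl
  rwa [h.nextOcc_compl hl, sub_mul, smul_mul_assoc, one_mul, sub_eq_self] at this

theorem offDiag_mul_nextOcc (h : SeminormalPair l u N D) (hl : l ≠ 0) :
    N * D * (1 - N) * nextOcc l u N D = N * D * (1 - N) := by
  have := congrArg (N * ·) (h.mul_compl_nextOcc hl)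
  simp only [mul_zero, ← mul_assoc] at this
  rwa [mul_sub, mul_one, sub_eq_zero, eq_comm] at this

theorem nextOcc_mul_offDiag (h : SeminormalPair l u N D) (hl : l ≠ 0) :
    nextOcc l u N D * (N * D * (1 - N)) = 0 := by
  rw [← mul_assoc, ← mul_assoc, ← h.commute_nextOcc.eq, h.nextOcc_mul_mul hl, smul_mul_assoc,
    h.commute_nextOcc.eq, mul_assoc, mul_sub, mul_one, h.idem, sub_self, mul_zero, smul_zero]

theorem offDiag_mul_offDiag (h : SeminormalPair l u N D) (hl : l ≠ 0) :
    (1 - N) * D * N * (N * D * (1 - N)) = (l * u) • ((1 - N) * nextOcc l u N D) := by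
  simp only [nextOcc, mul_add, mul_sub, sub_mul, mul_one, one_mul, mul_smul_comm,
    smul_add, smul_sub, mul_assoc, h.idem, h.idem_assoc, h.mul_mul, h.mul_mul_assoc]
  match_scalars <;> field_simp <;> ring

theorem offDiag_compl (h : SeminormalPair l u N D) :
    (1 - N) * ((l + u) • 1 - D) * (1 - (1 - N)) = -((1 - N) * D * N) := by
  have : (1 - N) * N = 0 := by rw [sub_mul, one_mul, h.idem, sub_self]
  rw [sub_sub_cancel, mul_sub, mul_smul_comm, mul_one, sub_mul, smul_mul_assoc, this, smul_zero,
    zero_sub]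

theorem offDiag'_mul_nextOcc (h : SeminormalPair l u N D) (hl : l ≠ 0) :
    (1 - N) * D * N * nextOcc l u N D = 0 := by
  have := h.compl.offDiag_mul_nextOcc hl
  rwa [h.nextOcc_compl hl, h.offDiag_compl, mul_sub, mul_one, sub_eq_self, neg_mul, neg_eq_zero]
    at this

end SeminormalPair

theorem eq_diag_add_offDiag {l u : F} {N D : A} (hl : l ≠ 0) :
    D = l • nextOcc l u N D + u • N + N * D * (1 - N) + (1 - N) * D * N := by
  simp only [nextOcc, mul_sub, sub_mul, mul_one, one_mul, smul_add, smul_sub, mul_assoc]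
  match_scalars <;> field_simp <;> ring

end Local

section OffDiagonal

variable {F A : Type*} [Field F] [Ring A] [Algebra F A] {l u : F} {N D Z B G : A}

theorem mul_mul_mul_mul_comm_of_commute {r s G H : A} (hG : Commute r G) (hH : Commute s H) :
    G * (r * B * s) * H = r * (G * B * H) * s := by
  calc G * (r * B * s) * H = G * r * B * (s * H) := by simp only [mul_assoc]
    _ = r * (G * B * H) * s := by rw [← hG.eq, hH.eq]; simp only [mul_assoc]

namespace SeminormalPair

theorem compl_mul_nextOcc_mul_compl (h : SeminormalPair l u N D) (hl : l ≠ 0) (hlu : l + u ≠ 0)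
    (hZ : Commute N Z) (hDZ : D * Z * ((l + u) • 1 - D) = 0) :
    (1 - N) * (nextOcc l u N D * Z * (1 - nextOcc l u N D)) = 0 := by
  have hMZ : Z * (1 - N) = (1 - N) * Z := ((Commute.one_right Z).sub_right hZ.symm).eq
  have hempty : ((l + u) • 1 - D) * ((1 - N) * (1 - nextOcc l u N D)) =
      (l + u) • ((1 - N) * (1 - nextOcc l u N D)) := by
    rw [sub_mul, h.mul_compl_nextOcc hl, sub_zero, smul_mul_assoc, one_mul]
  have hscaled : (l + u) • l • ((1 - N) * (nextOcc l u N D * Z * (1 - nextOcc l u N D))) = 0 :=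
    calc (l + u) • l • ((1 - N) * (nextOcc l u N D * Z * (1 - nextOcc l u N D)))
        = (l + u) • ((1 - N) * D * (1 - N) * Z * (1 - nextOcc l u N D)) := by
          rw [h.diag_zero hl]; simp only [mul_assoc, smul_mul_assoc]
      _ = (1 - N) * D * Z * (l + u) • ((1 - N) * (1 - nextOcc l u N D)) := by
          rw [mul_assoc _ (1 - N) Z, ← hMZ]; simp only [mul_assoc, mul_smul_comm]
      _ = (1 - N) * (D * Z * ((l + u) • 1 - D)) * ((1 - N) * (1 - nextOcc l u N D)) := by
          rw [← hempty]; simp only [mul_assoc]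
      _ = 0 := by rw [hDZ, mul_zero, zero_mul]
  exact (smul_eq_zero_iff_right hl).mp ((smul_eq_zero_iff_right hlu).mp hscaled)

theorem mul_nextOcc_mul_compl (h : SeminormalPair l u N D) (hl : l ≠ 0) (hlu : l + u ≠ 0)
    (hZ : Commute N Z) (hDZ : D * Z * ((l + u) • 1 - D) = 0) :
    N * (nextOcc l u N D * Z * (1 - nextOcc l u N D)) = 0 := by
  have hdiag : N * ((l + u) • 1 - D) * N = l • (N * (1 - nextOcc l u N D)) := by
    simpa only [h.nextOcc_compl hl, sub_sub_cancel] using h.compl.diag_zero hl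
  have habsorb : N * nextOcc l u N D * D * N = N * nextOcc l u N D * D := by
    rw [h.nextOcc_mul_mul hl, smul_mul_assoc, h.commute_nextOcc.eq, mul_assoc, h.idem]
  have hscaled : l • (l + u) • (N * (nextOcc l u N D * Z * (1 - nextOcc l u N D))) = 0 :=
    calc l • (l + u) • (N * (nextOcc l u N D * Z * (1 - nextOcc l u N D)))
        = l • (N * nextOcc l u N D * D * N * Z * (1 - nextOcc l u N D)) := by
          rw [habsorb, h.nextOcc_mul_mul hl]; simp only [mul_assoc, smul_mul_assoc]
      _ = N * nextOcc l u N D * D * Z * l • (N * (1 - nextOcc l u N D)) := by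
          rw [mul_assoc _ N Z, hZ.eq]; simp only [mul_assoc, mul_smul_comm]
      _ = N * nextOcc l u N D * D * N * Z * ((l + u) • 1 - D) * N := by
          rw [← hdiag, mul_assoc _ N Z, hZ.eq]; simp only [mul_assoc]
      _ = N * nextOcc l u N D * (D * Z * ((l + u) • 1 - D)) * N := by
          rw [habsorb]; simp only [mul_assoc]
      _ = 0 := by rw [hDZ, mul_zero, zero_mul]
  exact (smul_eq_zero_iff_right hlu).mp ((smul_eq_zero_iff_right hl).mp hscaled)

theorem nextOcc_mul_compl_eq_zero (h : SeminormalPair l u N D) (hl : l ≠ 0) (hlu : l + u ≠ 0)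
    (hZ : Commute N Z) (hDZ : D * Z * ((l + u) • 1 - D) = 0) :
    nextOcc l u N D * Z * (1 - nextOcc l u N D) = 0 := by
  have := congrArg₂ (· + ·) (h.mul_nextOcc_mul_compl hl hlu hZ hDZ)
    (h.compl_mul_nextOcc_mul_compl hl hlu hZ hDZ)
  simpa only [← add_mul, add_sub_cancel, one_mul, add_zero] using this

theorem compl_nextOcc_mul_eq_zero (h : SeminormalPair l u N D) (hl : l ≠ 0) (hlu : l + u ≠ 0)
    (hZ : Commute N Z) (hDZ : ((l + u) • 1 - D) * Z * D = 0) :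
    (1 - nextOcc l u N D) * Z * nextOcc l u N D = 0 := by
  simpa only [h.nextOcc_compl hl, sub_sub_cancel] using
    h.compl.nextOcc_mul_compl_eq_zero hl hlu ((Commute.one_left Z).sub_left hZ)
      (by rwa [sub_sub_cancel])

theorem offDiag_nextOcc (h : SeminormalPair l u N D) (hl : l ≠ 0) (hlu : l + u ≠ 0)
    (hNB : Commute N B) (hNG : Commute N G) (hDG : Commute D G)
    (hquintic : D * G * B * ((l + u) • 1 - D) * ((l + u) • 1 - G) = 0) :
    G * (nextOcc l u N D * B * (1 - nextOcc l u N D)) * ((l + u) • 1 - G) = 0 := by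
  have hscalar (x : A) : Commute x ((l + u) • 1) := (Commute.one_right x).smul_right (l + u)
  have hNG' : Commute N ((l + u) • 1 - G) := (hscalar N).sub_right hNG
  have hDG' : Commute ((l + u) • 1 - D) ((l + u) • 1 - G) :=
    (hscalar _).sub_right ((hscalar G).symm.sub_left hDG)
  have hpG : Commute (nextOcc l u N D) G := (commute_nextOcc_of_commute hNG.symm hDG.symm).symm
  rw [mul_mul_mul_mul_comm_of_commute hpG
    ((Commute.one_left _).sub_left ((hscalar _).sub_right hpG))]
  refine h.nextOcc_mul_compl_eq_zero hl hlu ((hNG.mul_right hNB).mul_right hNG') ?_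
  rw [← hquintic, mul_assoc _ ((l + u) • 1 - D), hDG'.eq]
  simp only [mul_assoc]

theorem offDiag'_nextOcc (h : SeminormalPair l u N D) (hl : l ≠ 0) (hlu : l + u ≠ 0)
    (hNB : Commute N B) (hNG : Commute N G) (hDG : Commute D G)
    (hquintic : ((l + u) • 1 - D) * ((l + u) • 1 - G) * B * D * G = 0) :
    ((l + u) • 1 - G) * ((1 - nextOcc l u N D) * B * nextOcc l u N D) * G = 0 := by
  have hscalar (x : A) : Commute x ((l + u) • 1) := (Commute.one_right x).smul_right (l + u)
  have hNG' : Commute N ((l + u) • 1 - G) := (hscalar N).sub_right hNG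
  have hpG : Commute (nextOcc l u N D) G := (commute_nextOcc_of_commute hNG.symm hDG.symm).symm
  rw [mul_mul_mul_mul_comm_of_commute
    ((Commute.one_left _).sub_left ((hscalar _).sub_right hpG)) hpG]
  refine h.compl_nextOcc_mul_eq_zero hl hlu ((hNG'.mul_right hNB).mul_right hNG) ?_
  rw [← hquintic, mul_assoc _ D, hDG.eq]
  simp only [mul_assoc]

end SeminormalPair

end OffDiagonal

section Triple

variable {F A : Type*} [Field F] [Ring A] [Algebra F A]

/-- A seminormal pair `N`, `D` together with the next generator `B`. The last two fields are what
remains of the cubic relations of the super Temperley-Lieb algebra once they are expressed through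
the off-diagonal blocks of `D`. -/
structure SeminormalTriple (l u : F) (N D B : A) : Prop extends SeminormalPair l u N D where
  sq' : B * B = (l + u) • B
  comm : Commute N B
  braid : D * B * D - D = B * D * B - B
  offDiag : B * (N * D * (1 - N)) * ((l + u) • 1 - B) = 0
  offDiag' : ((l + u) • 1 - B) * ((1 - N) * D * N) * B = 0

namespace SeminormalTriple

variable {l u l' u' : F} {N D B : A}

theorem compl (h : SeminormalTriple l u N D B) :
    SeminormalTriple l u (1 - N) ((l + u) • 1 - D) ((l + u) • 1 - B) where
  toSeminormalPair := h.toSeminormalPair.compl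
  sq' := by
    simp only [mul_sub, sub_mul, mul_one, one_mul, smul_mul_assoc, mul_smul_comm, h.sq']
    module
  comm := (Commute.one_left _).sub_left (((Commute.one_right N).smul_right _).sub_right h.comm)
  braid := by
    have hbraid := h.braid
    simp only [mul_sub, sub_mul, mul_one, one_mul, smul_mul_assoc, mul_smul_comm, smul_sub, h.sq,
      h.sq']
    linear_combination (norm := module) -hbraid
  offDiag := by
    rw [h.offDiag_compl, sub_sub_cancel, mul_neg, neg_mul, h.offDiag', neg_zero]
  offDiag' := by
    have : N * ((l + u) • 1 - D) * (1 - N) = -(N * D * (1 - N)) := by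
      simp only [mul_sub, sub_mul, mul_one, mul_smul_comm, smul_mul_assoc, h.idem]
      module
    rw [sub_sub_cancel, sub_sub_cancel, this, mul_neg, neg_mul, h.offDiag, neg_zero]

theorem smul_mul_offDiag (h : SeminormalTriple l u N D B) (hl : l ≠ 0) :
    (l + u) • (B * (N * D * (1 - N))) =
      l • (N * D * (1 - N) * B * nextOcc l u N D) +
        (l • nextOcc l u N D + u • 1) * (B * (N * D * (1 - N))) - N * D * (1 - N) := by
  have hBN : B * N = N * B := h.comm.eq.symm
  have hBN_assoc (x : A) : B * (N * x) = N * (B * x) := by rw [← mul_assoc, hBN, mul_assoc]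
  have hright : N * D * (1 - N) * B * (1 - N) = N * D * (1 - N) * B := by
    simp only [mul_sub, sub_mul, mul_one, mul_assoc, h.idem_assoc, hBN]
    abel
  have hleft : N * (B * (N * D * (1 - N))) = B * (N * D * (1 - N)) := by
    simp only [mul_assoc, hBN_assoc, h.idem_assoc]
  have hblocks : (l + u) • (B * (N * D * (1 - N))) =
      N * D * (1 - N) * B * ((1 - N) * D * (1 - N)) + N * D * N * (B * (N * D * (1 - N))) -
        N * D * (1 - N) := by
    have hbraid := congrArg (fun z => N * z * (1 - N)) h.braid
    have hoff := h.offDiag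
    simp only [mul_sub, sub_mul, mul_one, one_mul, mul_smul_comm, smul_sub, mul_assoc,
      h.idem_assoc, hBN, hBN_assoc, sub_self] at hbraid hoff ⊢
    linear_combination (norm := module) hoff - hbraid
  rw [hblocks, h.diag_zero hl, h.diag_one hl, mul_smul_comm, ← mul_assoc _ (1 - N), hright,
    h.commute_nextOcc.eq, add_mul, add_mul, smul_mul_assoc l (_ * N), mul_assoc _ N,
    smul_mul_assoc u N, smul_mul_assoc u 1, hleft, one_mul, smul_mul_assoc l (nextOcc l u N D)]

theorem offDiag_mul_mul_offDiag (h : SeminormalTriple l u N D B) (hl : l ≠ 0) :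
    (1 - N) * D * N * B * (N * D * (1 - N)) =
      (1 - N) * ((l * u) • (nextOcc l u N D * B * nextOcc l u N D) - u • nextOcc l u N D) := by
  have hmul := congrArg ((1 - N) * D * N * ·) (h.smul_mul_offDiag hl)
  have hYp := h.offDiag'_mul_nextOcc hl
  have hYX := h.offDiag_mul_offDiag hl
  generalize N * D * (1 - N) = X at *
  generalize (1 - N) * D * N = Y at *
  generalize nextOcc l u N D = p at *
  simp only [mul_sub, mul_add, add_mul, mul_smul_comm, smul_mul_assoc, one_mul, ← mul_assoc, hYp,
    hYX, zero_mul, smul_zero, zero_add] at hmul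
  have hcancel : l • (Y * B * X) = l • ((1 - N) * ((l * u) • (p * B * p) - u • p)) := by
    rw [mul_sub, mul_smul_comm, mul_smul_comm]
    simp only [mul_assoc] at hmul ⊢
    linear_combination (norm := module) hmul
  exact smul_right_injective A hl hcancel

theorem nextOcc_rel_zero (h : SeminormalTriple l u N D B) (hl : l ≠ 0) :
    (1 - N) * (B * nextOcc l u N D * B - l⁻¹ • B -
      (l + u) • (nextOcc l u N D * B * nextOcc l u N D - l⁻¹ • nextOcc l u N D)) = 0 := by
  have hM : (1 - N) * (1 - N) = 1 - N := h.compl.idem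
  have hBM : B * (1 - N) = (1 - N) * B := ((Commute.one_right B).sub_right h.comm.symm).eq
  have hpM : nextOcc l u N D * (1 - N) = (1 - N) * nextOcc l u N D :=
    ((Commute.one_right _).sub_right h.commute_nextOcc.symm).eq
  have hBN : B * N = N * B := h.comm.eq.symm
  have hBN_assoc (x : A) : B * (N * x) = N * (B * x) := by rw [← mul_assoc, hBN, mul_assoc]
  have hleft : (1 - N) * (D * B * D - D) * (1 - N) =
      (1 - N) * D * (1 - N) * B * ((1 - N) * D * (1 - N)) +
        (1 - N) * D * N * B * (N * D * (1 - N)) - (1 - N) * D * (1 - N) := by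
    simp only [mul_sub, sub_mul, mul_one, one_mul, mul_assoc, h.idem_assoc, hBN_assoc]
    abel
  have hright : (1 - N) * (B * D * B - B) * (1 - N) =
      B * ((1 - N) * D * (1 - N)) * B - (1 - N) * B := by
    simp only [mul_sub, sub_mul, mul_one, one_mul, mul_assoc, h.idem_assoc, hBN, hBN_assoc]
    abel
  have hbraid := hleft.symm.trans ((congrArg (fun z => (1 - N) * z * (1 - N)) h.braid).trans hright)
  rw [h.offDiag_mul_mul_offDiag hl, h.diag_zero hl] at hbraid
  generalize nextOcc l u N D = p at *
  generalize 1 - N = M at *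
  have hBM' (x : A) : B * (M * x) = M * (B * x) := by rw [← mul_assoc, hBM, mul_assoc]
  have hpM' (x : A) : p * (M * x) = M * (p * x) := by rw [← mul_assoc, hpM, mul_assoc]
  have hM' (x : A) : M * (M * x) = M * x := by rw [← mul_assoc, hM]
  simp only [mul_sub, mul_smul_comm, smul_mul_assoc, smul_sub, mul_assoc, hBM', hpM', hM']
    at hbraid ⊢
  linear_combination (norm := skip) (-l⁻¹) • hbraid
  match_scalars <;> field_simp <;> ring

theorem nextOcc_rel_one (h : SeminormalTriple l u N D B) (hl : l ≠ 0) :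
    N * (B * nextOcc l u N D * B - l⁻¹ • B -
      (l + u) • (nextOcc l u N D * B * nextOcc l u N D - l⁻¹ • nextOcc l u N D)) = 0 := by
  have := h.compl.nextOcc_rel_zero hl
  rw [h.nextOcc_compl hl, sub_sub_cancel] at this
  rw [← neg_eq_zero, ← mul_neg, ← this]
  congr 1
  simp only [mul_sub, sub_mul, mul_one, one_mul, smul_mul_assoc, mul_smul_comm, smul_sub, h.sq',
    h.nextOcc_idem hl]
  module

theorem next (h : SeminormalTriple l u N D B) (hl : l ≠ 0) (hsum : l' + u' = l + u)
    (hu : u' * l = 1) : SeminormalPair l' u' (nextOcc l u N D) B where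
  idem := h.nextOcc_idem hl
  sq := by rw [hsum, h.sq']
  rel := by
    rw [hsum, eq_inv_of_mul_eq_one_left hu, ← sub_eq_zero]
    have := congrArg₂ (· + ·) (h.nextOcc_rel_one hl) (h.nextOcc_rel_zero hl)
    simpa only [← add_mul, add_sub_cancel, one_mul, add_zero] using this

theorem commute_offDiag (h : SeminormalTriple l u N D B) (hl : l ≠ 0) (hu : u' * l = 1) :
    Commute (N * D * (1 - N)) (nextOcc l' u' (nextOcc l u N D) B) := by
  have hXp := h.offDiag_mul_nextOcc hl
  have hpX := h.nextOcc_mul_offDiag hl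
  have hmul := congrArg ((1 - nextOcc l u N D) * ·) (h.smul_mul_offDiag hl)
  have hp := h.nextOcc_idem hl
  rw [commute_iff_eq, eq_inv_of_mul_eq_one_left hu]
  generalize N * D * (1 - N) = X at *
  generalize nextOcc l u N D = p at *
  have hXp_assoc (x : A) : X * (p * x) = X * x := by rw [← mul_assoc, hXp]
  have hpX_assoc (x : A) : p * (X * x) = 0 := by rw [← mul_assoc, hpX, zero_mul]
  have hp_assoc (x : A) : p * (p * x) = p * x := by rw [← mul_assoc, hp]
  simp only [nextOcc, mul_add, add_mul, mul_sub, sub_mul, mul_one, one_mul, smul_mul_assoc,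
    mul_smul_comm, smul_add, smul_sub, mul_assoc, hXp, hXp_assoc, hpX, hpX_assoc, hp_assoc,
    mul_zero, smul_zero] at hmul ⊢
  linear_combination (norm := skip) (-l'⁻¹ * l⁻¹) • hmul
  match_scalars <;> field_simp <;> ring

theorem commute_offDiag' (h : SeminormalTriple l u N D B) (hl : l ≠ 0) (hsum : l' + u' = l + u)
    (hl' : l' ≠ 0) (hu : u' * l = 1) :
    Commute ((1 - N) * D * N) (nextOcc l' u' (nextOcc l u N D) B) := by
  have := h.compl.commute_offDiag hl (l' := l') hu
  rw [h.offDiag_compl, h.nextOcc_compl hl, ← hsum, (h.next hl hsum hu).nextOcc_compl hl',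
    Commute.neg_left_iff] at this
  simpa only [sub_sub_cancel] using (Commute.one_right _).sub_right this

theorem commute_next_next (h : SeminormalTriple l u N D B) (hl : l ≠ 0) (hsum : l' + u' = l + u)
    (hl' : l' ≠ 0) (hu : u' * l = 1) :
    Commute D (nextOcc l' u' (nextOcc l u N D) B) := by
  have hN : Commute N (nextOcc l' u' (nextOcc l u N D) B) :=
    commute_nextOcc_of_commute h.commute_nextOcc h.comm
  have hp := (h.next hl hsum hu).commute_nextOcc
  nth_rw 1 [eq_diag_add_offDiag (N := N) (D := D) (u := u) hl]
  exact (((hp.smul_left l).add_left (hN.smul_left u)).add_left (h.commute_offDiag hl hu)).add_left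
    (h.commute_offDiag' hl hsum hl' hu)

end SeminormalTriple

end Triple

section Weights

variable {A : Type*} [Ring A]

/-- `x` is a simultaneous eigenvector for left multiplication by `P 0, …, P (m - 1)`, with
eigenvalue `1` at the indices in `S` and `0` at the others. -/
def IsWeight (P : ℕ → A) (m : ℕ) (S : Finset ℕ) (x : A) : Prop :=
  ∀ k < m, P k * x = if k ∈ S then x else 0

/-- The product of the `P k` with `k ∈ S` and the `1 - P k` with `k ∉ S`, for `k < m`: the
projection onto the weight space of weight `S` when the `P k` are commuting idempotents. -/
def weightIdem (P : ℕ → A) : ℕ → Finset ℕ → A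
  | 0, _ => 1
  | m + 1, S => (if m ∈ S then P m else 1 - P m) * weightIdem P m S

variable {P : ℕ → A} {m : ℕ} {S T : Finset ℕ} {x : A}

theorem IsWeight.mul_right (hx : IsWeight P m S x) (y : A) : IsWeight P m S (x * y) := by
  intro k hk
  rw [← mul_assoc, hx k hk, ite_mul, zero_mul]

theorem IsWeight.mono {m' : ℕ} (hx : IsWeight P m S x) (hm : m' ≤ m) : IsWeight P m' S x :=
  fun k hk => hx k (hk.trans_le hm)

theorem IsWeight.weightIdem_mul (hx : IsWeight P m T x) (S : Finset ℕ) :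
    weightIdem P m S * x = if ∀ k < m, k ∈ S ↔ k ∈ T then x else 0 := by
  induction m with
  | zero => simp [weightIdem]
  | succ m ih =>
    have hm := hx m m.lt_succ_self
    rw [weightIdem, mul_assoc, ih (hx.mono m.le_succ)]
    simp only [Nat.forall_lt_succ_right]
    by_cases hST : ∀ k < m, k ∈ S ↔ k ∈ T
    · by_cases hS : m ∈ S <;> by_cases hT : m ∈ T <;> simp [hS, hT, hm, sub_mul]
    · simp only [hST, false_and, if_false, mul_zero]

theorem IsWeight.weightIdem_mul_of_subset (hx : IsWeight P m T x) (hS : S ⊆ Finset.range m)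
    (hT : T ⊆ Finset.range m) : weightIdem P m S * x = if S = T then x else 0 := by
  rw [hx.weightIdem_mul S]
  congr 1
  refine propext ⟨fun h => Finset.ext fun k => ?_, fun h k _ => by rw [h]⟩
  by_cases hk : k < m
  · exact h k hk
  · exact iff_of_false (fun h => hk (Finset.mem_range.mp (hS h)))
      fun h => hk (Finset.mem_range.mp (hT h))

theorem IsWeight.weightIdem_mul_self (hx : IsWeight P m S x) : weightIdem P m S * x = x := by
  rw [hx.weightIdem_mul, if_pos fun _ _ => Iff.rfl]

theorem weightIdem_insert_of_le {j : ℕ} (hj : m ≤ j) :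
    weightIdem P m (insert j S) = weightIdem P m S := by
  induction m with
  | zero => rfl
  | succ m ih =>
    simp only [weightIdem, ih (Nat.le_of_succ_le hj), Finset.mem_insert,
      (Nat.lt_of_succ_le hj).ne, false_or]

theorem sum_weightIdem (P : ℕ → A) (m : ℕ) :
    ∑ S ∈ (Finset.range m).powerset, weightIdem P m S = 1 := by
  induction m with
  | zero => simp only [Finset.range_zero, Finset.powerset_empty, Finset.sum_singleton, weightIdem]
  | succ m ih =>
    rw [Finset.range_add_one, Finset.sum_powerset_insert Finset.notMem_range_self,
      ← Finset.sum_add_distrib, ← ih]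
    refine Finset.sum_congr rfl fun S hS => ?_
    have hm : m ∉ S := fun h => Finset.notMem_range_self (Finset.mem_powerset.mp hS h)
    rw [weightIdem, weightIdem, weightIdem_insert_of_le le_rfl, if_neg hm,
      if_pos (Finset.mem_insert_self m S), ← add_mul, sub_add_cancel, one_mul]

theorem isWeight_weightIdem (hidem : ∀ k < m, P k * P k = P k)
    (hcomm : ∀ i < m, ∀ j < m, Commute (P i) (P j)) (S : Finset ℕ) :
    IsWeight P m S (weightIdem P m S) := by
  induction m with
  | zero => exact fun k hk => absurd hk k.not_lt_zero
  | succ m ih =>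
    intro k hk
    have hm := m.lt_succ_self
    rcases Nat.lt_succ_iff_lt_or_eq.mp hk with hkm | rfl
    · have hk' := ih (fun i hi => hidem i (hi.trans hm))
        (fun i hi j hj => hcomm i (hi.trans hm) j (hj.trans hm)) k hkm
      have hPm : Commute (P k) (if m ∈ S then P m else 1 - P m) := by
        split_ifs
        · exact hcomm k hk m hm
        · exact (Commute.one_right _).sub_right (hcomm k hk m hm)
      rw [weightIdem, ← mul_assoc, hPm.eq, mul_assoc, hk', mul_ite, mul_zero]
    · rw [weightIdem, ← mul_assoc]
      split_ifs
      · rw [hidem k hm]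
      · rw [mul_sub, mul_one, hidem k hm, sub_self, zero_mul]

end Weights

section Occupation

variable {F A : Type*} [Field F] [Ring A] [Algebra F A]

/-- The relations of the super Temperley-Lieb algebra with loop parameter `δ`, for the elements
`C 0, …, C (m - 1)`. -/
structure STLRelations (δ : F) (m : ℕ) (C : ℕ → A) : Prop where
  sq : ∀ k < m, C k * C k = δ • C k
  comm : ∀ i j, i + 1 < j → j < m → Commute (C i) (C j)
  braid : ∀ k, k + 1 < m → C k * C (k + 1) * C k - C k = C (k + 1) * C k * C (k + 1) - C (k + 1)
  quintic : ∀ k, k + 2 < m →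
    C k * C (k + 2) * C (k + 1) * (δ • 1 - C k) * (δ • 1 - C (k + 2)) = 0
  quintic' : ∀ k, k + 2 < m →
    (δ • 1 - C k) * (δ • 1 - C (k + 2)) * C (k + 1) * C k * C (k + 2) = 0

/-- The coefficients of the seminormal form for the loop parameter `δ`: on the span of two weight
vectors that differ by exchanging two neighbouring occupation numbers, `C k` has the diagonal
entries `l k` and `u k`. -/
structure SeminormalCoeffs (δ : F) (l u : ℕ → F) : Prop where
  add : ∀ k, l k + u k = δ
  zero : u 0 = 0
  succ_mul : ∀ k, u (k + 1) * l k = 1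
  loop_ne_zero : δ ≠ 0

/-- The occupation idempotents of a family `C` of generators, obtained by iterating `nextOcc`. They
play the role of the Jucys-Murphy elements. -/
def occ (l u : ℕ → F) (C : ℕ → A) : ℕ → A
  | 0 => 0
  | k + 1 => nextOcc (l k) (u k) (occ l u C k) (C k)

variable {δ : F} {l u : ℕ → F} {m : ℕ} {C : ℕ → A}

theorem SeminormalCoeffs.l_ne_zero (h : SeminormalCoeffs δ l u) (k : ℕ) : l k ≠ 0 :=
  right_ne_zero_of_mul_eq_one (h.succ_mul k)

theorem SeminormalCoeffs.u_succ_ne_zero (h : SeminormalCoeffs δ l u) (k : ℕ) : u (k + 1) ≠ 0 :=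
  left_ne_zero_of_mul_eq_one (h.succ_mul k)

theorem SeminormalCoeffs.smul_zero_eq (h : SeminormalCoeffs δ l u) : l 0 • occ l u C 1 = C 0 := by
  simp only [occ, nextOcc, sub_zero, one_mul, mul_one, zero_mul, mul_zero, smul_zero, add_zero,
    smul_inv_smul₀ (h.l_ne_zero 0)]

namespace STLRelations

theorem seminormalPair_zero (hC : STLRelations δ m C) (hlu : SeminormalCoeffs δ l u) (hm : 0 < m) :
    SeminormalPair (l 0) (u 0) (occ l u C 0) (C 0) where
  idem := zero_mul _
  sq := by rw [hlu.add, hC.sq 0 hm]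
  rel := by simp only [occ, hlu.zero, mul_zero, zero_mul, zero_smul, sub_self, smul_zero]

theorem pair_and_triple (hC : STLRelations δ m C) (hlu : SeminormalCoeffs δ l u) :
    ∀ k < m, SeminormalPair (l k) (u k) (occ l u C k) (C k) ∧
      (∀ j, k < j → j < m → Commute (occ l u C k) (C j)) ∧
      (k + 1 < m → SeminormalTriple (l k) (u k) (occ l u C k) (C k) (C (k + 1)))
  | 0, hm => by
    refine ⟨hC.seminormalPair_zero hlu hm, fun j _ _ => Commute.zero_left _, fun h => ?_⟩
    exact
      { hC.seminormalPair_zero hlu hm with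
        sq' := by rw [hlu.add, hC.sq 1 h]
        comm := Commute.zero_left _
        braid := hC.braid 0 h
        offDiag := by simp only [occ, zero_mul, mul_zero]
        offDiag' := by simp only [occ, zero_mul, mul_zero] }
  | k + 1, hk => by
    obtain ⟨hpair, hcomm, htriple⟩ := pair_and_triple hC hlu k (by omega)
    have hnext := (htriple hk).next (hlu.l_ne_zero k) ((hlu.add _).trans (hlu.add k).symm)
      (hlu.succ_mul k)
    have hcomm' (j : ℕ) (hj : k + 1 < j) (hjm : j < m) : Commute (occ l u C (k + 1)) (C j) :=
      (commute_nextOcc_of_commute (hcomm j (by omega) hjm).symm (hC.comm k j hj hjm).symm).symm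
    refine ⟨hnext, hcomm', fun h => ?_⟩
    have hl := hlu.l_ne_zero k
    have hδ : l k + u k ≠ 0 := hlu.add k ▸ hlu.loop_ne_zero
    have hsum : l (k + 1) + u (k + 1) = l k + u k := (hlu.add _).trans (hlu.add k).symm
    have hB := hcomm (k + 1) (by omega) hk
    have hG := hcomm (k + 2) (by omega) h
    have hDG := hC.comm k (k + 2) (by omega) h
    exact
      { hnext with
        sq' := by rw [hlu.add, hC.sq (k + 2) h]
        comm := hcomm' (k + 2) (by omega) h
        braid := hC.braid (k + 1) h
        offDiag := by
          rw [hsum]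
          exact hpair.offDiag_nextOcc hl hδ hB hG hDG (by rw [hlu.add, hC.quintic k h])
        offDiag' := by
          rw [hsum]
          exact hpair.offDiag'_nextOcc hl hδ hB hG hDG (by rw [hlu.add, hC.quintic' k h]) }

theorem pair (hC : STLRelations δ m C) (hlu : SeminormalCoeffs δ l u) {k : ℕ} (hk : k < m) :
    SeminormalPair (l k) (u k) (occ l u C k) (C k) :=
  (hC.pair_and_triple hlu k hk).1

theorem triple (hC : STLRelations δ m C) (hlu : SeminormalCoeffs δ l u) {k : ℕ} (hk : k + 1 < m) :
    SeminormalTriple (l k) (u k) (occ l u C k) (C k) (C (k + 1)) :=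
  (hC.pair_and_triple hlu k (by omega)).2.2 hk

theorem commute_occ_of_lt (hC : STLRelations δ m C) (hlu : SeminormalCoeffs δ l u) {k j : ℕ}
    (hkj : k < j) (hj : j < m) : Commute (occ l u C k) (C j) :=
  (hC.pair_and_triple hlu k (by omega)).2.1 j hkj hj

theorem commute_occ_of_succ_lt (hC : STLRelations δ m C) (hlu : SeminormalCoeffs δ l u) {i j : ℕ}
    (hij : i + 1 < j) (hj : j ≤ m) : Commute (C i) (occ l u C j) := by
  induction j, hij using Nat.le_induction with
  | base =>
    exact (hC.triple hlu hj).commute_next_next (hlu.l_ne_zero i)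
      ((hlu.add _).trans (hlu.add i).symm) (hlu.l_ne_zero _) (hlu.succ_mul i)
  | succ j hij ih => exact commute_nextOcc_of_commute (ih (by omega)) (hC.comm i j hij hj)

theorem occ_mul_self (hC : STLRelations δ m C) (hlu : SeminormalCoeffs δ l u) {k : ℕ}
    (hk : k ≤ m) : occ l u C k * occ l u C k = occ l u C k := by
  cases k with
  | zero => exact zero_mul _
  | succ k => exact (hC.pair hlu hk).nextOcc_idem (hlu.l_ne_zero k)

theorem commute_occ_occ_of_le (hC : STLRelations δ m C) (hlu : SeminormalCoeffs δ l u) {i j : ℕ}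
    (hij : i ≤ j) (hj : j ≤ m) : Commute (occ l u C i) (occ l u C j) := by
  induction i with
  | zero => exact Commute.zero_left _
  | succ i ih =>
    rcases hij.eq_or_lt with rfl | hlt
    · exact Commute.refl _
    · exact (commute_nextOcc_of_commute (ih (by omega)).symm
        (hC.commute_occ_of_succ_lt hlu hlt hj).symm).symm

theorem commute_occ_occ (hC : STLRelations δ m C) (hlu : SeminormalCoeffs δ l u) {i j : ℕ}
    (hi : i ≤ m) (hj : j ≤ m) : Commute (occ l u C i) (occ l u C j) :=
  (le_total i j).elim (fun h => hC.commute_occ_occ_of_le hlu h hj)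
    fun h => (hC.commute_occ_occ_of_le hlu h hi).symm

theorem commute_occ_of_ne (hC : STLRelations δ m C) (hlu : SeminormalCoeffs δ l u) {i j : ℕ}
    (hi : i ≤ m) (hj : j < m) (hij : i ≠ j) (hij' : i ≠ j + 1) : Commute (C j) (occ l u C i) := by
  rcases lt_or_gt_of_ne hij with h | h
  · exact (hC.commute_occ_of_lt hlu h hj).symm
  · exact hC.commute_occ_of_succ_lt hlu (by omega) hi

end STLRelations

end Occupation

section Descent

/-- Exchange of the occupation numbers of `j` and `j + 1` in a weight. -/
def swapAt (j : ℕ) (S : Finset ℕ) : Finset ℕ :=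
  S.map (Equiv.swap j (j + 1)).toEmbedding

/-- The occupation numbers of `j` and `j + 1` are out of order. The sets without descents are the
initial segments. -/
def IsDescent (S : Finset ℕ) (j : ℕ) : Prop :=
  j ∉ S ∧ j + 1 ∈ S

variable {S : Finset ℕ} {i j k m : ℕ}

theorem mem_swapAt : k ∈ swapAt j S ↔ Equiv.swap j (j + 1) k ∈ S := by
  rw [swapAt, Finset.mem_map_equiv, Equiv.symm_swap]

theorem mem_swapAt_of_ne (hj : k ≠ j) (hj' : k ≠ j + 1) : k ∈ swapAt j S ↔ k ∈ S := by
  rw [mem_swapAt, Equiv.swap_apply_of_ne_of_ne hj hj']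

theorem self_mem_swapAt : j ∈ swapAt j S ↔ j + 1 ∈ S := by
  rw [mem_swapAt, Equiv.swap_apply_left]

theorem succ_mem_swapAt : j + 1 ∈ swapAt j S ↔ j ∈ S := by
  rw [mem_swapAt, Equiv.swap_apply_right]

theorem card_swapAt (j : ℕ) (S : Finset ℕ) : (swapAt j S).card = S.card :=
  Finset.card_map _

theorem swapAt_swapAt (j : ℕ) (S : Finset ℕ) : swapAt j (swapAt j S) = S := by
  ext k
  rw [mem_swapAt, mem_swapAt, Equiv.swap_apply_self]

theorem swapAt_comm (h : i + 1 < j) (S : Finset ℕ) :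
    swapAt i (swapAt j S) = swapAt j (swapAt i S) := by
  ext k
  simp only [mem_swapAt, Equiv.swap_apply_def]
  congr! 1
  split_ifs <;> omega

theorem swapAt_subset_range (hj : j + 1 < m) (hS : S ⊆ Finset.range m) :
    swapAt j S ⊆ Finset.range m := by
  intro k hk
  rw [Finset.mem_range]
  by_contra! hkm
  rw [mem_swapAt_of_ne (by omega) (by omega)] at hk
  exact hkm.not_gt (Finset.mem_range.mp (hS hk))

theorem IsDescent.succ_lt (h : IsDescent S j) (hS : S ⊆ Finset.range m) : j + 1 < m :=
  Finset.mem_range.mp (hS h.2)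

theorem IsDescent.swapAt_of_lt (hi : IsDescent S i) (h : i + 1 < j) : IsDescent (swapAt j S) i := by
  rwa [IsDescent, mem_swapAt_of_ne (by omega) (by omega), mem_swapAt_of_ne (by omega) (by omega)]

theorem IsDescent.swapAt_of_gt (hj : IsDescent S j) (h : i + 1 < j) : IsDescent (swapAt i S) j := by
  rwa [IsDescent, mem_swapAt_of_ne (by omega) (by omega), mem_swapAt_of_ne (by omega) (by omega)]

theorem IsDescent.lt_or_gt (hi : IsDescent S i) (hj : IsDescent S j) (hne : i ≠ j) :
    i + 1 < j ∨ j + 1 < i := by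
  have h₁ : j ≠ i + 1 := fun h => hj.1 (h ▸ hi.2)
  have h₂ : i ≠ j + 1 := fun h => hi.1 (h ▸ hj.2)
  omega

theorem IsDescent.sum_swapAt_lt (h : IsDescent S j) : ∑ k ∈ swapAt j S, k < ∑ k ∈ S, k := by
  rw [swapAt, Finset.sum_map]
  refine Finset.sum_lt_sum (fun k hk => ?_) ⟨j + 1, h.2, ?_⟩
  · have hkj : k ≠ j := fun hkj => h.1 (hkj ▸ hk)
    rw [Equiv.coe_toEmbedding, Equiv.swap_apply_def, if_neg hkj]
    split_ifs <;> omega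
  · rw [Equiv.coe_toEmbedding, Equiv.swap_apply_right]
    omega

theorem not_isDescent_range (r j : ℕ) : ¬IsDescent (Finset.range r) j := by
  rintro ⟨h, h'⟩
  exact h (Finset.mem_range.mpr (j.lt_succ_self.trans (Finset.mem_range.mp h')))

theorem eq_range_card (h : ∀ j, ¬IsDescent S j) : S = Finset.range S.card := by
  have hdown : ∀ i j, i ≤ j → j ∈ S → i ∈ S := fun i j hij hj =>
    Nat.decreasingInduction (motive := fun k _ => k ∈ S)
      (fun k _ hk => by_contra fun hk' => h k ⟨hk', hk⟩) hj hij
  refine Finset.eq_of_subset_of_card_le (fun j hj => ?_) (Finset.card_range _).le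
  rw [Finset.mem_range, ← Nat.add_one_le_iff, ← Finset.card_range (j + 1)]
  exact Finset.card_le_card fun i hi => hdown i j (Finset.mem_range_succ_iff.mp hi) hj

theorem descent_induction {p : Finset ℕ → Prop} (range : ∀ r, p (Finset.range r))
    (swap : ∀ S j, IsDescent S j → p (swapAt j S) → p S) (S : Finset ℕ) : p S := by
  by_cases h : ∃ j, IsDescent S j
  · obtain ⟨j, hj⟩ := h
    have := hj.sum_swapAt_lt
    exact swap S j hj (descent_induction range swap (swapAt j S))
  · rw [eq_range_card (not_exists.mp h)]
    exact range _
termination_by ∑ k ∈ S, k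

end Descent

section Word

variable {F A : Type*} [Field F] [Ring A] [Algebra F A]

/-- The product of the intertwiners `C (j + 1) - u (j + 1)` along a sequence of descents leading
from `S` to an initial segment. It carries the weight space of that segment onto the weight space
of `S`. -/
def word (u : ℕ → F) (C : ℕ → A) (S : Finset ℕ) : A :=
  if h : ∃ j, IsDescent S j then
    have := h.choose_spec.sum_swapAt_lt
    (C (h.choose + 1) - u (h.choose + 1) • 1) * word u C (swapAt h.choose S)
  else 1
termination_by ∑ k ∈ S, k

variable {δ : F} {l u : ℕ → F} {m : ℕ} {C : ℕ → A} {S : Finset ℕ} {i j : ℕ}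

theorem word_range (u : ℕ → F) (C : ℕ → A) (r : ℕ) : word u C (Finset.range r) = 1 := by
  rw [word, dif_neg (not_exists.mpr (not_isDescent_range r))]

theorem word_choose (u : ℕ → F) (C : ℕ → A) (h : ∃ j, IsDescent S j) :
    word u C S = (C (h.choose + 1) - u (h.choose + 1) • 1) * word u C (swapAt h.choose S) := by
  rw [word, dif_pos h]

namespace STLRelations

theorem commute_sub_smul (hC : STLRelations δ m C) (u : ℕ → F) (h : i + 1 < j) (hj : j < m) :
    Commute (C i - u i • 1) (C j - u j • 1) :=
  ((hC.comm i j h hj).sub_right ((Commute.one_right _).smul_right _)).sub_left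
    ((Commute.one_left _).smul_left _)

theorem word_eq_mul (hC : STLRelations δ m C) (u : ℕ → F) {S : Finset ℕ} {j : ℕ}
    (hS : S ⊆ Finset.range m) (hj : IsDescent S j) :
    word u C S = (C (j + 1) - u (j + 1) • 1) * word u C (swapAt j S) := by
  have h : ∃ j, IsDescent S j := ⟨j, hj⟩
  have hi := h.choose_spec
  rw [word_choose u C h]
  generalize h.choose = i at hi
  rcases eq_or_ne i j with rfl | hne
  · rfl
  have hSi := swapAt_subset_range (hi.succ_lt hS) hS
  have hSj := swapAt_subset_range (hj.succ_lt hS) hS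
  rcases hi.lt_or_gt hj hne with hij | hij
  · rw [hC.word_eq_mul u hSi (hj.swapAt_of_gt hij), hC.word_eq_mul u hSj (hi.swapAt_of_lt hij),
      ← mul_assoc, ← mul_assoc, swapAt_comm hij,
      (hC.commute_sub_smul u (by omega) (hj.succ_lt hS)).eq]
  · rw [hC.word_eq_mul u hSi (hj.swapAt_of_lt hij), hC.word_eq_mul u hSj (hi.swapAt_of_gt hij),
      ← mul_assoc, ← mul_assoc, swapAt_comm hij,
      (hC.commute_sub_smul u (by omega) (hi.succ_lt hS)).eq]
termination_by ∑ k ∈ S, k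
decreasing_by all_goals first | exact hi.sum_swapAt_lt | exact hj.sum_swapAt_lt

end STLRelations

end Word

section SeminormalForm

variable {F A : Type*} [Field F] [Ring A] [Algebra F A]

/-- Weight vectors for the occupation idempotents. The index is shifted because
`occ l u C 0 = 0`. -/
abbrev IsOccWeight (l u : ℕ → F) (C : ℕ → A) (m : ℕ) (S : Finset ℕ) (x : A) : Prop :=
  IsWeight (fun k => occ l u C (k + 1)) m S x

/-- The projections onto the weight spaces of the occupation idempotents. -/
abbrev occIdem (l u : ℕ → F) (C : ℕ → A) (m : ℕ) (S : Finset ℕ) : A :=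
  weightIdem (fun k => occ l u C (k + 1)) m S

variable {δ : F} {l u : ℕ → F} {m : ℕ} {C : ℕ → A} {S T : Finset ℕ} {j k : ℕ} {x : A}

namespace STLRelations

theorem isOccWeight_occIdem (hC : STLRelations δ m C) (hlu : SeminormalCoeffs δ l u)
    (S : Finset ℕ) : IsOccWeight l u C m S (occIdem l u C m S) :=
  isWeight_weightIdem (fun _ hk => hC.occ_mul_self hlu hk)
    (fun _ hi _ hj => hC.commute_occ_occ hlu hi hj) S

theorem mul_of_both (hC : STLRelations δ m C) (hlu : SeminormalCoeffs δ l u)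
    (hx : IsOccWeight l u C m S x) (hj : j + 1 < m) (h : j ∈ S) (h' : j + 1 ∈ S) :
    C (j + 1) * x = δ • x := by
  have hN := hx j (by omega)
  have hp := hx (j + 1) hj
  simp only [if_pos h, if_pos h'] at hN hp
  have := congrArg (· * x) ((hC.pair hlu hj).mul_nextOcc_mul (hlu.l_ne_zero _))
  simp only [hlu.add, smul_mul_assoc, mul_assoc] at this
  simpa only [← occ.eq_2, hN, hp] using this

theorem mul_of_neither (hC : STLRelations δ m C) (hlu : SeminormalCoeffs δ l u)
    (hx : IsOccWeight l u C m S x) (hj : j + 1 < m) (h : j ∉ S) (h' : j + 1 ∉ S) :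
    C (j + 1) * x = 0 := by
  have hN := hx j (by omega)
  have hp := hx (j + 1) hj
  simp only [if_neg h, if_neg h'] at hN hp
  have := congrArg (· * x) ((hC.pair hlu hj).mul_compl_nextOcc (hlu.l_ne_zero _))
  simpa only [← occ.eq_2, mul_assoc, sub_mul, one_mul, mul_sub, hN, hp, mul_zero, sub_zero,
    zero_mul] using this

theorem mul_first (hlu : SeminormalCoeffs δ l u) (hm : 0 < m) (hx : IsOccWeight l u C m S x) :
    C 0 * x = if 0 ∈ S then l 0 • x else 0 := by
  rw [← hlu.smul_zero_eq (C := C), smul_mul_assoc, hx 0 hm, smul_ite, smul_zero]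

theorem isOccWeight_swapAt (hC : STLRelations δ m C) (hlu : SeminormalCoeffs δ l u)
    (hx : IsOccWeight l u C m S x) (hj : j + 1 < m) (h : ¬(j ∈ S ↔ j + 1 ∈ S)) {c : F}
    (hN : occ l u C (j + 1) * ((C (j + 1) - c • 1) * x) =
      if j + 1 ∈ S then (C (j + 1) - c • 1) * x else 0) :
    IsOccWeight l u C m (swapAt j S) ((C (j + 1) - c • 1) * x) := by
  have hscalar (y : A) : Commute y (c • 1) := (Commute.one_right y).smul_right c
  have hsum : (occ l u C (j + 1) + occ l u C (j + 2)) * ((C (j + 1) - c • 1) * x) =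
      (C (j + 1) - c • 1) * x := by
    have hcomm := ((hC.pair hlu hj).commute_add_nextOcc (hlu.l_ne_zero _)).sub_left
      (hscalar _).symm
    rw [← occ.eq_2] at hcomm
    rw [← mul_assoc, ← hcomm.eq, mul_assoc, add_mul, hx j (by omega), hx (j + 1) hj]
    split_ifs with h₁ h₂ h₂
    · exact absurd (iff_of_true h₁ h₂) h
    · rw [add_zero]
    · rw [zero_add]
    · exact absurd (iff_of_false h₁ h₂) h
  intro k hk
  rcases eq_or_ne k j with rfl | hkj
  · simp only [self_mem_swapAt, hN]
  rcases eq_or_ne k (j + 1) with rfl | hkj'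
  · rw [add_mul, hN] at hsum
    simp only [succ_mem_swapAt]
    split_ifs at hsum ⊢ with h₁ h₂ h₂
    · exact absurd (iff_of_true h₁ h₂) h
    · simpa only [zero_add] using hsum
    · simpa only [add_eq_left] using hsum
    · exact absurd (iff_of_false h₁ h₂) h
  · have hcomm := (hC.commute_occ_of_ne hlu (i := k + 1) hk hj (by omega) (by omega)).sub_left
      (hscalar _).symm
    simp only [mem_swapAt_of_ne hkj hkj']
    rw [← mul_assoc, ← hcomm.eq, mul_assoc, hx k hk, mul_ite, mul_zero]

theorem isOccWeight_swapAt_of_ascent (hC : STLRelations δ m C) (hlu : SeminormalCoeffs δ l u)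
    (hx : IsOccWeight l u C m S x) (hj : j + 1 < m) (h : j ∈ S) (h' : j + 1 ∉ S) :
    IsOccWeight l u C m (swapAt j S) ((C (j + 1) - u (j + 1) • 1) * x) := by
  refine hC.isOccWeight_swapAt hlu hx hj (fun hiff => h' (hiff.mp h)) ?_
  have hN := hx j (by omega)
  have hp := hx (j + 1) hj
  simp only [if_pos h, if_neg h'] at hN hp
  have := congrArg (· * x) ((hC.pair hlu hj).diag_one (hlu.l_ne_zero _))
  simp only [← occ.eq_2, mul_assoc, add_mul, smul_mul_assoc, hN, hp, mul_zero, smul_zero,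
    zero_add] at this
  rw [if_neg h', sub_mul, mul_sub, this, smul_mul_assoc, one_mul, mul_smul_comm, hN, sub_self]

theorem isOccWeight_swapAt_of_descent (hC : STLRelations δ m C) (hlu : SeminormalCoeffs δ l u)
    (hx : IsOccWeight l u C m S x) (hj : j + 1 < m) (h : IsDescent S j) :
    IsOccWeight l u C m (swapAt j S) ((C (j + 1) - l (j + 1) • 1) * x) := by
  refine hC.isOccWeight_swapAt hlu hx hj (fun hiff => h.1 (hiff.mpr h.2)) ?_
  have hN := hx j (by omega)
  have hp := hx (j + 1) hj
  simp only [if_neg h.1, if_pos h.2] at hN hp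
  have := congrArg (· * x) ((hC.pair hlu hj).diag_zero (hlu.l_ne_zero _))
  simp only [← occ.eq_2, mul_assoc, sub_mul, one_mul, smul_mul_assoc, hN, hp, sub_zero] at this
  rw [if_pos h.2, sub_mul, mul_sub, smul_mul_assoc, one_mul, mul_smul_comm, hN, smul_zero,
    sub_zero, ← this, sub_sub_cancel]

theorem isOccWeight_word_mul (hC : STLRelations δ m C) (hlu : SeminormalCoeffs δ l u)
    (hS : S ⊆ Finset.range m) (hx : IsOccWeight l u C m (Finset.range S.card) x) :
    IsOccWeight l u C m S (word u C S * x) := by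
  induction S using descent_induction with
  | range r => rwa [word_range, one_mul, ← Finset.card_range r]
  | swap S j hj ih =>
    have hjm := hj.succ_lt hS
    have := hC.isOccWeight_swapAt_of_ascent hlu
      (ih (swapAt_subset_range hjm hS) (by rwa [card_swapAt])) hjm (self_mem_swapAt.mpr hj.2)
      (fun h => hj.1 (succ_mem_swapAt.mp h))
    rwa [swapAt_swapAt, ← mul_assoc, ← hC.word_eq_mul u hS hj] at this

theorem sub_mul_sub (hC : STLRelations δ m C) (hlu : SeminormalCoeffs δ l u) (hk : k < m) :
    (C k - u k • 1) * (C k - l k • 1) = (l k * u k) • 1 := by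
  simp only [mul_sub, sub_mul, mul_one, one_mul, mul_smul_comm, smul_mul_assoc, hC.sq k hk,
    ← hlu.add k]
  module

theorem sub_mul_sub' (hC : STLRelations δ m C) (hlu : SeminormalCoeffs δ l u) (hk : k < m) :
    (C k - l k • 1) * (C k - u k • 1) = (l k * u k) • 1 := by
  rw [← hC.sub_mul_sub hlu hk]
  simp only [mul_sub, sub_mul, mul_one, one_mul, mul_smul_comm, smul_mul_assoc]
  module

theorem isUnit_sub (hC : STLRelations δ m C) (hlu : SeminormalCoeffs δ l u) (hj : j + 1 < m) :
    IsUnit (C (j + 1) - u (j + 1) • 1) := by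
  have hc : l (j + 1) * u (j + 1) ≠ 0 := mul_ne_zero (hlu.l_ne_zero _) (hlu.u_succ_ne_zero j)
  refine ⟨⟨_, (l (j + 1) * u (j + 1))⁻¹ • (C (j + 1) - l (j + 1) • 1), ?_, ?_⟩, rfl⟩
  · rw [mul_smul_comm, hC.sub_mul_sub hlu hj, inv_smul_smul₀ hc]
  · rw [smul_mul_assoc, hC.sub_mul_sub' hlu hj, inv_smul_smul₀ hc]

theorem isUnit_word (hC : STLRelations δ m C) (hlu : SeminormalCoeffs δ l u)
    (hS : S ⊆ Finset.range m) : IsUnit (word u C S) := by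
  induction S using descent_induction with
  | range r => rw [word_range]; exact isUnit_one
  | swap S j hj ih =>
    rw [hC.word_eq_mul u hS hj]
    exact (hC.isUnit_sub hlu (hj.succ_lt hS)).mul (ih (swapAt_subset_range (hj.succ_lt hS) hS))

theorem exists_word_mul_eq (hC : STLRelations δ m C) (hlu : SeminormalCoeffs δ l u)
    (hS : S ⊆ Finset.range m) (hx : IsOccWeight l u C m S x) :
    ∃ y, IsOccWeight l u C m (Finset.range S.card) y ∧ word u C S * y = x := by
  induction S using descent_induction generalizing x with
  | range r => exact ⟨x, by rwa [Finset.card_range], by rw [word_range, one_mul]⟩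
  | swap S j hj ih =>
    have hjm := hj.succ_lt hS
    obtain ⟨y, hy, hxy⟩ := ih (swapAt_subset_range hjm hS)
      (hC.isOccWeight_swapAt_of_descent hlu hx hjm hj)
    rw [card_swapAt] at hy
    have hc : l (j + 1) * u (j + 1) ≠ 0 := mul_ne_zero (hlu.l_ne_zero _) (hlu.u_succ_ne_zero j)
    refine ⟨y * (l (j + 1) * u (j + 1))⁻¹ • 1, hy.mul_right _, ?_⟩
    rw [hC.word_eq_mul u hS hj, ← mul_assoc, mul_assoc _ (word u C _), hxy, ← mul_assoc,
      hC.sub_mul_sub hlu hjm, smul_mul_assoc, one_mul, mul_smul_comm, mul_one, inv_smul_smul₀ hc]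

end STLRelations

end SeminormalForm

section Faithfulness

variable {F A B : Type*} [Field F] [Ring A] [Algebra F A] [Ring B] [Algebra F B]
  {δ : F} {l u : ℕ → F} {m : ℕ} {C : ℕ → A} {S T : Finset ℕ} {r k : ℕ} {x y : A}

/-- The span of the vectors `word u C S * x`, where `S` runs over the weights with `r` occupied
positions. -/
def wordSpan (u : ℕ → F) (C : ℕ → A) (m r : ℕ) (x : A) : Submodule F A :=
  Submodule.span F ((fun S => word u C S * x) '' {S | S ⊆ Finset.range m ∧ S.card = r})

theorem word_mul_mem_wordSpan (x : A) (hS : S ⊆ Finset.range m) (hr : S.card = r) :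
    word u C S * x ∈ wordSpan u C m r x :=
  Submodule.subset_span ⟨S, ⟨hS, hr⟩, rfl⟩

theorem map_occ (ρ : A →ₐ[F] B) {C' : ℕ → B} (h : ∀ k < m, ρ (C k) = C' k) :
    ∀ k ≤ m, ρ (occ l u C k) = occ l u C' k
  | 0, _ => map_zero ρ
  | k + 1, hk => by
    simp only [occ, nextOcc, map_smul, map_sub, map_add, map_mul, map_one,
      map_occ ρ h k (Nat.le_of_succ_le hk), h k hk]

theorem map_weightIdem (ρ : A →ₐ[F] B) {P : ℕ → A} {P' : ℕ → B} (h : ∀ k < m, ρ (P k) = P' k)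
    (S : Finset ℕ) : ρ (weightIdem P m S) = weightIdem P' m S := by
  induction m with
  | zero => exact map_one ρ
  | succ m ih =>
    rw [weightIdem, map_mul, ih fun k hk => h k (hk.trans m.lt_succ_self), apply_ite ρ, map_sub,
      map_one, h m m.lt_succ_self, weightIdem]

theorem map_occIdem (ρ : A →ₐ[F] B) {C' : ℕ → B} (h : ∀ k < m, ρ (C k) = C' k) (S : Finset ℕ) :
    ρ (occIdem l u C m S) = occIdem l u C' m S :=
  map_weightIdem ρ (fun k hk => map_occ ρ h (k + 1) hk) S

namespace STLRelations

theorem mul_word_mul_mem_wordSpan (hC : STLRelations δ m C) (hlu : SeminormalCoeffs δ l u)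
    (hS : S ⊆ Finset.range m) (hr : S.card = r) (hx : IsOccWeight l u C m (Finset.range r) x)
    (hk : k < m) : C k * (word u C S * x) ∈ wordSpan u C m r x := by
  have hmem := word_mul_mem_wordSpan (u := u) (C := C) x hS hr
  have hweight := hC.isOccWeight_word_mul hlu hS (hr ▸ hx)
  cases k with
  | zero =>
    rw [mul_first hlu hk hweight]
    split_ifs
    · exact Submodule.smul_mem _ _ hmem
    · exact Submodule.zero_mem _
  | succ j =>
    have hmem' := word_mul_mem_wordSpan (u := u) (C := C) x (swapAt_subset_range hk hS)
      ((card_swapAt j S).trans hr)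
    by_cases hj : j ∈ S <;> by_cases hj' : j + 1 ∈ S
    · rw [hC.mul_of_both hlu hweight hk hj hj']
      exact Submodule.smul_mem _ _ hmem
    · have hword := hC.word_eq_mul u (swapAt_subset_range hk hS)
        ⟨fun h => hj' (self_mem_swapAt.mp h), succ_mem_swapAt.mpr hj⟩
      rw [swapAt_swapAt, sub_mul, eq_sub_iff_add_eq, smul_mul_assoc, one_mul] at hword
      rw [← mul_assoc, ← hword, add_mul, smul_mul_assoc]
      exact Submodule.add_mem _ hmem' (Submodule.smul_mem _ _ hmem)
    · have hsub := hC.sub_mul_sub' hlu hk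
      rw [sub_mul, smul_mul_assoc, one_mul, sub_eq_iff_eq_add] at hsub
      rw [← mul_assoc, hC.word_eq_mul u hS ⟨hj, hj'⟩, ← mul_assoc, hsub, add_mul, smul_mul_assoc,
        one_mul, smul_mul_assoc, ← hC.word_eq_mul u hS ⟨hj, hj'⟩, add_mul, smul_mul_assoc,
        smul_mul_assoc]
      exact Submodule.add_mem _ (Submodule.smul_mem _ _ hmem') (Submodule.smul_mem _ _ hmem)
    · rw [hC.mul_of_neither hlu hweight hk hj hj']
      exact Submodule.zero_mem _

theorem mul_mem_wordSpan (hC : STLRelations δ m C) (hlu : SeminormalCoeffs δ l u)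
    (hgen : Algebra.adjoin F (C '' Set.Iio m) = ⊤)
    (hx : IsOccWeight l u C m (Finset.range r) x) (a : A) (hy : y ∈ wordSpan u C m r x) :
    a * y ∈ wordSpan u C m r x := by
  have ha : a ∈ Algebra.adjoin F (C '' Set.Iio m) := hgen ▸ Algebra.mem_top
  induction ha using Algebra.adjoin_induction generalizing y with
  | mem a ha =>
    obtain ⟨k, hk, rfl⟩ := ha
    have hle : wordSpan u C m r x ≤ (wordSpan u C m r x).comap (LinearMap.mulLeft F (C k)) := by
      refine Submodule.span_le.mpr ?_
      rintro _ ⟨S, ⟨hS, hr⟩, rfl⟩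
      exact hC.mul_word_mul_mem_wordSpan hlu hS hr hx hk
    exact hle hy
  | algebraMap c => rw [← Algebra.smul_def]; exact Submodule.smul_mem _ c hy
  | add a b _ _ iha ihb => rw [add_mul]; exact Submodule.add_mem _ (iha hy) (ihb hy)
  | mul a b _ _ iha ihb => rw [mul_assoc]; exact iha (ihb hy)

theorem occIdem_mul_word_mul (hC : STLRelations δ m C) (hlu : SeminormalCoeffs δ l u)
    (hS : S ⊆ Finset.range m) (hT : T ⊆ Finset.range m)
    (hx : IsOccWeight l u C m (Finset.range T.card) x) :
    occIdem l u C m S * (word u C T * x) = if S = T then word u C T * x else 0 :=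
  (hC.isOccWeight_word_mul hlu hT hx).weightIdem_mul_of_subset hS hT

theorem exists_occIdem_mul_eq_smul (hC : STLRelations δ m C) (hlu : SeminormalCoeffs δ l u)
    (hS : S ⊆ Finset.range m) (hx : IsOccWeight l u C m (Finset.range r) x)
    (hy : y ∈ wordSpan u C m r x) :
    ∃ c : F, occIdem l u C m S * y = c • (word u C S * x) := by
  induction hy using Submodule.span_induction with
  | mem y hy =>
    obtain ⟨T, ⟨hT, rfl⟩, rfl⟩ := hy
    refine ⟨if S = T then 1 else 0, ?_⟩
    rw [hC.occIdem_mul_word_mul hlu hS hT hx]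
    split_ifs with hST
    · rw [hST, one_smul]
    · rw [zero_smul]
  | zero => exact ⟨0, by rw [mul_zero, zero_smul]⟩
  | add y z _ _ hy hz =>
    obtain ⟨c, hc⟩ := hy
    obtain ⟨d, hd⟩ := hz
    exact ⟨c + d, by rw [mul_add, hc, hd, add_smul]⟩
  | smul a y _ hy =>
    obtain ⟨c, hc⟩ := hy
    exact ⟨a * c, by rw [mul_smul_comm, hc, mul_smul]⟩

/-- Since `a * word u C T * e` lies in the span of the `word u C S * e`, where `e` is the idempotent
of an initial segment, its components are multiples of `word u C S * e`, and `word u C S` is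
invertible. -/
theorem occIdem_mul_mul_occIdem_eq_zero (hC : STLRelations δ m C) (hlu : SeminormalCoeffs δ l u)
    (hgen : Algebra.adjoin F (C '' Set.Iio m) = ⊤) (ρ : A →ₐ[F] B)
    (hρ : ∀ r ≤ m, ρ (occIdem l u C m (Finset.range r)) ≠ 0) {a : A} (ha : ρ a = 0)
    (hS : S ⊆ Finset.range m) (hT : T ⊆ Finset.range m) :
    occIdem l u C m S * (a * occIdem l u C m T) = 0 := by
  set e := occIdem l u C m (Finset.range T.card)
  have he : IsOccWeight l u C m (Finset.range T.card) e := hC.isOccWeight_occIdem hlu _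
  have hTm : T.card ≤ m := (Finset.card_le_card hT).trans (Finset.card_range m).le
  obtain ⟨y, hy, hyT⟩ := hC.exists_word_mul_eq hlu hT (hC.isOccWeight_occIdem hlu T)
  obtain ⟨c, hc⟩ := hC.exists_occIdem_mul_eq_smul hlu hS he
    (hC.mul_mem_wordSpan hlu hgen he a (word_mul_mem_wordSpan e hT rfl))
  have hρc : c • (ρ (word u C S) * ρ e) = 0 := by
    rw [← map_mul, ← map_smul, ← hc, map_mul, map_mul, ha, zero_mul, mul_zero]
  have hc0 : c = 0 := (smul_eq_zero.mp hρc).resolve_right fun h =>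
    hρ _ hTm ((((hC.isUnit_word hlu hS).map ρ).mul_right_eq_zero).mp h)
  rw [← hyT, ← hy.weightIdem_mul_self]
  simp only [← mul_assoc] at hc ⊢
  rw [hc, hc0, zero_smul, zero_mul]

theorem injective_of_map_occIdem_ne_zero (hC : STLRelations δ m C) (hlu : SeminormalCoeffs δ l u)
    (hgen : Algebra.adjoin F (C '' Set.Iio m) = ⊤) (ρ : A →ₐ[F] B)
    (hρ : ∀ r ≤ m, ρ (occIdem l u C m (Finset.range r)) ≠ 0) : Function.Injective ρ := by
  rw [injective_iff_map_eq_zero]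
  intro a ha
  have hsum : ∑ S ∈ (Finset.range m).powerset, occIdem l u C m S = 1 := sum_weightIdem _ m
  rw [← one_mul a, ← mul_one (1 * a), ← hsum, Finset.mul_sum]
  refine Finset.sum_eq_zero fun T hT => ?_
  rw [mul_assoc, Finset.sum_mul]
  exact Finset.sum_eq_zero fun S hS => hC.occIdem_mul_mul_occIdem_eq_zero hlu hgen ρ hρ ha
    (Finset.mem_powerset.mp hS) (Finset.mem_powerset.mp hT)

end STLRelations

end Faithfulness

section OddPair

variable {F M : Type*} [Field F] [AddCommGroup M] [Module F M] {c : F} {e f : Module.End F M}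

theorem range_eq_ker_of_anticommutator (hf : f * f = 0) (hc : c ≠ 0) (hef : e * f + f * e = c • 1) :
    LinearMap.range f = LinearMap.ker f := by
  refine le_antisymm ?_ fun x hx => ?_
  · rintro _ ⟨x, rfl⟩
    exact LinearMap.congr_fun hf x
  · have h := LinearMap.congr_fun hef x
    simp only [LinearMap.add_apply, Module.End.mul_apply, LinearMap.mem_ker.mp hx, map_zero,
      zero_add, LinearMap.smul_apply, Module.End.one_apply] at h
    exact ⟨c⁻¹ • e x, by rw [map_smul, h, inv_smul_smul₀ hc]⟩

theorem finrank_eq_two_mul_finrank_ker [FiniteDimensional F M] (hf : f * f = 0) (hc : c ≠ 0)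
    (hef : e * f + f * e = c • 1) :
    Module.finrank F M = 2 * Module.finrank F (LinearMap.ker f) := by
  rw [← f.finrank_range_add_finrank_ker, range_eq_ker_of_anticommutator hf hc hef, two_mul]

theorem eq_of_eqOn_ker (hf : f * f = 0) (hc : c ≠ 0) (hef : e * f + f * e = c • 1)
    {X Y : Module.End F M} (hX : Commute X e) (hY : Commute Y e)
    (h : Set.EqOn X Y (LinearMap.ker f)) : X = Y := by
  ext x
  have hker (y : M) : f y ∈ LinearMap.ker f := LinearMap.congr_fun hf y
  have hx : c • x = e (f x) + f (e x) := (LinearMap.congr_fun hef x).symm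
  have hXe : X (e (f x)) = e (X (f x)) := LinearMap.congr_fun hX.eq (f x)
  have hYe : Y (e (f x)) = e (Y (f x)) := LinearMap.congr_fun hY.eq (f x)
  refine smul_right_injective M hc ?_
  simp only [← map_smul, hx, map_add, hXe, hYe, h (hker x), h (hker (e x))]

end OddPair

section Commutant

variable {F A M : Type*} [Field F] [Ring A] [Algebra F A] [AddCommGroup M] [Module F M]

/-- Joint eigenvectors `v 0, …, v m` of operators `P 0, …, P (m - 1)`, where `v r` has the weight
`{0, …, r - 1}`. They lie in the kernel of `f` and are told apart by the eigenvalues of `k`. -/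
structure IsPrimitiveFamily (P : ℕ → Module.End F M) (f k : Module.End F M) (κ : F) (m : ℕ)
    (v : ℕ → M) : Prop where
  ne_zero : ∀ r ≤ m, v r ≠ 0
  weight : ∀ r ≤ m, ∀ j < m, P j (v r) = if j < r then v r else 0
  apply_eq_zero : ∀ r ≤ m, f (v r) = 0
  apply_eq_smul : ∀ r ≤ m, k (v r) = κ ^ r • v r

variable {δ c κ : F} {l u : ℕ → F} {m : ℕ} {C : ℕ → A} {C' : ℕ → Module.End F M}
  {S T : Finset ℕ} {e f k X : Module.End F M} {v : ℕ → M} {ρ : A →ₐ[F] Module.End F M}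

theorem weightIdem_apply_self {P : ℕ → Module.End F M} {x : M}
    (h : ∀ j < m, P j x = if j ∈ S then x else 0) : weightIdem P m S x = x := by
  induction m with
  | zero => rfl
  | succ m ih =>
    have hm := h m m.lt_succ_self
    rw [weightIdem, Module.End.mul_apply, ih fun j hj => h j (hj.trans m.lt_succ_self)]
    split_ifs at hm ⊢
    · exact hm
    · rw [LinearMap.sub_apply, hm, Module.End.one_apply, sub_zero]

theorem IsPrimitiveFamily.weightIdem_apply {P : ℕ → Module.End F M}
    (hv : IsPrimitiveFamily P f k κ m v) {r : ℕ} (hr : r ≤ m) :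
    weightIdem P m (Finset.range r) (v r) = v r :=
  weightIdem_apply_self fun j hj => by simp only [hv.weight r hr j hj, Finset.mem_range]

theorem IsPrimitiveFamily.weightIdem_ne_zero {P : ℕ → Module.End F M}
    (hv : IsPrimitiveFamily P f k κ m v) {r : ℕ} (hr : r ≤ m) :
    weightIdem P m (Finset.range r) ≠ 0 := fun h =>
  hv.ne_zero r hr (by rw [← hv.weightIdem_apply hr, h, LinearMap.zero_apply])

theorem linearIndependent_of_apply_eq_ite {ι : Type*} {E : ι → Module.End F M} {x : ι → M}
    (hx : ∀ i, x i ≠ 0) (hE : ∀ i j, E i (x j) = if i = j then x j else 0) :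
    LinearIndependent F x := by
  rw [linearIndependent_iff']
  intro s g hg i hi
  have h := congrArg (E i) hg
  simp only [map_sum, map_smul, hE, smul_ite, smul_zero, Finset.sum_ite_eq, if_pos hi,
    map_zero] at h
  exact (smul_eq_zero.mp h).resolve_right (hx i)

/-- The seminormal basis of `ker f`, obtained from the primitive vectors `v`. -/
def seminormalVec (u : ℕ → F) (C : ℕ → A) (ρ : A →ₐ[F] Module.End F M) (v : ℕ → M)
    (S : Finset ℕ) : M :=
  ρ (word u C S) (v S.card)

theorem card_le_of_subset_range (hS : S ⊆ Finset.range m) : S.card ≤ m :=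
  (Finset.card_le_card hS).trans (Finset.card_range m).le

namespace IsPrimitiveFamily

variable (hv : IsPrimitiveFamily (fun j => occ l u C' (j + 1)) f k κ m v)
include hv

theorem apply_seminormalVec_eq_zero (hf : ∀ a, Commute (ρ a) f) (hS : S ⊆ Finset.range m) :
    f (seminormalVec u C ρ v S) = 0 := by
  rw [seminormalVec, ← Module.End.mul_apply, ← (hf _).eq, Module.End.mul_apply,
    hv.apply_eq_zero _ (card_le_of_subset_range hS), map_zero]

theorem apply_seminormalVec (hk : ∀ a, Commute (ρ a) k) (hS : S ⊆ Finset.range m) :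
    k (seminormalVec u C ρ v S) = κ ^ S.card • seminormalVec u C ρ v S := by
  rw [seminormalVec, ← Module.End.mul_apply, ← (hk _).eq, Module.End.mul_apply,
    hv.apply_eq_smul _ (card_le_of_subset_range hS), map_smul]

variable (hC : STLRelations δ m C) (hlu : SeminormalCoeffs δ l u)
include hC hlu

theorem seminormalVec_ne_zero (hS : S ⊆ Finset.range m) : seminormalVec u C ρ v S ≠ 0 := by
  obtain ⟨w, hw⟩ := (hC.isUnit_word hlu hS).map ρ
  intro h
  refine hv.ne_zero _ (card_le_of_subset_range hS) ?_
  rw [seminormalVec, ← hw] at h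
  rw [← Module.End.one_apply (R := F) (v S.card), ← w.inv_mul, Module.End.mul_apply, h, map_zero]

variable (hρ : ∀ j < m, ρ (C j) = C' j)
include hρ

theorem occIdem_seminormalVec (hS : S ⊆ Finset.range m) (hT : T ⊆ Finset.range m) :
    ρ (occIdem l u C m S) (seminormalVec u C ρ v T) =
      if S = T then seminormalVec u C ρ v T else 0 := by
  have hvec : seminormalVec u C ρ v T =
      ρ (word u C T * occIdem l u C m (Finset.range T.card)) (v T.card) := by
    rw [map_mul, map_occIdem ρ hρ, Module.End.mul_apply,
      hv.weightIdem_apply (card_le_of_subset_range hT), seminormalVec]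
  rw [hvec, ← Module.End.mul_apply, ← map_mul,
    hC.occIdem_mul_word_mul hlu hS hT (hC.isOccWeight_occIdem hlu _)]
  split_ifs
  · rfl
  · rw [map_zero, LinearMap.zero_apply]

theorem linearIndependent_seminormalVec :
    LinearIndependent F fun S : (Finset.range m).powerset => seminormalVec u C ρ v S := by
  refine linearIndependent_of_apply_eq_ite
    (E := fun S : (Finset.range m).powerset => ρ (occIdem l u C m S))
    (fun S => hv.seminormalVec_ne_zero hC hlu (Finset.mem_powerset.mp S.2)) fun S T => ?_
  simp only [hv.occIdem_seminormalVec hC hlu hρ (Finset.mem_powerset.mp S.2)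
    (Finset.mem_powerset.mp T.2), Subtype.ext_iff]

variable (hf : ∀ a, Commute (ρ a) f)
include hf

theorem span_seminormalVec [FiniteDimensional F M]
    (hdim : Module.finrank F (LinearMap.ker f) = 2 ^ m) :
    Submodule.span F (Set.range fun S : (Finset.range m).powerset => seminormalVec u C ρ v S) =
      LinearMap.ker f := by
  refine Submodule.eq_of_le_of_finrank_eq (Submodule.span_le.mpr ?_) ?_
  · rintro _ ⟨S, rfl⟩
    exact hv.apply_seminormalVec_eq_zero hf (Finset.mem_powerset.mp S.2)
  · rw [finrank_span_eq_card (hv.linearIndependent_seminormalVec hC hlu hρ), hdim,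
      Fintype.card_coe, Finset.card_powerset, Finset.card_range]

/-- Expanding `x` in the seminormal basis, the eigenvalues of `k` rule out all the basis vectors
that are not in the orbit of `v r`. -/
theorem exists_apply_eq_of_mem_ker [FiniteDimensional F M] (hκ : Function.Injective (κ ^ · : ℕ → F))
    (hk : ∀ a, Commute (ρ a) k) (hdim : Module.finrank F (LinearMap.ker f) = 2 ^ m) {r : ℕ} {x : M}
    (hx : f x = 0) (hxk : k x = κ ^ r • x) : ∃ a, ρ a (v r) = x := by
  rw [← LinearMap.mem_ker, ← hv.span_seminormalVec hC hlu hρ hf hdim,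
    Submodule.mem_span_range_iff_exists_fun] at hx
  obtain ⟨b, rfl⟩ := hx
  have hzero : ∑ S, (b S * (κ ^ S.1.card - κ ^ r)) • seminormalVec u C ρ v S = 0 := by
    rw [map_sum, ← sub_eq_zero, Finset.smul_sum, ← Finset.sum_sub_distrib] at hxk
    rw [← hxk]
    refine Finset.sum_congr rfl fun S _ => ?_
    rw [map_smul, hv.apply_seminormalVec hk (Finset.mem_powerset.mp S.2)]
    module
  have hb := Fintype.linearIndependent_iff.mp (hv.linearIndependent_seminormalVec hC hlu hρ) _ hzero
  refine ⟨∑ S, b S • word u C S, ?_⟩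
  simp only [map_sum, map_smul, LinearMap.sum_apply, LinearMap.smul_apply]
  refine Finset.sum_congr rfl fun S _ => ?_
  rcases mul_eq_zero.mp (hb S) with h | h
  · rw [h, zero_smul, zero_smul]
  · rw [seminormalVec, hκ (sub_eq_zero.mp h)]

/-- `X` maps the basis vector of weight `S` to an element of the orbit of `v S.card`. Composing with
`word u C S`⁻¹ and the projections `occIdem`, one builds the action of `X` on `ker f` weight by
weight. -/
theorem mem_range_of_commute [FiniteDimensional F M] (hκ : Function.Injective (κ ^ · : ℕ → F))
    (hff : f * f = 0) (hc : c ≠ 0) (hef : e * f + f * e = c • 1) (he : ∀ a, Commute (ρ a) e)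
    (hk : ∀ a, Commute (ρ a) k) (hdim : Module.finrank F M = 2 * 2 ^ m)
    (hXe : Commute X e) (hXf : Commute X f) (hXk : Commute X k) : X ∈ ρ.range := by
  have hker : Module.finrank F (LinearMap.ker f) = 2 ^ m :=
    Nat.eq_of_mul_eq_mul_left two_pos ((finrank_eq_two_mul_finrank_ker hff hc hef).symm.trans hdim)
  have hb (S : (Finset.range m).powerset) :
      ∃ b, ρ (b * word u C S) (v S.1.card) = X (seminormalVec u C ρ v S) := by
    have hS := Finset.mem_powerset.mp S.2
    have hXfS : f (X (seminormalVec u C ρ v S)) = 0 := by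
      rw [← Module.End.mul_apply, ← hXf.eq, Module.End.mul_apply,
        hv.apply_seminormalVec_eq_zero hf hS, map_zero]
    have hXkS : k (X (seminormalVec u C ρ v S)) = κ ^ S.1.card • X (seminormalVec u C ρ v S) := by
      rw [← Module.End.mul_apply, ← hXk.eq, Module.End.mul_apply, hv.apply_seminormalVec hk hS,
        map_smul]
    obtain ⟨a, ha⟩ := hv.exists_apply_eq_of_mem_ker hC hlu hρ hf hκ hk hker hXfS hXkS
    obtain ⟨w, hw⟩ := hC.isUnit_word hlu hS
    exact ⟨a * w⁻¹.1, by rw [← hw, mul_assoc, w.inv_mul, mul_one, ha]⟩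
  choose b hb using hb
  refine ⟨∑ S, b S * occIdem l u C m S, eq_of_eqOn_ker hff hc hef (he _) hXe ?_⟩
  rw [← hv.span_seminormalVec hC hlu hρ hf hker]
  refine LinearMap.eqOn_span ?_
  rintro _ ⟨T, rfl⟩
  have hT := Finset.mem_powerset.mp T.2
  simp only [AlgHom.toRingHom_eq_coe, RingHom.coe_coe, map_sum, map_mul, LinearMap.sum_apply,
    Module.End.mul_apply, fun S : (Finset.range m).powerset =>
      hv.occIdem_seminormalVec hC hlu hρ (Finset.mem_powerset.mp S.2) hT]
  rw [Finset.sum_eq_single_of_mem T (Finset.mem_univ T) fun S _ hST => by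
    rw [if_neg (Subtype.coe_injective.ne hST), map_zero], if_pos rfl, ← hb T, map_mul,
    Module.End.mul_apply, seminormalVec]

end IsPrimitiveFamily

end Commutant

section FreeFermions

variable {F A W W' : Type*} [Field F] [Ring A] [Algebra F A] [AddCommGroup W] [Module F W]
  [AddCommGroup W'] [Module F W']

/-- The canonical anticommutation relations between creation operators `a x` and annihilation
operators `b y`, for a pairing `p` of their labels. -/
structure IsCAR (a : W →ₗ[F] A) (b : W' →ₗ[F] A) (p : W →ₗ[F] W' →ₗ[F] F) : Prop where
  sq : ∀ x, a x * a x = 0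
  sq' : ∀ y, b y * b y = 0
  mixed : ∀ x y, a x * b y + b y * a x = p x y • 1

/-- The pairings of the vectors `φ 0, …, φ (m - 1)` and `ψ 0, …, ψ (m - 1)` form the Cartan matrix
of type `A`, with `δ` instead of `2` on the diagonal. -/
structure IsTypeAPairing (p : W →ₗ[F] W' →ₗ[F] F) (δ : F) (m : ℕ) (φ : ℕ → W) (ψ : ℕ → W') :
    Prop where
  self : ∀ k < m, p (φ k) (ψ k) = δ
  succ_right : ∀ k, k + 1 < m → p (φ k) (ψ (k + 1)) = -1
  succ_left : ∀ k, k + 1 < m → p (φ (k + 1)) (ψ k) = -1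
  far_right : ∀ i j, i + 1 < j → j < m → p (φ i) (ψ j) = 0
  far_left : ∀ i j, i + 1 < j → j < m → p (φ j) (ψ i) = 0

variable {a : W →ₗ[F] A} {b : W' →ₗ[F] A} {p : W →ₗ[F] W' →ₗ[F] F} {δ : F} {m : ℕ} {φ : ℕ → W}
  {ψ : ℕ → W'} {l u : ℕ → F}

theorem mul_mul_eq_of_mul_eq {G : Type*} [Semigroup G] {x y z : G} (h : x * y = z) (w : G) :
    x * (y * w) = z * w := by
  rw [← mul_assoc, h]

namespace IsCAR

theorem flip (h : IsCAR a b p) : IsCAR b a p.flip where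
  sq := h.sq'
  sq' := h.sq
  mixed y x := (add_comm _ _).trans (h.mixed x y)

theorem anticomm (h : IsCAR a b p) (x y : W) : a x * a y = -(a y * a x) := by
  have hadd := h.sq (x + y)
  rw [map_add, add_mul, mul_add, mul_add, h.sq, h.sq, zero_add, add_zero] at hadd
  exact eq_neg_of_add_eq_zero_left hadd

theorem anticomm' (h : IsCAR a b p) (x y : W') : b x * b y = -(b y * b x) :=
  h.flip.anticomm x y

theorem mul_eq (h : IsCAR a b p) {x : W} {y : W'} {c : F} (hp : p x y = c) :
    b y * a x = c • 1 - a x * b y := by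
  rw [← hp, ← h.mixed x y, add_sub_cancel_left]

theorem mul_eq_neg (h : IsCAR a b p) {x : W} {y : W'} (hp : p x y = 0) :
    b y * a x = -(a x * b y) := by
  rw [h.mul_eq hp, zero_smul, zero_sub]

theorem mul_self (h : IsCAR a b p) {x : W} {y : W'} (hp : p x y = δ) :
    a x * b y * (a x * b y) = δ • (a x * b y) := by
  simp only [mul_assoc, mul_mul_eq_of_mul_eq (h.mul_eq hp), sub_mul, mul_sub, smul_mul_assoc,
    mul_smul_comm, mul_mul_eq_of_mul_eq (h.sq x), zero_mul, one_mul, sub_zero]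

theorem commute_of_orthogonal (h : IsCAR a b p) {x x' : W} {y y' : W'} (hp : p x y' = 0)
    (hp' : p x' y = 0) : Commute (a x * b y) (a x' * b y') := by
  rw [commute_iff_eq]
  simp only [mul_assoc, mul_mul_eq_of_mul_eq (h.mul_eq_neg hp),
    mul_mul_eq_of_mul_eq (h.mul_eq_neg hp'), mul_mul_eq_of_mul_eq (h.anticomm x' x),
    h.anticomm' y' y, neg_mul, mul_neg, neg_neg]

theorem commute_left (h : IsCAR a b p) (x : W) {y : W'} {z : W} (hp : p z y = 0) :
    Commute (a x * b y) (a z) := by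
  rw [commute_iff_eq, mul_assoc, h.mul_eq_neg hp, mul_neg, ← mul_assoc, ← mul_assoc,
    h.anticomm x z, neg_mul, neg_neg]

theorem commute_right (h : IsCAR a b p) {x : W} (y : W') {z : W'} (hp : p x z = 0) :
    Commute (a x * b y) (b z) := by
  rw [commute_iff_eq, mul_assoc, h.anticomm' y z, mul_neg, ← mul_assoc, ← mul_assoc,
    h.mul_eq_neg hp, neg_mul]

theorem braid (h : IsCAR a b p) {x x' : W} {y y' : W'} (hp : p x y = δ) (hp' : p x' y' = δ)
    (hr : p x y' = -1) (hl : p x' y = -1) :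
    a x * b y * (a x' * b y') * (a x * b y) - a x * b y =
      a x' * b y' * (a x * b y) * (a x' * b y') - a x' * b y' := by
  simp only [mul_assoc, mul_mul_eq_of_mul_eq (h.mul_eq hp), mul_mul_eq_of_mul_eq (h.mul_eq hp'),
    mul_mul_eq_of_mul_eq (h.mul_eq hr), mul_mul_eq_of_mul_eq (h.mul_eq hl),
    mul_mul_eq_of_mul_eq (h.anticomm x' x), h.anticomm' y' y, mul_mul_eq_of_mul_eq (h.sq x),
    mul_mul_eq_of_mul_eq (h.sq x'), h.sq', neg_mul, mul_neg, neg_neg, sub_mul, mul_sub,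
    smul_mul_assoc, mul_smul_comm, zero_mul, mul_zero, one_mul, smul_zero]
  module

/-- Since `δ - a x * b y = b y * a x`, there are two factors `b y₁` and two factors `b y₃`. Moving
the right `b y₁` leftwards across `a x₂` produces a square of `b y₁`, except in the term where the
two contract, and in that term the right `b y₃` is free to meet the left one. -/
theorem quintic (h : IsCAR a b p) {x₁ x₂ x₃ : W} {y₁ y₂ y₃ : W'} (h₁ : p x₁ y₁ = δ)
    (h₃ : p x₃ y₃ = δ) (h₁₃ : p x₁ y₃ = 0) (h₃₁ : p x₃ y₁ = 0) (h₂₁ : p x₂ y₁ = -1) :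
    a x₁ * b y₁ * (a x₃ * b y₃) * (a x₂ * b y₂) * (δ • 1 - a x₁ * b y₁) * (δ • 1 - a x₃ * b y₃) =
      0 := by
  have h₂₁' : a x₂ * b y₁ = (-1 : F) • 1 - b y₁ * a x₂ := h.flip.mul_eq h₂₁
  rw [← h.mul_eq h₁, ← h.mul_eq h₃]
  simp only [mul_assoc, mul_mul_eq_of_mul_eq (h.mul_eq_neg h₃₁),
    mul_mul_eq_of_mul_eq (h.flip.mul_eq_neg (x := y₃) h₁₃),
    mul_mul_eq_of_mul_eq (h.anticomm' y₂ y₁), mul_mul_eq_of_mul_eq (h.anticomm' y₂ y₃),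
    mul_mul_eq_of_mul_eq (h.anticomm' y₃ y₁), mul_mul_eq_of_mul_eq h₂₁',
    mul_mul_eq_of_mul_eq (h.sq' y₁), mul_mul_eq_of_mul_eq (h.sq' y₃), neg_mul, mul_neg, neg_neg,
    sub_mul, mul_sub, smul_mul_assoc, mul_smul_comm, zero_mul, mul_zero, one_mul, sub_zero,
    smul_zero, neg_zero]

theorem quintic' (h : IsCAR a b p) {x₁ x₂ x₃ : W} {y₁ y₂ y₃ : W'} (h₁ : p x₁ y₁ = δ)
    (h₃ : p x₃ y₃ = δ) (h₁₃ : p x₁ y₃ = 0) (h₃₁ : p x₃ y₁ = 0) (h₃₂ : p x₃ y₂ = -1) :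
    (δ • 1 - a x₁ * b y₁) * (δ • 1 - a x₃ * b y₃) * (a x₂ * b y₂) * (a x₁ * b y₁) * (a x₃ * b y₃) =
      0 := by
  have h₃₂' : a x₃ * b y₂ = (-1 : F) • 1 - b y₂ * a x₃ := h.flip.mul_eq h₃₂
  rw [← h.mul_eq h₁, ← h.mul_eq h₃]
  simp only [mul_assoc, mul_mul_eq_of_mul_eq (h.mul_eq_neg h₃₁),
    mul_mul_eq_of_mul_eq (h.flip.mul_eq_neg (x := y₃) h₁₃),
    mul_mul_eq_of_mul_eq (h.anticomm x₁ x₂), mul_mul_eq_of_mul_eq (h.anticomm x₃ x₂),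
    mul_mul_eq_of_mul_eq (h.anticomm x₃ x₁), mul_mul_eq_of_mul_eq h₃₂',
    mul_mul_eq_of_mul_eq (h.sq x₁), mul_mul_eq_of_mul_eq (h.sq x₃), neg_mul, mul_neg, neg_neg,
    sub_mul, mul_sub, smul_mul_assoc, mul_smul_comm, zero_mul, mul_zero, one_mul, sub_zero,
    smul_zero, neg_zero]

theorem stlRelations (h : IsCAR a b p) (hp : IsTypeAPairing p δ m φ ψ) :
    STLRelations δ m fun k => a (φ k) * b (ψ k) where
  sq k hk := h.mul_self (hp.self k hk)
  comm i j hij hj := h.commute_of_orthogonal (hp.far_right i j hij hj) (hp.far_left i j hij hj)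
  braid k hk := h.braid (hp.self k (by omega)) (hp.self (k + 1) hk) (hp.succ_right k hk)
    (hp.succ_left k hk)
  quintic k hk := h.quintic (hp.self k (by omega)) (hp.self (k + 2) hk)
    (hp.far_right k (k + 2) (by omega) hk) (hp.far_left k (k + 2) (by omega) hk)
    (hp.succ_left k (by omega))
  quintic' k hk := h.quintic' (hp.self k (by omega)) (hp.self (k + 2) hk)
    (hp.far_right k (k + 2) (by omega) hk) (hp.far_left k (k + 2) (by omega) hk)
    (hp.succ_left (k + 1) hk)

theorem nextOcc_mul (h : IsCAR a b p) {x x' : W} {y y' : W'} (hxy : p x y = 1)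
    (hl : p x' y = 0) (hr : p x y' = 0) {c μ : F} (hc : c ≠ 0) :
    nextOcc c μ (a x * b y) (a (c • x' - x) * b (y' - μ • y)) = a x' * b y' := by
  have hblocks : (1 - a x * b y) * (a (c • x' - x) * b (y' - μ • y)) * (1 - a x * b y) +
      a x * b y * (a (c • x' - x) * b (y' - μ • y)) * (a x * b y) - μ • (a x * b y) =
        c • (a x' * b y') := by
    have h₁ := h.mul_eq hxy
    have h₂ := h.mul_eq_neg hl
    have h₃ := h.mul_eq_neg hr
    simp only [map_sub, map_smul, mul_assoc, mul_sub, sub_mul, smul_mul_assoc, mul_smul_comm,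
      one_mul, mul_one, mul_mul_eq_of_mul_eq h₁, mul_mul_eq_of_mul_eq h₂, mul_mul_eq_of_mul_eq h₃,
      mul_mul_eq_of_mul_eq (h.anticomm x' x), h.anticomm' y' y, mul_mul_eq_of_mul_eq (h.sq x),
      mul_mul_eq_of_mul_eq (h.sq' y), h.sq' y, neg_mul, mul_neg, neg_neg, zero_mul, mul_zero,
      smul_zero, sub_zero, neg_zero, smul_neg, zero_sub, smul_sub]
    module
  rw [nextOcc, hblocks, inv_smul_smul₀ hc]

end IsCAR

end FreeFermions

section DualBases

variable {F W W' : Type*} [Field F] [AddCommGroup W] [Module F W] [AddCommGroup W'] [Module F W']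

/-- The vectors obtained from `φ` by elimination; under a type `A` pairing they are dual to
`dualRight u ψ`. -/
def dualLeft (l : ℕ → F) (φ : ℕ → W) : ℕ → W
  | 0 => (l 0)⁻¹ • φ 0
  | k + 1 => (l (k + 1))⁻¹ • (φ (k + 1) + dualLeft l φ k)

/-- The vectors obtained from `ψ` by elimination; under a type `A` pairing they are dual to
`dualLeft l φ`. -/
def dualRight (u : ℕ → F) (ψ : ℕ → W') : ℕ → W'
  | 0 => ψ 0
  | k + 1 => ψ (k + 1) + u (k + 1) • dualRight u ψ k

variable {p : W →ₗ[F] W' →ₗ[F] F} {δ : F} {m : ℕ} {φ : ℕ → W} {ψ : ℕ → W'} {l u : ℕ → F}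

theorem pairing_dualRight_eq_zero {x : W} (h : ∀ k < m, p x (ψ k) = 0) {k : ℕ} (hk : k < m) :
    p x (dualRight u ψ k) = 0 := by
  induction k with
  | zero => exact h 0 hk
  | succ k ih =>
    rw [dualRight, map_add, map_smul, h _ hk, ih (by omega), smul_zero, add_zero]

theorem pairing_dualLeft_eq_zero {y : W'} (h : ∀ k < m, p (φ k) y = 0) {k : ℕ} (hk : k < m) :
    p (dualLeft l φ k) y = 0 := by
  induction k with
  | zero => rw [dualLeft, map_smul, LinearMap.smul_apply, h 0 hk, smul_zero]
  | succ k ih =>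
    rw [dualLeft, map_smul, LinearMap.smul_apply, map_add, LinearMap.add_apply, h _ hk,
      ih (by omega), add_zero, smul_zero]

namespace IsTypeAPairing

variable (hp : IsTypeAPairing p δ m φ ψ)
include hp

theorem pairing_dualRight_of_succ_lt {i j : ℕ} (hji : j + 1 < i) (hi : i < m) :
    p (φ i) (dualRight u ψ j) = 0 :=
  pairing_dualRight_eq_zero (m := j + 1) (fun k hk => hp.far_left k i (by omega) hi)
    j.lt_succ_self

theorem pairing_succ_dualRight {j : ℕ} (hj : j + 1 < m) :
    p (φ (j + 1)) (dualRight u ψ j) = -1 := by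
  cases j with
  | zero => exact hp.succ_left 0 hj
  | succ j =>
    rw [dualRight, map_add, map_smul, hp.succ_left _ hj,
      hp.pairing_dualRight_of_succ_lt (by omega) hj, smul_zero, add_zero]

theorem pairing_dualLeft_of_succ_lt {i j : ℕ} (hij : i + 1 < j) (hj : j < m) :
    p (dualLeft l φ i) (ψ j) = 0 :=
  pairing_dualLeft_eq_zero (m := i + 1) (fun k hk => hp.far_right k j (by omega) hj)
    i.lt_succ_self

theorem pairing_dualLeft_succ {j : ℕ} (hj : j + 1 < m) :
    p (dualLeft l φ j) (ψ (j + 1)) = -(l j)⁻¹ := by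
  have hφ := hp.succ_right j hj
  cases j with
  | zero => rw [dualLeft, map_smul, LinearMap.smul_apply, hφ, smul_eq_mul, mul_neg_one]
  | succ j =>
    rw [dualLeft, map_smul, LinearMap.smul_apply, map_add, LinearMap.add_apply, hφ,
      hp.pairing_dualLeft_of_succ_lt (by omega) hj, add_zero, smul_eq_mul, mul_neg_one]

variable (hlu : SeminormalCoeffs δ l u)
include hlu

theorem pairing_dual_self {j : ℕ} (hj : j < m) :
    p (dualLeft l φ j) (dualRight u ψ j) = 1 := by
  induction j with
  | zero =>
    rw [dualLeft, dualRight, map_smul, LinearMap.smul_apply, hp.self 0 hj, ← hlu.add 0, hlu.zero,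
      add_zero, smul_eq_mul, inv_mul_cancel₀ (hlu.l_ne_zero 0)]
  | succ j ih =>
    have hy : p (dualLeft l φ j) (dualRight u ψ (j + 1)) = 0 := by
      rw [dualRight, map_add, map_smul, ih (by omega), hp.pairing_dualLeft_succ hj,
        eq_inv_of_mul_eq_one_left (hlu.succ_mul j), smul_eq_mul, mul_one, neg_add_cancel]
    have hφ : p (φ (j + 1)) (dualRight u ψ (j + 1)) = l (j + 1) := by
      rw [dualRight, map_add, map_smul, hp.self _ hj, hp.pairing_succ_dualRight hj,
        ← hlu.add (j + 1), smul_eq_mul, mul_neg_one, add_neg_cancel_right]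
    rw [dualLeft, map_smul, LinearMap.smul_apply, map_add, LinearMap.add_apply, hy, hφ, add_zero,
      smul_eq_mul, inv_mul_cancel₀ (hlu.l_ne_zero _)]

theorem pairing_dual_of_lt {i j : ℕ} (hij : i < j) (hj : j < m) :
    p (dualLeft l φ i) (dualRight u ψ j) = 0 := by
  induction j, hij using Nat.le_induction with
  | base =>
    rw [dualRight, map_add, map_smul, hp.pairing_dual_self hlu (by omega),
      hp.pairing_dualLeft_succ hj, eq_inv_of_mul_eq_one_left (hlu.succ_mul i), smul_eq_mul,
      mul_one, neg_add_cancel]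
  | succ j hij ih =>
    rw [dualRight, map_add, map_smul, ih (by omega), hp.pairing_dualLeft_of_succ_lt (by omega) hj,
      smul_zero, add_zero]

theorem pairing_dual_of_gt {i j : ℕ} (hji : j < i) (hi : i < m) :
    p (dualLeft l φ i) (dualRight u ψ j) = 0 := by
  induction i, hji using Nat.le_induction with
  | base =>
    rw [dualLeft, map_smul, LinearMap.smul_apply, map_add, LinearMap.add_apply,
      hp.pairing_dual_self hlu (by omega), hp.pairing_succ_dualRight hi, neg_add_cancel, smul_zero]
  | succ i hji ih =>
    rw [dualLeft, map_smul, LinearMap.smul_apply, map_add, LinearMap.add_apply, ih (by omega),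
      hp.pairing_dualRight_of_succ_lt (by omega) hi, add_zero, smul_zero]

theorem pairing_dual_of_ne {i j : ℕ} (hij : i ≠ j) (hi : i < m) (hj : j < m) :
    p (dualLeft l φ i) (dualRight u ψ j) = 0 :=
  hij.lt_or_gt.elim (fun h => hp.pairing_dual_of_lt hlu h hj)
    fun h => hp.pairing_dual_of_gt hlu h hi

theorem occ_succ_eq {A : Type*} [Ring A] [Algebra F A] {a : W →ₗ[F] A} {b : W' →ₗ[F] A}
    (h : IsCAR a b p) {k : ℕ} (hk : k < m) :
    occ l u (fun k => a (φ k) * b (ψ k)) (k + 1) = a (dualLeft l φ k) * b (dualRight u ψ k) := by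
  induction k with
  | zero =>
    simp only [occ, nextOcc, dualLeft, dualRight, sub_zero, one_mul, mul_one, zero_mul, add_zero,
      smul_zero, map_smul, smul_mul_assoc]
  | succ k ih =>
    have hφ : φ (k + 1) = l (k + 1) • dualLeft l φ (k + 1) - dualLeft l φ k := by
      rw [dualLeft, smul_inv_smul₀ (hlu.l_ne_zero _), add_sub_cancel_right]
    have hψ : ψ (k + 1) = dualRight u ψ (k + 1) - u (k + 1) • dualRight u ψ k := by
      rw [dualRight, add_sub_cancel_right]
    rw [occ, ih (by omega), hφ, hψ]
    exact h.nextOcc_mul (hp.pairing_dual_self hlu (by omega))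
      (hp.pairing_dual_of_ne hlu (by omega) hk (by omega))
      (hp.pairing_dual_of_ne hlu (by omega) (by omega) hk) (hlu.l_ne_zero _)

end IsTypeAPairing

end DualBases

section FockVectors

variable {F M W W' : Type*} [Field F] [AddCommGroup M] [Module F M] [AddCommGroup W] [Module F W]
  [AddCommGroup W'] [Module F W']

/-- The vector obtained from the vacuum by creating the particles `y 0, …, y (r - 1)`. -/
def fockVec (a : W →ₗ[F] Module.End F M) (y : ℕ → W) (vac : M) : ℕ → M
  | 0 => vac
  | r + 1 => a (y r) (fockVec a y vac r)

variable {a : W →ₗ[F] Module.End F M} {b : W' →ₗ[F] Module.End F M} {p : W →ₗ[F] W' →ₗ[F] F}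
  {δ κ : F} {m r : ℕ} {φ y : ℕ → W} {ψ : ℕ → W'} {l u : ℕ → F} {vac : M} {k : Module.End F M}

namespace IsCAR

theorem annihilate_create (h : IsCAR a b p) (x : W) (z : W') (w : M) :
    b z (a x w) = p x z • w - a x (b z w) := by
  rw [← Module.End.mul_apply, h.mul_eq rfl, LinearMap.sub_apply, LinearMap.smul_apply,
    Module.End.one_apply, Module.End.mul_apply]

theorem annihilate_fockVec (h : IsCAR a b p) (hvac : ∀ z, b z vac = 0) {z : W'}
    (hz : ∀ j < r, p (y j) z = 0) : b z (fockVec a y vac r) = 0 := by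
  induction r with
  | zero => exact hvac z
  | succ r ih =>
    rw [fockVec, h.annihilate_create, hz r r.lt_succ_self, zero_smul,
      ih fun j hj => hz j (hj.trans r.lt_succ_self), map_zero, sub_zero]

theorem create_fockVec (h : IsCAR a b p) {j : ℕ} (hj : j < r) :
    a (y j) (fockVec a y vac r) = 0 := by
  induction r, hj using Nat.le_induction with
  | base => rw [fockVec, ← Module.End.mul_apply, h.sq, LinearMap.zero_apply]
  | succ r hj ih =>
    rw [fockVec, ← Module.End.mul_apply, h.anticomm, LinearMap.neg_apply, Module.End.mul_apply, ih,
      map_zero, neg_zero]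

end IsCAR

theorem apply_fockVec (hk : ∀ x, k * a x = κ • (a x * k)) (hvac : k vac = vac) :
    k (fockVec a y vac r) = κ ^ r • fockVec a y vac r := by
  induction r with
  | zero => rw [fockVec, hvac, pow_zero, one_smul]
  | succ r ih =>
    rw [fockVec, ← Module.End.mul_apply, hk, LinearMap.smul_apply, Module.End.mul_apply, ih,
      map_smul, smul_smul, pow_succ']

variable (h : IsCAR a b p) (hp : IsTypeAPairing p δ m φ ψ) (hlu : SeminormalCoeffs δ l u)
  (hvac : ∀ z, b z vac = 0)
include h hp hlu hvac

theorem dualRight_annihilate_fockVec {j : ℕ} (hrj : r ≤ j) (hj : j < m) :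
    b (dualRight u ψ j) (fockVec a (dualLeft l φ) vac r) = 0 :=
  h.annihilate_fockVec hvac fun i hi => hp.pairing_dual_of_lt hlu (by omega) hj

theorem fockVec_ne_zero (hvac' : vac ≠ 0) (hr : r ≤ m) :
    fockVec a (dualLeft l φ) vac r ≠ 0 := by
  induction r with
  | zero => exact hvac'
  | succ r ih =>
    have hcreate := h.annihilate_create (dualLeft l φ r) (dualRight u ψ r)
      (fockVec a (dualLeft l φ) vac r)
    rw [hp.pairing_dual_self hlu hr, dualRight_annihilate_fockVec h hp hlu hvac le_rfl hr,
      one_smul, map_zero, sub_zero] at hcreate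
    intro h0
    rw [fockVec] at h0
    exact ih (by omega) (by rw [← hcreate, h0, map_zero])

theorem occ_fockVec {j : ℕ} (hj : j < m) :
    occ l u (fun k => a (φ k) * b (ψ k)) (j + 1) (fockVec a (dualLeft l φ) vac r) =
      if j < r then fockVec a (dualLeft l φ) vac r else 0 := by
  rw [hp.occ_succ_eq hlu h hj, Module.End.mul_apply]
  split_ifs with hjr
  · have hcreate := h.annihilate_create (dualLeft l φ j) (dualRight u ψ j)
      (fockVec a (dualLeft l φ) vac r)
    rw [hp.pairing_dual_self hlu hj, h.create_fockVec hjr, map_zero, one_smul] at hcreate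
    exact (sub_eq_zero.mp hcreate.symm).symm
  · rw [dualRight_annihilate_fockVec h hp hlu hvac (not_lt.mp hjr) hj, map_zero]

theorem isPrimitiveFamily_fockVec (hvac' : vac ≠ 0) {z : W'} (hz : ∀ j < m, p (φ j) z = 0)
    (hk : ∀ x, k * a x = κ • (a x * k)) (hkvac : k vac = vac) :
    IsPrimitiveFamily (fun j => occ l u (fun k => a (φ k) * b (ψ k)) (j + 1)) (b z) k κ m
      (fockVec a (dualLeft l φ) vac) where
  ne_zero _ hr := fockVec_ne_zero h hp hlu hvac hvac' hr
  weight _ _ _ hj := occ_fockVec h hp hlu hvac hj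
  apply_eq_zero _ hr := h.annihilate_fockVec hvac fun _ hj =>
    pairing_dualLeft_eq_zero hz (hj.trans_le hr)
  apply_eq_smul _ _ := apply_fockVec hk hkvac

end FockVectors

section Modes

variable {F A ι : Type*} [Field F] [Ring A] [Algebra F A] [Fintype ι]

theorem anticommutator_linearCombination {a b : ι → A} (x y : ι → F) :
    Fintype.linearCombination F a x * Fintype.linearCombination F b y +
        Fintype.linearCombination F b y * Fintype.linearCombination F a x =
      ∑ i, ∑ j, (x i * y j) • (a i * b j + b j * a i) := by
  simp only [Fintype.linearCombination_apply, Finset.sum_mul_sum, smul_mul_smul_comm, smul_add,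
    Finset.sum_add_distrib]
  rw [Finset.sum_comm (f := fun i j => (x i * y j) • (b j * a i))]
  simp only [mul_comm]

theorem linearCombination_mul_self [NeZero (2 : F)] {a : ι → A}
    (ha : ∀ i j, a i * a j + a j * a i = 0) (x : ι → F) :
    Fintype.linearCombination F a x * Fintype.linearCombination F a x = 0 := by
  have h := anticommutator_linearCombination (a := a) (b := a) x x
  simp only [ha, smul_zero, Finset.sum_const_zero, ← two_smul F] at h
  exact (smul_eq_zero_iff_right two_ne_zero).mp h

theorem isCAR_linearCombination [NeZero (2 : F)] {a b : ι → A}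
    (ha : ∀ i j, a i * a j + a j * a i = 0) (hb : ∀ i j, b i * b j + b j * b i = 0)
    (hab : ∀ i j, a i * b j + b j * a i = if i = j then 1 else 0) :
    IsCAR (Fintype.linearCombination F a) (Fintype.linearCombination F b)
      (dotProductBilin F F) where
  sq := linearCombination_mul_self ha
  sq' := linearCombination_mul_self hb
  mixed x y := by
    simp only [anticommutator_linearCombination, hab, smul_ite, smul_zero, Finset.sum_ite_eq,
      Finset.mem_univ, if_true, ← Finset.sum_smul]
    rfl

/-- The vector with entries `c` and `d` at the positions `k` and `k + 1`, and `0` elsewhere. -/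
def edgeVec (n : ℕ) (c d : F) (k : ℕ) : Fin n → F := fun i =>
  if (i : ℕ) = k then c else if (i : ℕ) = k + 1 then d else 0

theorem sum_edgeVec_smul {M : Type*} [AddCommGroup M] [Module F M] {n k : ℕ} (hk : k + 1 < n)
    (c d : F) (w : Fin n → M) :
    ∑ i, edgeVec n c d k i • w i = c • w ⟨k, by omega⟩ + d • w ⟨k + 1, hk⟩ := by
  rw [Finset.sum_eq_add (⟨k, by omega⟩ : Fin n) ⟨k + 1, hk⟩ (by simp) _ (by simp) (by simp)]
  · simp [edgeVec]
  · rintro i - ⟨hi, hi'⟩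
    rw [edgeVec, if_neg (by simpa [Fin.ext_iff] using hi),
      if_neg (by simpa [Fin.ext_iff] using hi'), zero_smul]

theorem dotProduct_edgeVec {n k : ℕ} (hk : k + 1 < n) (c d : F) (y : Fin n → F) :
    dotProductBilin F F (edgeVec n c d k) y = c * y ⟨k, by omega⟩ + d * y ⟨k + 1, hk⟩ :=
  sum_edgeVec_smul hk c d y

theorem dotProduct_edgeVec_right {n k : ℕ} (hk : k + 1 < n) (c d : F) (x : Fin n → F) :
    dotProductBilin F F x (edgeVec n c d k) = x ⟨k, by omega⟩ * c + x ⟨k + 1, hk⟩ * d := by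
  rw [mul_comm _ c, mul_comm _ d, ← dotProduct_edgeVec hk c d]
  exact dotProduct_comm x (edgeVec n c d k)

theorem isTypeAPairing_edgeVec {n : ℕ} {c d c' d' δ : F} (hδ : c * c' + d * d' = δ)
    (hr : d * c' = -1) (hl : c * d' = -1) :
    IsTypeAPairing (dotProductBilin F F) δ (n - 1) (edgeVec n c d) (edgeVec n c' d') where
  self k hk := by
    simpa [dotProduct_edgeVec (show k + 1 < n by omega), edgeVec] using hδ
  succ_right k hk := by
    simpa [dotProduct_edgeVec (show k + 1 < n by omega), edgeVec, show k ≠ k + 2 by omega] using hr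
  succ_left k hk := by
    simpa [dotProduct_edgeVec (show k + 1 + 1 < n by omega), edgeVec, show k + 2 ≠ k by omega]
      using hl
  far_right i j hij hj := by
    simp [dotProduct_edgeVec (show i + 1 < n by omega), edgeVec, show i ≠ j by omega,
      show i + 1 ≠ j by omega, show i ≠ j + 1 by omega]
  far_left i j hij hj := by
    simp [dotProduct_edgeVec (show j + 1 < n by omega), edgeVec, show j ≠ i by omega,
      show j ≠ i + 1 by omega, show j + 1 ≠ i by omega]

end Modes

section QuantumIntegers

theorem q_ne_zero : q ≠ 0 := RatFunc.X_ne_zero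

theorem q_pow_injective : Function.Injective (q ^ · : ℕ → K) := by
  intro i j hij
  have hinj : Function.Injective (Polynomial.aeval (R := ℂ) q) :=
    transcendental_iff_injective.mp RatFunc.transcendental_X
  have hpow : (Polynomial.X ^ i : Polynomial ℂ) = Polynomial.X ^ j :=
    hinj (by simpa only [map_pow, Polynomial.aeval_X] using hij)
  rw [← Polynomial.natDegree_X_pow (R := ℂ) i, hpow, Polynomial.natDegree_X_pow]

theorem q_pow_ne_inv_pow (k : ℕ) : q ^ (k + 1) ≠ q⁻¹ ^ (k + 1) := by
  intro h
  rw [inv_pow, ← mul_eq_one_iff_eq_inv₀ (pow_ne_zero _ q_ne_zero), ← pow_add, ← pow_zero q] at h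
  have := q_pow_injective h
  omega

theorem q_ne_inv : q ≠ q⁻¹ := by
  simpa only [zero_add, pow_one] using q_pow_ne_inv_pow 0

theorem qnum_succ_ne_zero (k : ℕ) : qnum (k + 1) ≠ 0 :=
  div_ne_zero (sub_ne_zero.mpr (q_pow_ne_inv_pow k)) (sub_ne_zero.mpr q_ne_inv)

theorem qnum_zero : qnum 0 = 0 := by
  rw [qnum, pow_zero, pow_zero, sub_self, zero_div]

theorem qnum_one : qnum 1 = 1 := by
  rw [qnum, pow_one, pow_one, div_self (sub_ne_zero.mpr q_ne_inv)]

theorem qnum_add_two (k : ℕ) : qnum (k + 2) + qnum k = (q + q⁻¹) * qnum (k + 1) := by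
  have hq := mul_inv_cancel₀ q_ne_zero
  rw [qnum, qnum, qnum, ← add_div, ← mul_div_assoc]
  congr 1
  linear_combination (q⁻¹ ^ k - q ^ k) * hq

/-- The lower diagonal coefficients `[k + 2] / [k + 1]` of the seminormal form of `STL`. -/
def lowerCoeff (k : ℕ) : K := qnum (k + 2) / qnum (k + 1)

/-- The upper diagonal coefficients `[k] / [k + 1]` of the seminormal form of `STL`. -/
def upperCoeff (k : ℕ) : K := qnum k / qnum (k + 1)

theorem seminormalCoeffs : SeminormalCoeffs (q + q⁻¹) lowerCoeff upperCoeff where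
  add k := by
    rw [lowerCoeff, upperCoeff, ← add_div, qnum_add_two,
      mul_div_cancel_right₀ _ (qnum_succ_ne_zero k)]
  zero := by rw [upperCoeff, qnum_zero, zero_div]
  succ_mul k := by
    rw [lowerCoeff, upperCoeff, div_mul_div_cancel₀ (qnum_succ_ne_zero _),
      div_self (qnum_succ_ne_zero k)]
  loop_ne_zero := by
    have h := qnum_add_two 0
    rw [qnum_zero, add_zero, zero_add, qnum_one, mul_one] at h
    exact h ▸ qnum_succ_ne_zero 1

end QuantumIntegers

section FockSpace

variable {n : ℕ}

theorem fin_two_add_one_eq_iff {s t : Fin 2} : s + 1 = t ↔ s ≠ t := by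
  revert s t; decide

theorem fin_two_add_one_add_one (t : Fin 2) : t + 1 + 1 = t := by
  revert t; decide

/-- The sequence `γ` with its entry at `i` exchanged. -/
def flipAt (γ : Fin n → Fin 2) (i : Fin n) : Fin n → Fin 2 := Function.update γ i (γ i + 1)

theorem flipAt_self (γ : Fin n → Fin 2) (i : Fin n) : flipAt γ i i = γ i + 1 :=
  Function.update_self ..

theorem flipAt_of_ne (γ : Fin n → Fin 2) {i j : Fin n} (h : j ≠ i) : flipAt γ i j = γ j :=
  Function.update_of_ne h ..

theorem flipAt_flipAt (γ : Fin n → Fin 2) (i : Fin n) : flipAt (flipAt γ i) i = γ := by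
  rw [flipAt, flipAt_self, fin_two_add_one_add_one, flipAt, Function.update_idem,
    Function.update_eq_self]

theorem flipAt_comm (γ : Fin n → Fin 2) {i j : Fin n} (h : i ≠ j) :
    flipAt (flipAt γ i) j = flipAt (flipAt γ j) i := by
  rw [flipAt, flipAt_of_ne γ h.symm, flipAt, Function.update_comm h, flipAt, flipAt_of_ne γ h,
    flipAt]

theorem comp_swap_eq_flipAt (γ : Fin n → Fin 2) {i j : Fin n} (hγ : γ i ≠ γ j) :
    (fun k => γ (Equiv.swap i j k)) = flipAt (flipAt γ j) i := by
  have hij : i ≠ j := fun h => hγ (congrArg γ h)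
  funext k
  by_cases hki : k = i
  · rw [hki, Equiv.swap_apply_left, flipAt_self, flipAt_of_ne γ hij,
      fin_two_add_one_eq_iff.mpr hγ]
  · rw [flipAt_of_ne _ hki]
    by_cases hkj : k = j
    · rw [hkj, Equiv.swap_apply_right, flipAt_self, fin_two_add_one_eq_iff.mpr hγ.symm]
    · rw [Equiv.swap_apply_of_ne_of_ne hki hkj, flipAt_of_ne γ hkj]

/-- The Koszul sign of an odd operator acting on the tensor factor `i` of `v_γ`. -/
def koszulSign (γ : Fin n → Fin 2) (i : Fin n) : K := (-1) ^ onesBefore γ i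

theorem koszulSign_eq_prod (γ : Fin n → Fin 2) (i : Fin n) :
    koszulSign γ i = ∏ k ∈ Finset.Iio i, (-1 : K) ^ (γ k : ℕ) := by
  have hval (t : Fin 2) : (if t = 1 then 1 else 0) = (t : ℕ) := by fin_cases t <;> rfl
  rw [koszulSign, onesBefore, Finset.prod_pow_eq_pow_sum, ← Finset.filter_filter,
    Finset.filter_gt_eq_Iio, Finset.card_filter]
  simp only [hval]

theorem koszulSign_mul_self (γ : Fin n → Fin 2) (i : Fin n) :
    koszulSign γ i * koszulSign γ i = 1 := by
  rw [koszulSign, ← mul_pow, neg_one_mul, neg_neg, one_pow]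

theorem koszulSign_flipAt_of_le (γ : Fin n → Fin 2) {i j : Fin n} (h : j ≤ i) :
    koszulSign (flipAt γ i) j = koszulSign γ j := by
  simp only [koszulSign_eq_prod]
  refine Finset.prod_congr rfl fun k hk => ?_
  rw [flipAt_of_ne γ ((Finset.mem_Iio.mp hk).trans_le h).ne]

theorem neg_one_pow_fin_two_add_one (t : Fin 2) :
    (-1 : K) ^ ((t + 1 : Fin 2) : ℕ) = -(-1) ^ (t : ℕ) := by
  fin_cases t <;> simp

theorem koszulSign_flipAt_of_lt (γ : Fin n → Fin 2) {i j : Fin n} (h : i < j) :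
    koszulSign (flipAt γ i) j = -koszulSign γ j := by
  simp only [koszulSign_eq_prod, ← Finset.mul_prod_erase _ _ (Finset.mem_Iio.mpr h), flipAt_self,
    neg_one_pow_fin_two_add_one, neg_mul]
  congr 2
  exact Finset.prod_congr rfl fun k hk => by rw [flipAt_of_ne γ (Finset.ne_of_mem_erase hk)]

theorem koszulSign_succ (γ : Fin n → Fin 2) {k : ℕ} (hk : k + 1 < n) :
    koszulSign γ ⟨k + 1, hk⟩ = (-1) ^ (γ ⟨k, by omega⟩ : ℕ) * koszulSign γ ⟨k, by omega⟩ := by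
  have hIio : Finset.Iio (⟨k + 1, hk⟩ : Fin n) =
      insert ⟨k, by omega⟩ (Finset.Iio ⟨k, by omega⟩) := by
    ext j
    simp only [Finset.mem_insert, Finset.mem_Iio, Fin.lt_def, Fin.ext_iff]
    omega
  rw [koszulSign_eq_prod, hIio, Finset.prod_insert (by simp), koszulSign_eq_prod]

/-- The fermionic mode that maps `v_1` to `v_0` in the tensor factor `i` if `t = 0`, and `v_0` to
`v_1` if `t = 1`. -/
def mode (t : Fin 2) (i : Fin n) : Module.End K (V n) where
  toFun f γ := if γ i = t then koszulSign γ i * f (flipAt γ i) else 0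
  map_add' f g := by
    funext γ
    simp only [Pi.add_apply]
    split_ifs <;> ring
  map_smul' c f := by
    funext γ
    simp only [Pi.smul_apply, smul_eq_mul, RingHom.id_apply]
    split_ifs <;> ring

theorem mode_apply (t : Fin 2) (i : Fin n) (f : V n) (γ : Fin n → Fin 2) :
    mode t i f γ = if γ i = t then koszulSign γ i * f (flipAt γ i) else 0 := rfl

theorem mode_mode_apply_of_ne (s t : Fin 2) {i j : Fin n} (hij : i ≠ j) (f : V n)
    (γ : Fin n → Fin 2) :
    mode s i (mode t j f) γ = if γ i = s ∧ γ j = t then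
      koszulSign γ i * koszulSign (flipAt γ i) j * f (flipAt (flipAt γ i) j) else 0 := by
  simp only [mode_apply, flipAt_of_ne γ hij.symm, ite_and, mul_ite, mul_zero, mul_assoc]

theorem mode_mode_self_apply (s t : Fin 2) (i : Fin n) (f : V n) (γ : Fin n → Fin 2) :
    mode s i (mode t i f) γ = if γ i = s ∧ s ≠ t then f γ else 0 := by
  simp only [mode_apply, flipAt_self, flipAt_flipAt, koszulSign_flipAt_of_le γ le_rfl, ite_and,
    mul_ite, mul_zero, ← mul_assoc, koszulSign_mul_self, one_mul]
  refine if_ctx_congr Iff.rfl (fun h => ?_) fun _ => rfl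
  rw [h]
  exact if_congr (fin_two_add_one_eq_iff) rfl rfl

theorem mode_anticomm (s t : Fin 2) {i j : Fin n} (hij : i ≠ j) :
    mode s i * mode t j + mode t j * mode s i = 0 := by
  wlog h : i < j generalizing i j s t
  · rw [add_comm]
    exact this t s hij.symm (lt_of_le_of_ne (not_lt.mp h) hij.symm)
  refine LinearMap.ext fun f => funext fun γ => ?_
  rw [LinearMap.add_apply, Pi.add_apply, Module.End.mul_apply, Module.End.mul_apply,
    mode_mode_apply_of_ne s t hij, mode_mode_apply_of_ne t s hij.symm,
    koszulSign_flipAt_of_lt γ h, koszulSign_flipAt_of_le γ h.le, flipAt_comm γ hij]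
  simp only [and_comm (a := γ i = s)]
  split_ifs
  · rw [mul_neg, mul_comm (koszulSign γ i), neg_mul, neg_add_cancel]
    rfl
  · exact add_zero _

theorem mode_mul_self (t : Fin 2) (i : Fin n) : mode t i * mode t i = 0 := by
  refine LinearMap.ext fun f => funext fun γ => ?_
  rw [Module.End.mul_apply, mode_mode_self_apply, if_neg fun h => h.2 rfl]
  rfl

theorem mode_zero_one_anticomm_self (i : Fin n) :
    mode 0 i * mode 1 i + mode 1 i * mode 0 i = 1 := by
  refine LinearMap.ext fun f => funext fun γ => ?_
  rw [LinearMap.add_apply, Pi.add_apply, Module.End.mul_apply, Module.End.mul_apply,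
    mode_mode_self_apply, mode_mode_self_apply, Module.End.one_apply]
  rcases Fin.exists_fin_two.mp ⟨γ i, rfl⟩ with h | h <;> simp [h]

/-- The operator `∑ i, x i • mode t i`. -/
abbrev field (n : ℕ) (t : Fin 2) : (Fin n → K) →ₗ[K] Module.End K (V n) :=
  Fintype.linearCombination K (mode t)

theorem isCAR_field : IsCAR (field n 0) (field n 1) (dotProductBilin K K) := by
  have hself (t : Fin 2) (i j : Fin n) : mode t i * mode t j + mode t j * mode t i = 0 := by
    rcases eq_or_ne i j with rfl | hij
    · rw [mode_mul_self, add_zero]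
    · exact mode_anticomm t t hij
  refine isCAR_linearCombination (hself 0) (hself 1) fun i j => ?_
  split_ifs with hij
  · rw [hij, mode_zero_one_anticomm_self]
  · exact mode_anticomm 0 1 hij

theorem field_one_eb_one (y : Fin n → K) : field n 1 y (eb fun _ => 1) = 0 := by
  rw [Fintype.linearCombination_apply, LinearMap.sum_apply]
  refine Finset.sum_eq_zero fun i _ => funext fun γ => ?_
  rw [LinearMap.smul_apply, Pi.smul_apply, mode_apply]
  split_ifs with hγ
  · have hne : flipAt γ i ≠ fun _ => 1 := fun h => by
      have := congrFun h i
      rw [flipAt_self, hγ] at this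
      exact absurd this (by decide)
    rw [eb, if_neg hne, mul_zero, smul_zero]
    rfl
  · exact smul_zero _

theorem eb_ne_zero (η : Fin n → Fin 2) : eb η ≠ 0 := fun h => by
  simpa [eb] using congrFun h η

end FockSpace

section QuantumGroup

variable {n : ℕ}

/-- The coefficients `q ^ i` of `F` in the modes `mode 1 i`. -/
def lowerVec (n : ℕ) : Fin n → K := fun i => q ^ (i : ℕ)

/-- The coefficients `q ^ (-(n - 1 - i))` of `E` in the modes `mode 0 i`. -/
def raiseVec (n : ℕ) : Fin n → K := fun i => q⁻¹ ^ (n - 1 - i)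

theorem Fop_eq_field : Fop one' n = field n 1 (lowerVec n) := by
  refine LinearMap.ext fun f => funext fun γ => ?_
  rw [Fintype.linearCombination_apply, LinearMap.sum_apply, Finset.sum_apply]
  change ∑ i : Fin n, _ = _
  refine Finset.sum_congr rfl fun i _ => ?_
  have hcard : ∑ j ∈ Finset.univ.filter (fun j => j < i), one' j = i := by
    simp [one', Finset.filter_gt_eq_Iio, Fin.card_Iio]
  rw [LinearMap.smul_apply, Pi.smul_apply, smul_eq_mul, mode_apply, mul_ite, mul_zero, hcard]
  refine if_ctx_congr Iff.rfl (fun h => ?_) fun _ => rfl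
  rw [koszulSign, flipAt, h, lowerVec]
  ring_nf
  rfl

theorem Eop_eq_field : Eop one' n = field n 0 (raiseVec n) := by
  refine LinearMap.ext fun f => funext fun γ => ?_
  rw [Fintype.linearCombination_apply, LinearMap.sum_apply, Finset.sum_apply]
  change ∑ i : Fin n, _ = _
  refine Finset.sum_congr rfl fun i _ => ?_
  have hcard : ∑ j ∈ Finset.univ.filter (fun j => i < j), one' j = n - 1 - i := by
    simp [one', Finset.filter_lt_eq_Ioi, Fin.card_Ioi]
  rw [LinearMap.smul_apply, Pi.smul_apply, smul_eq_mul, mode_apply, mul_ite, mul_zero, hcard]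
  refine if_ctx_congr Iff.rfl (fun h => ?_) fun _ => rfl
  rw [koszulSign, flipAt, h, raiseVec, one', qnum_one, zpow_neg, zpow_natCast, ← inv_pow, zero_add]
  ring

theorem Kop_apply (c d : ℤ) (f : V n) (γ : Fin n → Fin 2) :
    Kop one' n c d f γ = q ^ (∑ i, ![c, d] (γ i)) * f γ := by
  have hweight (t : Fin 2) :
      ![c, d] t = if t = 0 then c * ((1 : ℕ) : ℤ) else c * (((1 : ℕ) : ℤ) - 1) + d := by
    fin_cases t <;> simp
  simp only [hweight]
  rfl

theorem sum_flipAt {G : Type*} [AddCommGroup G] (w : Fin 2 → G) (γ : Fin n → Fin 2) (i : Fin n) :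
    ∑ k, w (flipAt γ i k) = ∑ k, w (γ k) - (w (γ i) - w (γ i + 1)) := by
  have hrest : ∑ k ∈ Finset.univ.erase i, w (flipAt γ i k) =
      ∑ k ∈ Finset.univ.erase i, w (γ k) :=
    Finset.sum_congr rfl fun k hk => by rw [flipAt_of_ne γ (Finset.ne_of_mem_erase hk)]
  rw [← Finset.add_sum_erase _ _ (Finset.mem_univ i), hrest, flipAt_self,
    ← Finset.add_sum_erase _ (fun k => w (γ k)) (Finset.mem_univ i)]
  abel

theorem Kop_mul_mode (c d : ℤ) (t : Fin 2) (i : Fin n) :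
    Kop one' n c d * mode t i =
      q ^ (![c, d] t - ![c, d] (t + 1)) • (mode t i * Kop one' n c d) := by
  refine LinearMap.ext fun f => funext fun γ => ?_
  rw [Module.End.mul_apply, Kop_apply, LinearMap.smul_apply, Pi.smul_apply, Module.End.mul_apply,
    mode_apply, mode_apply, Kop_apply, smul_eq_mul, mul_ite, mul_ite, mul_zero, mul_zero]
  refine if_ctx_congr Iff.rfl (fun h => ?_) fun _ => rfl
  rw [sum_flipAt, h, mul_left_comm (koszulSign γ i), ← mul_assoc (q ^ (_ - _)),
    ← zpow_add₀ q_ne_zero, add_sub_cancel]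

theorem Kop_mul_field (c d : ℤ) (t : Fin 2) (x : Fin n → K) :
    Kop one' n c d * field n t x =
      q ^ (![c, d] t - ![c, d] (t + 1)) • (field n t x * Kop one' n c d) := by
  simp only [Fintype.linearCombination_apply, Finset.mul_sum, Finset.sum_mul, Finset.smul_sum,
    mul_smul_comm, smul_mul_assoc, Kop_mul_mode, smul_comm (x _)]

theorem Kop_eb_one : Kop one' n 1 0 (eb fun _ => 1) = eb fun _ => 1 := by
  funext γ
  rw [Kop_apply, eb, mul_ite, mul_one, mul_zero]
  refine if_ctx_congr Iff.rfl (fun h => ?_) fun _ => rfl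
  simp [h]

theorem commute_Kop (c d : ℤ) (x y : Fin n → K) :
    Commute (field n 0 x * field n 1 y) (Kop one' n c d) := by
  refine Commute.symm (?_ : _ = _)
  rw [← mul_assoc, Kop_mul_field, smul_mul_assoc, mul_assoc, Kop_mul_field, mul_smul_comm,
    smul_smul, ← zpow_add₀ q_ne_zero, mul_assoc]
  simp

theorem raiseVec_dotProduct_lowerVec : dotProductBilin K K (raiseVec n) (lowerVec n) = qnum n := by
  rw [qnum, eq_div_iff (sub_ne_zero.mpr q_ne_inv), ← (Commute.all q q⁻¹).geom_sum₂_mul,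
    ← Fin.sum_univ_eq_sum_range (fun i => q ^ i * q⁻¹ ^ (n - 1 - i))]
  congr 1
  exact dotProduct_comm (raiseVec n) (lowerVec n)

theorem Eop_Fop_anticommutator :
    Eop one' n * Fop one' n + Fop one' n * Eop one' n = qnum n • 1 := by
  rw [Eop_eq_field, Fop_eq_field, isCAR_field.mixed, raiseVec_dotProduct_lowerVec]

end QuantumGroup

section HeckeOperators

variable {n : ℕ}

/-- The vector `e_k - q⁻¹ e_{k+1}`. -/
def creationVec (n k : ℕ) : Fin n → K := edgeVec n 1 (-q⁻¹) k

/-- The vector `q e_k - e_{k+1}`. -/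
def annihilationVec (n k : ℕ) : Fin n → K := edgeVec n q (-1) k

theorem isTypeAPairing_creationVec :
    IsTypeAPairing (dotProductBilin K K) (q + q⁻¹) (n - 1) (creationVec n) (annihilationVec n) :=
  isTypeAPairing_edgeVec (by ring) (by rw [neg_mul, inv_mul_cancel₀ q_ne_zero]) (one_mul _)

theorem creationVec_dotProduct_lowerVec {k : ℕ} (hk : k < n - 1) :
    dotProductBilin K K (creationVec n k) (lowerVec n) = 0 := by
  rw [creationVec, dotProduct_edgeVec (by omega), lowerVec, lowerVec, pow_succ', one_mul, neg_mul,
    inv_mul_cancel_left₀ q_ne_zero, add_neg_cancel]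

theorem raiseVec_dotProduct_annihilationVec {k : ℕ} (hk : k < n - 1) :
    dotProductBilin K K (raiseVec n) (annihilationVec n k) = 0 := by
  rw [annihilationVec, dotProduct_edgeVec_right (by omega), raiseVec, raiseVec,
    show n - 1 - k = n - 1 - (k + 1) + 1 by omega, pow_succ, mul_assoc,
    inv_mul_cancel₀ q_ne_zero, mul_one, mul_neg_one, add_neg_cancel]

/-- The quadratic expression in the fermionic modes that equals `Ȟ_k + q`. -/
def hopping (n k : ℕ) : Module.End K (V n) :=
  field n 0 (creationVec n k) * field n 1 (annihilationVec n k)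

theorem hopping_eq {k : ℕ} (hk : k + 1 < n) :
    hopping n k = (mode 0 ⟨k, by omega⟩ - q⁻¹ • mode 0 ⟨k + 1, hk⟩) *
      (q • mode 1 ⟨k, by omega⟩ - mode 1 ⟨k + 1, hk⟩) := by
  rw [hopping, Fintype.linearCombination_apply, Fintype.linearCombination_apply, creationVec,
    annihilationVec, sum_edgeVec_smul hk, sum_edgeVec_smul hk, one_smul, neg_smul, neg_smul,
    one_smul, ← sub_eq_add_neg, ← sub_eq_add_neg]

theorem mode_mode_succ_apply {k : ℕ} (hk : k + 1 < n) (f : V n) (γ : Fin n → Fin 2) :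
    mode 0 ⟨k, by omega⟩ (mode 1 ⟨k + 1, hk⟩ f) γ =
      if γ ⟨k, by omega⟩ = 0 ∧ γ ⟨k + 1, hk⟩ = 1 then
        -f (fun j => γ (Equiv.swap ⟨k, by omega⟩ ⟨k + 1, hk⟩ j)) else 0 := by
  rw [mode_mode_apply_of_ne _ _ (by simp)]
  refine if_ctx_congr Iff.rfl (fun h => ?_) fun _ => rfl
  rw [comp_swap_eq_flipAt γ (by simp [h]), koszulSign_flipAt_of_lt _ (by simp [Fin.lt_def]),
    koszulSign_succ, h.1, Fin.val_zero, pow_zero, one_mul, mul_neg, koszulSign_mul_self,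
    neg_one_mul, flipAt_comm γ (by simp)]

theorem mode_succ_mode_apply {k : ℕ} (hk : k + 1 < n) (f : V n) (γ : Fin n → Fin 2) :
    mode 0 ⟨k + 1, hk⟩ (mode 1 ⟨k, by omega⟩ f) γ =
      if γ ⟨k, by omega⟩ = 1 ∧ γ ⟨k + 1, hk⟩ = 0 then
        -f (fun j => γ (Equiv.swap ⟨k, by omega⟩ ⟨k + 1, hk⟩ j)) else 0 := by
  rw [mode_mode_apply_of_ne _ _ (by simp)]
  refine if_ctx_congr and_comm (fun h => ?_) fun _ => rfl
  rw [comp_swap_eq_flipAt γ (by simp [h]), koszulSign_flipAt_of_le _ (by simp [Fin.le_def]),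
    koszulSign_succ, h.1, Fin.val_one, pow_one, neg_one_mul, neg_mul, koszulSign_mul_self,
    neg_one_mul]

theorem Hop_add_smul_one {k : ℕ} (hk : k + 1 < n) : Hop n k hk + q • 1 = hopping n k := by
  refine LinearMap.ext fun f => funext fun γ => ?_
  rw [hopping_eq hk]
  simp only [sub_mul, mul_sub, smul_mul_assoc, mul_smul_comm, LinearMap.sub_apply,
    LinearMap.add_apply, LinearMap.smul_apply, Module.End.mul_apply, Module.End.one_apply,
    Pi.add_apply, Pi.sub_apply, Pi.smul_apply, smul_eq_mul, mode_mode_self_apply,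
    mode_mode_succ_apply hk, mode_succ_mode_apply hk]
  change (if _ then _ else if _ then _ else if _ then _ else _) + _ = _
  rcases Fin.exists_fin_two.mp ⟨γ ⟨k, by omega⟩, rfl⟩ with h | h <;>
    rcases Fin.exists_fin_two.mp ⟨γ ⟨k + 1, hk⟩, rfl⟩ with h' | h' <;>
    simp only [h, h', Fin.isValue, zero_ne_one, one_ne_zero, and_self, and_true, and_false,
      ↓reduceIte, ne_eq, not_false_eq_true, mul_zero, mul_neg, sub_zero, sub_neg_eq_add, zero_sub,
      zero_add, mul_inv_cancel_left₀ q_ne_zero] <;>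
    ring

end HeckeOperators

section FiniteFamilies

variable {F A : Type*} [Field F] [Ring A] [Algebra F A] {m : ℕ}

theorem extend_val_of_lt (C : Fin m → A) {k : ℕ} (hk : k < m) :
    Function.extend Fin.val C 0 k = C ⟨k, hk⟩ :=
  Fin.val_injective.extend_apply C 0 ⟨k, hk⟩

theorem image_extend_val_Iio (C : Fin m → A) :
    Function.extend Fin.val C 0 '' Set.Iio m = Set.range C := by
  ext a
  constructor
  · rintro ⟨k, hk, rfl⟩
    exact ⟨⟨k, hk⟩, (extend_val_of_lt C hk).symm⟩
  · rintro ⟨i, rfl⟩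
    exact ⟨i, i.isLt, extend_val_of_lt C i.isLt⟩

theorem adjoin_range_map_ι_eq_top {ι : Type*} {π : FreeAlgebra F ι →ₐ[F] A}
    (hπ : Function.Surjective π) :
    Algebra.adjoin F (Set.range fun i => π (FreeAlgebra.ι F i)) = ⊤ := by
  rw [Set.range_comp' π (FreeAlgebra.ι F), ← AlgHom.map_adjoin, FreeAlgebra.adjoin_range_ι,
    Algebra.map_top, AlgHom.range_eq_top]
  exact hπ

theorem stlRelations_extend_val {δ : F} {C : Fin m → A} (sq : ∀ i, C i * C i = δ • C i)
    (comm : ∀ i j : Fin m, (i : ℕ) + 1 < j → Commute (C i) (C j))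
    (braid : ∀ i j : Fin m, (j : ℕ) = i + 1 → C i * C j * C i - C i = C j * C i * C j - C j)
    (quintic : ∀ a b c : Fin m, (b : ℕ) = a + 1 → (c : ℕ) = a + 2 →
      C a * C c * C b * (δ • 1 - C a) * (δ • 1 - C c) = 0)
    (quintic' : ∀ a b c : Fin m, (b : ℕ) = a + 1 → (c : ℕ) = a + 2 →
      (δ • 1 - C a) * (δ • 1 - C c) * C b * C a * C c = 0) :
    STLRelations δ m (Function.extend Fin.val C 0) where
  sq k hk := by
    rw [extend_val_of_lt C hk]
    exact sq _
  comm i j hij hj := by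
    rw [extend_val_of_lt C hj, extend_val_of_lt C (show i < m by omega)]
    exact comm _ _ hij
  braid k hk := by
    rw [extend_val_of_lt C hk, extend_val_of_lt C (show k < m by omega)]
    exact braid _ _ rfl
  quintic k hk := by
    rw [extend_val_of_lt C hk, extend_val_of_lt C (show k + 1 < m by omega),
      extend_val_of_lt C (show k < m by omega)]
    exact quintic _ _ _ rfl rfl
  quintic' k hk := by
    rw [extend_val_of_lt C hk, extend_val_of_lt C (show k + 1 < m by omega),
      extend_val_of_lt C (show k < m by omega)]
    exact quintic' _ _ _ rfl rfl

end FiniteFamilies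

section SuperTemperleyLieb

variable {n : ℕ} {A : Type*} [Ring A] [Algebra K A] {C : ℕ → A}

theorem stlRelations_hopping : STLRelations (q + q⁻¹) (n - 1) (hopping n) :=
  isCAR_field.stlRelations isTypeAPairing_creationVec

theorem isPrimitiveFamily_hopping :
    IsPrimitiveFamily (fun j => occ lowerCoeff upperCoeff (hopping n) (j + 1)) (Fop one' n)
      (Kop one' n 1 0) q (n - 1)
      (fockVec (field n 0) (dualLeft lowerCoeff (creationVec n)) (eb fun _ => 1)) := by
  rw [Fop_eq_field]
  refine isPrimitiveFamily_fockVec isCAR_field isTypeAPairing_creationVec seminormalCoeffs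
    field_one_eb_one (eb_ne_zero _) (fun _ => creationVec_dotProduct_lowerVec) (fun x => ?_)
    Kop_eb_one
  simpa using Kop_mul_field 1 0 0 x

theorem hopping_mem_EndUq {k : ℕ} (hk : k < n - 1) : hopping n k ∈ EndUq n := by
  rw [EndUq, Subalgebra.mem_centralizer_iff]
  rintro X ((rfl | rfl) | ⟨c, d, rfl⟩)
  · rw [Eop_eq_field]
    exact (isCAR_field.commute_left _ (raiseVec_dotProduct_annihilationVec hk)).symm
  · rw [Fop_eq_field]
    exact (isCAR_field.commute_right _ (creationVec_dotProduct_lowerVec hk)).symm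
  · exact (commute_Kop c d _ _).symm

theorem injective_of_apply_eq_hopping (hC : STLRelations (q + q⁻¹) (n - 1) C)
    (hgen : Algebra.adjoin K (C '' Set.Iio (n - 1)) = ⊤) {ρ : A →ₐ[K] Module.End K (V n)}
    (hρ : ∀ k < n - 1, ρ (C k) = hopping n k) : Function.Injective ρ := by
  refine hC.injective_of_map_occIdem_ne_zero seminormalCoeffs hgen ρ fun r hr => ?_
  rw [map_occIdem ρ hρ]
  exact isPrimitiveFamily_hopping.weightIdem_ne_zero hr

theorem algHom_mem_EndUq (hgen : Algebra.adjoin K (C '' Set.Iio (n - 1)) = ⊤)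
    {ρ : A →ₐ[K] Module.End K (V n)} (hρ : ∀ k < n - 1, ρ (C k) = hopping n k) (a : A) :
    ρ a ∈ EndUq n := by
  have hle : Algebra.adjoin K (C '' Set.Iio (n - 1)) ≤ (EndUq n).comap ρ := by
    refine Algebra.adjoin_le ?_
    rintro _ ⟨k, hk, rfl⟩
    rw [SetLike.mem_coe, Subalgebra.mem_comap, hρ k hk]
    exact hopping_mem_EndUq hk
  exact hle (hgen ▸ Algebra.mem_top)

theorem mem_range_of_mem_EndUq (hC : STLRelations (q + q⁻¹) (n - 1) C)
    (hgen : Algebra.adjoin K (C '' Set.Iio (n - 1)) = ⊤) {ρ : A →ₐ[K] Module.End K (V n)}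
    (hρ : ∀ k < n - 1, ρ (C k) = hopping n k) {X : Module.End K (V n)} (hX : X ∈ EndUq n) :
    X ∈ ρ.range := by
  have hcomm {Y : Module.End K (V n)} (hY : Y ∈ EndUq n) :
      Commute Y (Eop one' n) ∧ Commute Y (Fop one' n) ∧ Commute Y (Kop one' n 1 0) := by
    rw [EndUq, Subalgebra.mem_centralizer_iff] at hY
    exact ⟨(hY _ (Or.inl (Or.inl rfl))).symm, (hY _ (Or.inl (Or.inr rfl))).symm,
      (hY _ (Or.inr ⟨1, 0, rfl⟩)).symm⟩
  rcases n with _ | m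
  · have hdim : Module.finrank K (Module.End K (V 0)) = 1 := by
      rw [Module.finrank_linearMap, Module.finrank_fintype_fun_eq_card, Fintype.card_unique]
    obtain ⟨c, rfl⟩ := (Module.Free.bijective_algebraMap_of_finrank_eq_one hdim).2 X
    exact Subalgebra.algebraMap_mem _ c
  · have hmem := algHom_mem_EndUq hgen hρ
    obtain ⟨hXe, hXf, hXk⟩ := hcomm hX
    have hff : Fop one' (m + 1) * Fop one' (m + 1) = 0 := by
      rw [Fop_eq_field, isCAR_field.sq']
    refine isPrimitiveFamily_hopping.mem_range_of_commute hC seminormalCoeffs hρ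
      (fun a => (hcomm (hmem a)).2.1) q_pow_injective hff (qnum_succ_ne_zero m)
      Eop_Fop_anticommutator (fun a => (hcomm (hmem a)).1) (fun a => (hcomm (hmem a)).2.2)
      ?_ hXe hXf hXk
    rw [Module.finrank_fintype_fun_eq_card, Fintype.card_fun, Fintype.card_fin, Fintype.card_fin,
      pow_succ', Nat.add_sub_cancel]

end SuperTemperleyLieb

section STLPresentation

variable {n : ℕ} {A : Type*} [Ring A] [Algebra K A] {C : ℕ → A}

theorem stlRelations_Cgen :
    STLRelations (q + q⁻¹) (n - 1) (Function.extend Fin.val (Cgen n) 0) := by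
  have hrel {x y : FreeAlgebra K (Fin (n - 1))} (h : stlRel n x y) :=
    RingQuot.mkAlgHom_rel K h
  refine stlRelations_extend_val (fun i => ?_) (fun i j hij => ?_) (fun i j hij => ?_)
    (fun a b c hb hc => ?_) (fun a b c hb hc => ?_)
  · simpa only [Cgen, map_mul, map_smul] using hrel (.sq i)
  · simpa only [commute_iff_eq, Cgen, map_mul] using hrel (.comm i j (Or.inl hij))
  · simpa only [Cgen, map_mul, map_sub] using hrel (.braid i j hij)
  · simpa only [Cgen, map_mul, map_sub, map_smul, map_one, map_zero] using hrel (.z1 a b c hb hc)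
  · simpa only [Cgen, map_mul, map_sub, map_smul, map_one, map_zero] using hrel (.z2 a b c hb hc)

theorem adjoin_Cgen :
    Algebra.adjoin K (Function.extend Fin.val (Cgen n) 0 '' Set.Iio (n - 1)) = ⊤ := by
  rw [image_extend_val_Iio]
  exact adjoin_range_map_ι_eq_top (RingQuot.mkAlgHom_surjective K _)

/-- The algebra homomorphism `C_i ↦ C i` from the super Temperley-Lieb algebra, for a family `C`
that satisfies its relations. -/
def stlLift (hC : STLRelations (q + q⁻¹) (n - 1) C) : STL n →ₐ[K] A :=
  RingQuot.liftAlgHom K ⟨FreeAlgebra.lift K fun i : Fin (n - 1) => C i, fun x y hxy => by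
    induction hxy with
    | sq i =>
      simp only [map_mul, map_smul, FreeAlgebra.lift_ι_apply]
      exact hC.sq i i.isLt
    | comm i j h =>
      simp only [map_mul, FreeAlgebra.lift_ι_apply]
      exact h.elim (fun h => hC.comm i j h j.isLt) fun h => (hC.comm j i h i.isLt).symm
    | braid i j h =>
      simp only [map_mul, map_sub, FreeAlgebra.lift_ι_apply, h]
      exact hC.braid i (h ▸ j.isLt)
    | z1 a b c hb hc =>
      simp only [map_mul, map_sub, map_smul, map_one, map_zero, FreeAlgebra.lift_ι_apply, hb, hc]
      exact hC.quintic a (hc ▸ c.isLt)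
    | z2 a b c hb hc =>
      simp only [map_mul, map_sub, map_smul, map_one, map_zero, FreeAlgebra.lift_ι_apply, hb, hc]
      exact hC.quintic' a (hc ▸ c.isLt)⟩

theorem stlLift_Cgen (hC : STLRelations (q + q⁻¹) (n - 1) C) (i : Fin (n - 1)) :
    stlLift hC (Cgen n i) = C i := by
  rw [stlLift, Cgen, RingQuot.liftAlgHom_mkAlgHom_apply, FreeAlgebra.lift_ι_apply]

theorem exists_algEquiv_EndUq :
    ∃ e : STL n ≃ₐ[K] EndUq n, ∀ i, (e (Cgen n i) : Module.End K (V n)) = hopping n i := by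
  let ρ : STL n →ₐ[K] Module.End K (V n) := stlLift stlRelations_hopping
  have hρ : ∀ k < n - 1, ρ (Function.extend Fin.val (Cgen n) 0 k) = hopping n k := fun k hk => by
    rw [extend_val_of_lt _ hk]
    exact stlLift_Cgen stlRelations_hopping _
  refine ⟨AlgEquiv.ofBijective (ρ.codRestrict (EndUq n) (algHom_mem_EndUq adjoin_Cgen hρ))
    ⟨?_, ?_⟩, stlLift_Cgen stlRelations_hopping⟩
  · exact (AlgHom.injective_codRestrict ..).mpr
      (injective_of_apply_eq_hopping stlRelations_Cgen adjoin_Cgen hρ)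
  · rintro ⟨X, hX⟩
    obtain ⟨x, hx⟩ := mem_range_of_mem_EndUq stlRelations_Cgen adjoin_Cgen hρ hX
    exact ⟨x, Subtype.ext hx⟩

end STLPresentation

section TwoSidedSpan

variable {R : Type*} [Ring R] {s : Set R}

/-- The two-sided ideal generated by `s`, as a left ideal. -/
def twoSidedSpan (s : Set R) : Ideal R :=
  Ideal.span {y | ∃ u v g : R, g ∈ s ∧ y = u * g * v}

theorem subset_twoSidedSpan : s ⊆ twoSidedSpan s := fun g hg =>
  Ideal.subset_span ⟨1, 1, g, hg, by rw [one_mul, mul_one]⟩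

instance isTwoSided_twoSidedSpan : (twoSidedSpan s).IsTwoSided := ⟨fun {a} b ha => by
  refine Submodule.span_induction (p := fun x _ => x * b ∈ twoSidedSpan s) ?_ ?_ ?_ ?_ ha
  · rintro x ⟨u, v, g, hg, rfl⟩
    exact Ideal.subset_span ⟨u, v * b, g, hg, mul_assoc _ v b⟩
  · exact (zero_mul b).symm ▸ Ideal.zero_mem _
  · exact fun x y _ _ hx hy => (add_mul x y b).symm ▸ Ideal.add_mem _ hx hy
  · exact fun c x _ hx => (mul_assoc c x b).symm ▸ Ideal.mul_mem_left _ c hx⟩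

theorem twoSidedSpan_le_ker {S : Type*} [Ring S] {f : R →+* S} (hf : ∀ g ∈ s, f g = 0) :
    twoSidedSpan s ≤ RingHom.ker f := by
  refine Ideal.span_le.mpr ?_
  rintro _ ⟨u, v, g, hg, rfl⟩
  rw [SetLike.mem_coe, RingHom.mem_ker, map_mul, map_mul, hf g hg, mul_zero, zero_mul]

end TwoSidedSpan

section HeckeQuadratic

variable {F A : Type*} [Field F] [Ring A] [Algebra F A] {p : F} {H H' : A}

theorem add_smul_one_mul_self (hp : p ≠ 0) (h : H * H = (p⁻¹ - p) • H + 1) :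
    (H + p • 1) * (H + p • 1) = (p + p⁻¹) • (H + p • 1) := by
  have hp' : (p + p⁻¹) * p = p * p + 1 := by rw [add_mul, inv_mul_cancel₀ hp]
  simp only [mul_add, add_mul, h, smul_mul_assoc, mul_smul_comm, one_mul, mul_one, smul_add,
    smul_smul, hp']
  module

theorem add_smul_one_braid (hp : p ≠ 0) (h : H * H = (p⁻¹ - p) • H + 1)
    (h' : H' * H' = (p⁻¹ - p) • H' + 1) (hb : H * H' * H = H' * H * H') :
    (H + p • 1) * (H' + p • 1) * (H + p • 1) - (H + p • 1) =
      (H' + p • 1) * (H + p • 1) * (H' + p • 1) - (H' + p • 1) := by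
  have hp' : p * (p⁻¹ - p) = 1 - p * p := by rw [mul_sub, mul_inv_cancel₀ hp]
  rw [mul_assoc, mul_assoc] at hb
  simp only [mul_add, add_mul, h, h', hb, smul_mul_assoc, mul_smul_comm, one_mul, mul_one,
    smul_add, smul_smul, hp', mul_assoc]
  module

end HeckeQuadratic

section Hecke

variable {n : ℕ}

theorem Hgen_mul_self (i : Fin (n - 1)) :
    Hgen n i * Hgen n i = (q⁻¹ - q) • Hgen n i + 1 := by
  simpa only [Hgen, map_mul, map_add, map_smul, map_one] using
    RingQuot.mkAlgHom_rel K (heckeRel.quad (n := n) i)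

theorem Hgen_commute {i j : Fin (n - 1)} (h : (i : ℕ) + 1 < j) :
    Commute (Hgen n i) (Hgen n j) := by
  simpa only [commute_iff_eq, Hgen, map_mul] using
    RingQuot.mkAlgHom_rel K (heckeRel.comm (n := n) i j (Or.inl h))

theorem Hgen_braid {i j : Fin (n - 1)} (h : (j : ℕ) = i + 1) :
    Hgen n i * Hgen n j * Hgen n i = Hgen n j * Hgen n i * Hgen n j := by
  simpa only [Hgen, map_mul] using RingQuot.mkAlgHom_rel K (heckeRel.braid (n := n) i j h)

theorem CH_commute {i j : Fin (n - 1)} (h : (i : ℕ) + 1 < j) : Commute (CH n i) (CH n j) := by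
  have hscalar (x : HeckeAlg n) : Commute (q • (1 : HeckeAlg n)) x :=
    (Commute.one_left x).smul_left q
  exact ((Hgen_commute h).add_right (hscalar _).symm).add_left (hscalar _)

/-- The elements of the Hecke algebra that are set to zero in the super Temperley-Lieb algebra. -/
def heckeQuintics (n : ℕ) : Set (HeckeAlg n) :=
  {g | ∃ a b c : Fin (n - 1), (b : ℕ) = (a : ℕ) + 1 ∧ (c : ℕ) = (a : ℕ) + 2 ∧
    (g = CH n a * CH n c * CH n b * ((q + q⁻¹) • 1 - CH n a) * ((q + q⁻¹) • 1 - CH n c) ∨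
      g = ((q + q⁻¹) • 1 - CH n a) * ((q + q⁻¹) • 1 - CH n c) * CH n b * CH n a * CH n c)}

theorem stlRelations_map_CH {A : Type*} [Ring A] [Algebra K A] {π : HeckeAlg n →ₐ[K] A}
    (hπ : ∀ g ∈ heckeQuintics n, π g = 0) :
    STLRelations (q + q⁻¹) (n - 1) (Function.extend Fin.val (fun i => π (CH n i)) 0) := by
  refine stlRelations_extend_val (fun i => ?_) (fun i j hij => (CH_commute hij).map π)
    (fun i j hij => ?_) (fun a b c hb hc => ?_) (fun a b c hb hc => ?_)
  · simpa only [CH, map_mul, map_smul] using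
      congrArg π (add_smul_one_mul_self q_ne_zero (Hgen_mul_self i))
  · simpa only [CH, map_mul, map_sub] using congrArg π
      (add_smul_one_braid q_ne_zero (Hgen_mul_self i) (Hgen_mul_self j) (Hgen_braid hij))
  · simpa only [map_mul, map_sub, map_smul, map_one] using
      hπ _ ⟨a, b, c, hb, hc, Or.inl rfl⟩
  · simpa only [map_mul, map_sub, map_smul, map_one] using
      hπ _ ⟨a, b, c, hb, hc, Or.inr rfl⟩

theorem adjoin_map_CH {A : Type*} [Ring A] [Algebra K A] {π : HeckeAlg n →ₐ[K] A}
    (hπ : Function.Surjective π) :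
    Algebra.adjoin K (Function.extend Fin.val (fun i => π (CH n i)) 0 '' Set.Iio (n - 1)) = ⊤ := by
  rw [image_extend_val_Iio, eq_top_iff, ← adjoin_range_map_ι_eq_top
    (π := π.comp (RingQuot.mkAlgHom K (heckeRel n)))
    (hπ.comp (RingQuot.mkAlgHom_surjective K _))]
  refine Algebra.adjoin_le ?_
  rintro _ ⟨i, rfl⟩
  have hH : π (Hgen n i) = π (CH n i) - q • 1 := by
    rw [CH, map_add, map_smul, map_one, add_sub_cancel_right]
  change π (Hgen n i) ∈ _
  rw [hH]
  exact Subalgebra.sub_mem _ (Algebra.subset_adjoin ⟨i, rfl⟩)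
    (Subalgebra.smul_mem _ (Subalgebra.one_mem _) q)

theorem apply_eq_zero_of_mem_heckeQuintics {ρ : HeckeAlg n →ₐ[K] Module.End K (V n)}
    (hρ : ∀ i, ρ (CH n i) = hopping n i) {g : HeckeAlg n} (hg : g ∈ heckeQuintics n) :
    ρ g = 0 := by
  obtain ⟨a, b, c, hb, hc, rfl | rfl⟩ := hg
  · simp only [map_mul, map_sub, map_smul, map_one, hρ, hb, hc]
    exact stlRelations_hopping.quintic a (hc ▸ c.isLt)
  · simp only [map_mul, map_sub, map_smul, map_one, hρ, hb, hc]
    exact stlRelations_hopping.quintic' a (hc ▸ c.isLt)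

theorem ker_eq_twoSidedSpan_heckeQuintics {ρ : HeckeAlg n →ₐ[K] Module.End K (V n)}
    (hρ : ∀ i, ρ (CH n i) = hopping n i) :
    RingHom.ker ρ.toRingHom = twoSidedSpan (heckeQuintics n) := by
  have hle : twoSidedSpan (heckeQuintics n) ≤ RingHom.ker ρ.toRingHom :=
    twoSidedSpan_le_ker fun g hg => apply_eq_zero_of_mem_heckeQuintics hρ hg
  let π := Ideal.Quotient.mkₐ K (twoSidedSpan (heckeQuintics n))
  have hπ : ∀ g ∈ heckeQuintics n, π g = 0 := fun g hg =>
    Ideal.Quotient.eq_zero_iff_mem.mpr (subset_twoSidedSpan hg)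
  refine (Ideal.injective_lift_iff hle).mp ?_
  refine injective_of_apply_eq_hopping (stlRelations_map_CH hπ)
    (adjoin_map_CH (Ideal.Quotient.mkₐ_surjective K _))
    (ρ := Ideal.Quotient.liftₐ _ ρ hle) fun k hk => ?_
  rw [extend_val_of_lt _ hk]
  exact hρ _

end Hecke

end SuperTL

theorem statement8 (n : ℕ) :
    -- the assignment C_i ↦ Ȟ_i + q·id defines an isomorphism STL_n ≅ End_{U_q}(V^{⊗n})
    (∃ e : STL n ≃ₐ[K] EndUq n,
      ∀ i : Fin (n - 1),
        (e (Cgen n i) : Module.End K (V n))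
          = Hop n (i : ℕ) (by have := i.isLt; omega) + q • 1) ∧
    -- the kernel of H_n → End_{U_q}(V^{⊗n}), H_i ↦ Ȟ_i, is the two-sided ideal
    -- generated by the listed elements
    (∀ ρ : HeckeAlg n →ₐ[K] Module.End K (V n),
      (∀ i : Fin (n - 1),
        ρ (Hgen n i) = Hop n (i : ℕ) (by have := i.isLt; omega)) →
      RingHom.ker ρ.toRingHom =
        Ideal.span {y : HeckeAlg n | ∃ u v g : HeckeAlg n,
          (∃ a b c : Fin (n - 1), (b : ℕ) = (a : ℕ) + 1 ∧ (c : ℕ) = (a : ℕ) + 2 ∧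
            (g = CH n a * CH n c * CH n b
                  * ((q + q⁻¹) • 1 - CH n a) * ((q + q⁻¹) • 1 - CH n c) ∨
             g = ((q + q⁻¹) • 1 - CH n a) * ((q + q⁻¹) • 1 - CH n c)
                  * CH n b * CH n a * CH n c)) ∧
          y = u * g * v}) := by
  constructor
  · obtain ⟨e, he⟩ := SuperTL.exists_algEquiv_EndUq (n := n)
    refine ⟨e, fun i => ?_⟩
    rw [he, SuperTL.Hop_add_smul_one]
  · intro ρ hρ
    refine SuperTL.ker_eq_twoSidedSpan_heckeQuintics fun i => ?_
    rw [CH, map_add, map_smul, map_one, hρ, SuperTL.Hop_add_smul_one]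
end
end

section
/- Let 0 ≤ k ≤ n, let W_q = <s_1,...,s_{k-1}> and W_p = <s_{k+1},...,s_{n-1}> as parabolic subgroups of S_n, and let (V^{⊗n})_k be the ℂ(q)-span of the standard basis vectors v_η (η ∈ {0,1}^n) with exactly k entries of η equal to 0. Then the map Ψ : M^p_q → (V^{⊗n})_k sending N_w to v_{η_min·w}, where η_min = (0,...,0,1,...,1) (k zeros followed by n-k ones) and S_n acts on {0,1}^n from the right by permuting entries, is an isomorphism of right H_n-modules, where H_n acts on V^{⊗n} by H_i ↦ Ȟ_i. -/
open scoped Classical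

set_option maxHeartbeats 1000000
set_option synthInstance.maxHeartbeats 200000

noncomputable section

def s (n : ℕ) (i : Fin (n - 1)) : Equiv.Perm (Fin n) :=
  Equiv.swap ⟨(i : ℕ), by have := i.isLt; omega⟩ ⟨(i : ℕ) + 1, by have := i.isLt; omega⟩

def wordProd (n : ℕ) (l : List (Fin (n - 1))) : Equiv.Perm (Fin n) :=
  (l.map (s n)).prod

def len (n : ℕ) (w : Equiv.Perm (Fin n)) : ℕ :=
  sInf {k | ∃ l : List (Fin (n - 1)), l.length = k ∧ wordProd n l = w}

def bruhatLE (n : ℕ) (u w : Equiv.Perm (Fin n)) : Prop :=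
  ∃ l : List (Fin (n - 1)), l.length = len n w ∧ wordProd n l = w ∧
    ∃ t : List (Fin (n - 1)), t.Sublist l ∧ wordProd n t = u

def bruhatLT (n : ℕ) (u w : Equiv.Perm (Fin n)) : Prop :=
  bruhatLE n u w ∧ u ≠ w

/-- The parabolic subgroup of `S_n` generated by the simple transpositions indexed by `P`. -/
def parab (n : ℕ) (P : Finset (Fin (n - 1))) : Subgroup (Equiv.Perm (Fin n)) :=
  Subgroup.closure {σ | ∃ i ∈ P, σ = s n i}

/-- `w` is a shortest coset representative for `W_P \ S_n`. -/
def IsShort (n : ℕ) (P : Finset (Fin (n - 1))) (w : Equiv.Perm (Fin n)) : Prop :=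
  ∀ x ∈ parab n P, len n w ≤ len n (x * w)

/-- The indices of the simple reflections generating `W_q = ⟨s_1,…,s_{k-1}⟩` (0-based). -/
def Qset (n k : ℕ) : Finset (Fin (n - 1)) :=
  Finset.univ.filter (fun i => (i : ℕ) + 1 < k)

/-- The indices of the simple reflections generating `W_p = ⟨s_{k+1},…,s_{n-1}⟩` (0-based). -/
def Pset (n k : ℕ) : Finset (Fin (n - 1)) :=
  Finset.univ.filter (fun i => k ≤ (i : ℕ))

/-- The minimal `{0,1}`-sequence `η_min = (0,…,0,1,…,1)` with `k` zeros. -/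
def etaMin (n k : ℕ) : Fin n → Fin 2 := fun i => if (i : ℕ) < k then 0 else 1

/-- The weight space `(V^{⊗n})_k`: the span of the standard basis vectors `v_η` with
exactly `k` entries of `η` equal to `0`. -/
noncomputable def weightSpace (n k : ℕ) : Submodule K (V n) :=
  Submodule.span K (eb '' {η : Fin n → Fin 2 | (Finset.univ.filter (fun i => η i = 0)).card = k})

/-!
Write `η = η_min`. The minimal length coset representatives `w` are exactly the permutations whose
inverse is increasing on the level sets of `η`, equivalently those whose inverse is the stable sort
of `η ∘ w`; so `w ↦ η ∘ w` is a bijection onto the sequences with `k` zeros, and `Ψ` carries a basis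
to a basis.

For equivariance let `w` be such a representative and compare the entries `i`, `i + 1` of `η ∘ w`.
If they differ, then `w s_i` is again a representative and `N_w H_i` is given by the multiplication
rule of the Hecke algebra. If they agree, then `w i` and `w (i + 1)` are adjacent, so
`w s_i = s_j w` with `s_j` in the parabolic subgroup, and `H_i` acts on `N_w` by the scalar by which
`H_j` acts on the inducing module. These are the cases in the definition of `Ȟ`.
-/

section SimpleTranspositions

variable {n : ℕ}

lemma val_add_one_lt (i : Fin (n - 1)) : (i : ℕ) + 1 < n := by
  omega

/-- The smaller of the two points exchanged by the simple transposition `s n i`. -/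
def lower (i : Fin (n - 1)) : Fin n := ⟨i, by omega⟩

/-- The larger of the two points exchanged by the simple transposition `s n i`. -/
def upper (i : Fin (n - 1)) : Fin n := ⟨i + 1, val_add_one_lt i⟩

lemma lower_covBy_upper (i : Fin (n - 1)) : lower i ⋖ upper i := by
  simp [lower, upper]

lemma lower_lt_upper (i : Fin (n - 1)) : lower i < upper i :=
  (lower_covBy_upper i).lt

lemma exists_lower_upper_of_covBy {a b : Fin n} (h : a ⋖ b) :
    ∃ i : Fin (n - 1), lower i = a ∧ upper i = b := by
  have hab : (a : ℕ) + 1 = b := by simpa using h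
  exact ⟨⟨a, by omega⟩, rfl, Fin.ext hab⟩

lemma s_eq_swap (i : Fin (n - 1)) : s n i = Equiv.swap (lower i) (upper i) := rfl

@[simp] lemma s_lower (i : Fin (n - 1)) : s n i (lower i) = upper i :=
  Equiv.swap_apply_left _ _

@[simp] lemma s_upper (i : Fin (n - 1)) : s n i (upper i) = lower i :=
  Equiv.swap_apply_right _ _

@[simp] lemma s_apply_s (i : Fin (n - 1)) (a : Fin n) : s n i (s n i a) = a :=
  Equiv.swap_apply_self _ _ a

@[simp] lemma s_mul_s (i : Fin (n - 1)) : s n i * s n i = 1 :=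
  Equiv.swap_mul_self _ _

@[simp] lemma s_inv (i : Fin (n - 1)) : (s n i)⁻¹ = s n i :=
  Equiv.swap_inv _ _

@[simp] lemma mul_s_mul_s (w : Equiv.Perm (Fin n)) (i : Fin (n - 1)) :
    w * s n i * s n i = w := by
  rw [mul_assoc, s_mul_s, mul_one]

lemma s_lt_s {i : Fin (n - 1)} {a b : Fin n} (hne : ¬(a = lower i ∧ b = upper i)) (hab : a < b) :
    s n i a < s n i b := by
  rw [s_eq_swap, Equiv.swap_apply_def, Equiv.swap_apply_def]
  simp only [lower, upper, Fin.lt_def, Fin.ext_iff] at *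
  grind

lemma apply_lower_ne_apply_upper (w : Equiv.Perm (Fin n)) (i : Fin (n - 1)) :
    w (lower i) ≠ w (upper i) :=
  w.injective.ne (lower_lt_upper i).ne

lemma comp_s_eq_self {ι : Type*} {η : Fin n → ι} {i : Fin (n - 1)}
    (h : η (lower i) = η (upper i)) : η ∘ s n i = η := by
  funext a
  rw [Function.comp_apply, s_eq_swap, Equiv.swap_apply_def]
  split_ifs with hl hu
  · rw [hl, h]
  · rw [hu, h]
  · rfl

lemma wordProd_append_singleton (l : List (Fin (n - 1))) (i : Fin (n - 1)) :
    wordProd n (l ++ [i]) = wordProd n l * s n i := by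
  simp [wordProd]

lemma exists_descent {w : Equiv.Perm (Fin n)} (hw : w ≠ 1) :
    ∃ i : Fin (n - 1), w (upper i) < w (lower i) := by
  contrapose! hw
  refine (Equiv.Perm.monotone_iff w).1 (monotone_of_le_succ fun a ha => ?_)
  obtain ⟨i, rfl, hi⟩ := exists_lower_upper_of_covBy (Order.covBy_succ_of_not_isMax ha)
  exact hi ▸ hw i

end SimpleTranspositions

section Length

variable {n : ℕ}

/-- The inversions of `w`, as pairs of positions. Their number is the Coxeter length `len n w`. -/
def inversions (w : Equiv.Perm (Fin n)) : Finset (Fin n × Fin n) :=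
  {p | p.1 < p.2 ∧ w p.2 < w p.1}

@[simp] lemma mem_inversions {w : Equiv.Perm (Fin n)} {a b : Fin n} :
    (a, b) ∈ inversions w ↔ a < b ∧ w b < w a := by
  simp [inversions]

@[simp] lemma inversions_one : inversions (1 : Equiv.Perm (Fin n)) = ∅ := by
  ext ⟨a, b⟩
  simpa using le_of_lt

lemma inversions_mul_s {w : Equiv.Perm (Fin n)} {i : Fin (n - 1)}
    (h : w (lower i) < w (upper i)) :
    inversions (w * s n i) = insert (lower i, upper i)
      ((inversions w).map ((s n i).prodCongr (s n i)).toEmbedding) := by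
  ext ⟨a, b⟩
  have hsymm : ((s n i).prodCongr (s n i)).symm (a, b) = (s n i a, s n i b) := rfl
  rw [Finset.mem_insert, Finset.mem_map_equiv, hsymm, mem_inversions, mem_inversions, Prod.mk.injEq]
  simp only [Equiv.Perm.mul_apply]
  by_cases hab : a = lower i ∧ b = upper i
  · obtain ⟨rfl, rfl⟩ := hab
    simp [h, lower_lt_upper]
  have hlt : w (s n i b) < w (s n i a) → (a < b ↔ s n i a < s n i b) := fun hw =>
    ⟨s_lt_s hab, fun hs => by
      have := s_lt_s (i := i) (a := s n i a) (b := s n i b)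
        (by rintro ⟨ha, hb⟩; exact (ha ▸ hb ▸ hw).not_gt h) hs
      simpa using this⟩
  simp only [hab, false_or]
  exact and_congr_left hlt

lemma card_inversions_mul_s_of_lt {w : Equiv.Perm (Fin n)} {i : Fin (n - 1)}
    (h : w (lower i) < w (upper i)) :
    (inversions (w * s n i)).card = (inversions w).card + 1 := by
  rw [inversions_mul_s h, Finset.card_insert_of_notMem, Finset.card_map]
  rw [Finset.mem_map_equiv]
  change (s n i (lower i), s n i (upper i)) ∉ inversions w
  simp [(lower_lt_upper i).le]

lemma card_inversions_mul_s_of_gt {w : Equiv.Perm (Fin n)} {i : Fin (n - 1)}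
    (h : w (upper i) < w (lower i)) :
    (inversions w).card = (inversions (w * s n i)).card + 1 := by
  simpa using card_inversions_mul_s_of_lt (w := w * s n i) (i := i) (by simpa using h)

lemma card_inversions_wordProd_le (l : List (Fin (n - 1))) :
    (inversions (wordProd n l)).card ≤ l.length := by
  induction l using List.reverseRecOn with
  | nil => simp [wordProd]
  | append_singleton l i ih =>
    rw [wordProd_append_singleton, List.length_append, List.length_singleton]
    rcases lt_or_gt_of_ne (apply_lower_ne_apply_upper (wordProd n l) i) with h | h
    · have := card_inversions_mul_s_of_lt h
      omega
    · have := card_inversions_mul_s_of_gt h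
      omega

lemma exists_wordProd_length_eq_card_inversions (w : Equiv.Perm (Fin n)) :
    ∃ l : List (Fin (n - 1)), l.length = (inversions w).card ∧ wordProd n l = w := by
  induction hm : (inversions w).card generalizing w with
  | zero =>
    refine ⟨[], rfl, ?_⟩
    by_contra hne
    obtain ⟨i, hi⟩ := exists_descent (Ne.symm hne)
    have := card_inversions_mul_s_of_gt hi
    omega
  | succ m ih =>
    have hne : w ≠ 1 := by
      rintro rfl
      simp at hm
    obtain ⟨i, hi⟩ := exists_descent hne
    have := card_inversions_mul_s_of_gt hi
    obtain ⟨l, hl, hlw⟩ := ih (w * s n i) (by omega)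
    exact ⟨l ++ [i], by simp [hl], by rw [wordProd_append_singleton, hlw, mul_s_mul_s]⟩

lemma len_wordProd_le (l : List (Fin (n - 1))) : len n (wordProd n l) ≤ l.length :=
  Nat.sInf_le ⟨l, rfl, rfl⟩

lemma exists_reduced_word (w : Equiv.Perm (Fin n)) :
    ∃ l : List (Fin (n - 1)), l.length = len n w ∧ wordProd n l = w :=
  have ⟨l, _, hl⟩ := exists_wordProd_length_eq_card_inversions w
  Nat.sInf_mem (s := {k | ∃ l : List (Fin (n - 1)), l.length = k ∧ wordProd n l = w})
    ⟨_, l, rfl, hl⟩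

lemma len_eq_card_inversions (w : Equiv.Perm (Fin n)) : len n w = (inversions w).card := by
  apply le_antisymm
  · obtain ⟨l, hl, rfl⟩ := exists_wordProd_length_eq_card_inversions w
    exact hl ▸ len_wordProd_le l
  · obtain ⟨l, hl, rfl⟩ := exists_reduced_word w
    exact hl ▸ card_inversions_wordProd_le l

lemma len_mul_s_of_lt {w : Equiv.Perm (Fin n)} {i : Fin (n - 1)}
    (h : w (lower i) < w (upper i)) : len n (w * s n i) = len n w + 1 := by
  rw [len_eq_card_inversions, len_eq_card_inversions, card_inversions_mul_s_of_lt h]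

lemma len_mul_s_of_gt {w : Equiv.Perm (Fin n)} {i : Fin (n - 1)}
    (h : w (upper i) < w (lower i)) : len n w = len n (w * s n i) + 1 := by
  rw [len_eq_card_inversions, len_eq_card_inversions, card_inversions_mul_s_of_gt h]

lemma len_mul_s_le (w : Equiv.Perm (Fin n)) (i : Fin (n - 1)) :
    len n (w * s n i) ≤ len n w + 1 := by
  rcases lt_or_gt_of_ne (apply_lower_ne_apply_upper w i) with h | h
  · exact (len_mul_s_of_lt h).le
  · have := len_mul_s_of_gt h
    omega

lemma len_inv (w : Equiv.Perm (Fin n)) : len n w⁻¹ = len n w := by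
  rw [len_eq_card_inversions, len_eq_card_inversions]
  refine Finset.card_bij' (fun p _ => (w⁻¹ p.2, w⁻¹ p.1)) (fun p _ => (w p.2, w p.1)) ?_ ?_ ?_ ?_
  all_goals simp +contextual [inversions]

end Length

section ShortestCosetRepresentatives

variable {n : ℕ} {ι : Type*} {η : Fin n → ι} {w : Equiv.Perm (Fin n)} {i : Fin (n - 1)}

/-- The simple transpositions `s n i` fixing `η`. For monotone `η` they generate the Young subgroup
stabilising the level sets of `η`. -/
def levelSteps (η : Fin n → ι) : Finset (Fin (n - 1)) :=
  {i | η (lower i) = η (upper i)}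

@[simp] lemma mem_levelSteps : i ∈ levelSteps η ↔ η (lower i) = η (upper i) := by
  simp [levelSteps]

lemma comp_eq_of_mem_parab {x : Equiv.Perm (Fin n)} (hx : x ∈ parab n (levelSteps η)) :
    η ∘ x = η := by
  induction hx using Subgroup.closure_induction with
  | mem x hx =>
    obtain ⟨i, hi, rfl⟩ := hx
    exact comp_s_eq_self (mem_levelSteps.1 hi)
  | one => rfl
  | mul x y _ _ hx hy => rw [Equiv.Perm.coe_mul, ← Function.comp_assoc, hx, hy]
  | inv x _ hx =>
    nth_rw 1 [← hx]
    rw [Function.comp_assoc, ← Equiv.Perm.coe_mul, mul_inv_cancel, Equiv.Perm.coe_one,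
      Function.comp_id]

variable [LinearOrder ι]

lemma IsShort.strictMonoOn_inv (hη : Monotone η) (hw : IsShort n (levelSteps η) w) (c : ι) :
    StrictMonoOn ⇑w⁻¹ (η ⁻¹' {c}) := by
  refine strictMonoOn_of_lt_succ (Set.ordConnected_singleton.preimage_mono hη)
    fun a ha hac hsc => ?_
  obtain ⟨j, rfl, hj⟩ := exists_lower_upper_of_covBy (Order.covBy_succ_of_not_isMax ha)
  rw [← hj] at hsc ⊢
  by_contra hlt
  have hdesc : w⁻¹ (upper j) < w⁻¹ (lower j) :=
    (not_lt.1 hlt).lt_of_ne (apply_lower_ne_apply_upper w⁻¹ j).symm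
  have hlen : len n (s n j * w) < len n w := by
    rw [← len_inv (s n j * w), ← len_inv w, mul_inv_rev, s_inv, len_mul_s_of_gt hdesc]
    exact Nat.lt_succ_self _
  have hj_mem : s n j ∈ parab n (levelSteps η) :=
    Subgroup.subset_closure ⟨j, mem_levelSteps.2 (hac.trans hsc.symm), rfl⟩
  exact (hw _ hj_mem).not_gt hlen

lemma isShort_of_strictMonoOn_inv (hη : Monotone η)
    (hw : ∀ c, StrictMonoOn ⇑w⁻¹ (η ⁻¹' {c})) : IsShort n (levelSteps η) w := by
  intro x hx
  rw [len_eq_card_inversions, len_eq_card_inversions]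
  refine Finset.card_le_card ?_
  rintro ⟨a, b⟩ hab
  obtain ⟨hlt, hinv⟩ := mem_inversions.1 hab
  have hne : η (w b) ≠ η (w a) := fun h => by
    have hba : b < a := by simpa using hw (η (w a)) h rfl hinv
    exact hba.not_gt hlt
  refine mem_inversions.2 ⟨hlt, hη.reflect_lt ?_⟩
  have hxη : ∀ c, η (x c) = η c := congrFun (comp_eq_of_mem_parab hx)
  simpa only [Equiv.Perm.mul_apply, hxη] using (hη hinv.le).lt_of_ne hne

lemma isShort_iff_inv_eq_sort (hη : Monotone η) :
    IsShort n (levelSteps η) w ↔ w⁻¹ = Tuple.sort (η ∘ w) := by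
  have hcomp : ∀ a, (η ∘ w) (w⁻¹ a) = η a := by simp
  rw [Tuple.eq_sort_iff]
  constructor
  · refine fun hw => ⟨fun a b hab => ?_, fun a b hab h => ?_⟩
    · simpa using hη hab
    · rw [hcomp, hcomp] at h
      exact hw.strictMonoOn_inv hη (η b) h rfl hab
  · rintro ⟨-, hw⟩
    refine isShort_of_strictMonoOn_inv hη fun c a ha b hb hab => hw a b hab ?_
    rw [hcomp, hcomp, ha, hb]

lemma IsShort.eq_of_comp_eq (hη : Monotone η) {w' : Equiv.Perm (Fin n)}
    (hw : IsShort n (levelSteps η) w) (hw' : IsShort n (levelSteps η) w') (h : η ∘ w = η ∘ w') :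
    w = w' := by
  rw [isShort_iff_inv_eq_sort hη] at hw hw'
  rw [← inv_inj, hw, hw', h]

lemma IsShort.apply_lt_apply_iff (hη : Monotone η) (hw : IsShort n (levelSteps η) w) {a b : Fin n}
    (h : η (w a) = η (w b)) : w a < w b ↔ a < b := by
  simpa using ((hw.strictMonoOn_inv hη (η (w b))).lt_iff_lt h rfl).symm

lemma IsShort.mul_s (hη : Monotone η) (hw : IsShort n (levelSteps η) w)
    (hne : η (w (lower i)) ≠ η (w (upper i))) : IsShort n (levelSteps η) (w * s n i) := by
  refine isShort_of_strictMonoOn_inv hη fun c a ha b hb hab => ?_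
  rw [mul_inv_rev, s_inv, Equiv.Perm.mul_apply, Equiv.Perm.mul_apply]
  refine s_lt_s ?_ (hw.strictMonoOn_inv hη c ha hb hab)
  rintro ⟨hl, hu⟩
  have hηab : η a ≠ η b := by simpa [← hl, ← hu] using hne
  exact hηab (ha.trans hb.symm)

lemma IsShort.covBy (hη : Monotone η) (hw : IsShort n (levelSteps η) w)
    (h : η (w (lower i)) = η (w (upper i))) : w (lower i) ⋖ w (upper i) := by
  refine ⟨(hw.apply_lt_apply_iff hη h).2 (lower_lt_upper i), fun c hlc hcu => ?_⟩
  obtain ⟨d, rfl⟩ := w.surjective c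
  have hld : η (w (lower i)) = η (w d) := (hη hlc.le).antisymm (h ▸ hη hcu.le)
  exact (lower_covBy_upper i).2 ((hw.apply_lt_apply_iff hη hld).1 hlc)
    ((hw.apply_lt_apply_iff hη (hld.symm.trans h)).1 hcu)

lemma IsShort.exists_mul_s_eq_s_mul (hη : Monotone η) (hw : IsShort n (levelSteps η) w)
    (h : η (w (lower i)) = η (w (upper i))) :
    ∃ j ∈ levelSteps η, lower j = w (lower i) ∧ w * s n i = s n j * w := by
  obtain ⟨j, hl, hu⟩ := exists_lower_upper_of_covBy (hw.covBy hη h)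
  refine ⟨j, ?_, hl, ?_⟩
  · rw [mem_levelSteps, hl, hu, h]
  · rw [s_eq_swap, s_eq_swap, hl, hu, Equiv.mul_swap_eq_swap_mul]

end ShortestCosetRepresentatives

section HeckeAlgebra

variable {n : ℕ} {R A : Type*} [CommRing R] [Ring A] [Algebra R A] {t : R}
  {H : Equiv.Perm (Fin n) → A}

/-- The relations of the standard basis `H_w` of the Hecke algebra of `S_n`, with quadratic relation
`H_i ^ 2 = t H_i + 1`. -/
structure IsHeckeFamily (t : R) (H : Equiv.Perm (Fin n) → A) : Prop where
  map_one : H 1 = 1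
  map_mul_s_of_len : ∀ (w : Equiv.Perm (Fin n)) (i : Fin (n - 1)),
    len n (w * s n i) = len n w + 1 → H (w * s n i) = H w * H (s n i)
  map_s_mul_map_s : ∀ i : Fin (n - 1), H (s n i) * H (s n i) = t • H (s n i) + 1

namespace IsHeckeFamily

lemma map_mul_s_of_lt (hH : IsHeckeFamily t H) {w : Equiv.Perm (Fin n)} {i : Fin (n - 1)}
    (h : w (lower i) < w (upper i)) : H w * H (s n i) = H (w * s n i) :=
  (hH.map_mul_s_of_len w i (len_mul_s_of_lt h)).symm

lemma map_mul_s_of_gt (hH : IsHeckeFamily t H) {w : Equiv.Perm (Fin n)} {i : Fin (n - 1)}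
    (h : w (upper i) < w (lower i)) : H w * H (s n i) = t • H w + H (w * s n i) := by
  have hw : H w = H (w * s n i) * H (s n i) := by
    simpa using (hH.map_mul_s_of_lt (w := w * s n i) (i := i) (by simpa using h)).symm
  calc H w * H (s n i) = H (w * s n i) * (H (s n i) * H (s n i)) := by rw [hw, mul_assoc]
    _ = t • H w + H (w * s n i) := by
      rw [hH.map_s_mul_map_s, mul_add, mul_one, mul_smul_comm, ← hw]

lemma map_wordProd (hH : IsHeckeFamily t H) {l : List (Fin (n - 1))}
    (hl : len n (wordProd n l) = l.length) :
    H (wordProd n l) = (l.map fun i => H (s n i)).prod := by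
  induction l using List.reverseRecOn with
  | nil => simpa [wordProd] using hH.map_one
  | append_singleton l i ih =>
    rw [wordProd_append_singleton, List.length_append, List.length_singleton] at hl
    have hle := len_wordProd_le l
    have hstep := len_mul_s_le (wordProd n l) i
    rw [wordProd_append_singleton, hH.map_mul_s_of_len _ _ (by omega), ih (by omega),
      List.map_append, List.prod_append, List.map_singleton, List.prod_singleton]

lemma map_s_mul (hH : IsHeckeFamily t H) {w : Equiv.Perm (Fin n)} {j : Fin (n - 1)}
    (h : len n (s n j * w) = len n w + 1) : H (s n j * w) = H (s n j) * H w := by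
  obtain ⟨l, hl, rfl⟩ := exists_reduced_word w
  have hcons : wordProd n (j :: l) = s n j * wordProd n l := by simp [wordProd]
  rw [← hcons, hH.map_wordProd (by rw [hcons, h, ← hl, List.length_cons]), hH.map_wordProd hl.symm,
    List.map_cons, List.prod_cons]

end IsHeckeFamily

variable {ι M : Type*} [AddCommGroup M] [Module R M] {η : Fin n → ι} {χ : ι → R}
  {act : M →ₗ[R] A →ₗ[R] M} {N : Equiv.Perm (Fin n) → M}

/-- The family `N_w = N_1 H_w` of a right module induced from a one-dimensional module of the
parabolic subalgebra of `levelSteps η`: the generators belonging to the level set of `c : ι` act on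
`N_1` by the scalar `χ c`. The mixed induced module has two levels, with scalars `q⁻¹` and `-q`.
The right module structure is encoded by the bilinear map `act`. -/
structure IsInducedFamily (H : Equiv.Perm (Fin n) → A) (act : M →ₗ[R] A →ₗ[R] M)
    (η : Fin n → ι) (χ : ι → R) (N : Equiv.Perm (Fin n) → M) : Prop where
  act_mul : ∀ m a b, act m (a * b) = act (act m a) b
  eq_act : ∀ w, N w = act (N 1) (H w)
  act_one_s : ∀ i ∈ levelSteps η, act (N 1) (H (s n i)) = χ (η (lower i)) • N 1

namespace IsInducedFamily

variable {w : Equiv.Perm (Fin n)} {i : Fin (n - 1)}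

lemma act_map_s_of_lt (hN : IsInducedFamily H act η χ N) (hH : IsHeckeFamily t H)
    (h : w (lower i) < w (upper i)) : act (N w) (H (s n i)) = N (w * s n i) := by
  rw [hN.eq_act w, ← hN.act_mul, hH.map_mul_s_of_lt h, ← hN.eq_act]

lemma act_map_s_of_gt (hN : IsInducedFamily H act η χ N) (hH : IsHeckeFamily t H)
    (h : w (upper i) < w (lower i)) :
    act (N w) (H (s n i)) = t • N w + N (w * s n i) := by
  rw [hN.eq_act w, ← hN.act_mul, hH.map_mul_s_of_gt h, map_add, map_smul, ← hN.eq_act, ← hN.eq_act]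

lemma act_map_s_of_eq [LinearOrder ι] (hN : IsInducedFamily H act η χ N)
    (hH : IsHeckeFamily t H) (hη : Monotone η) (hw : IsShort n (levelSteps η) w)
    (h : η (w (lower i)) = η (w (upper i))) :
    act (N w) (H (s n i)) = χ (η (w (lower i))) • N w := by
  obtain ⟨j, hj, hjw, hcomm⟩ := hw.exists_mul_s_eq_s_mul hη h
  have hlt := (hw.covBy hη h).lt
  have hmul : H w * H (s n i) = H (s n j) * H w := by
    rw [hH.map_mul_s_of_lt hlt, hcomm, hH.map_s_mul (hcomm ▸ len_mul_s_of_lt hlt)]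
  rw [hN.eq_act w, ← hN.act_mul, hmul, hN.act_mul, hN.act_one_s j hj, map_smul,
    LinearMap.smul_apply, hjw]

end IsInducedFamily

end HeckeAlgebra

section TensorPower

variable {n : ℕ}

lemma eb_eq_basisFun : (eb : (Fin n → Fin 2) → V n) = Pi.basisFun K (Fin n → Fin 2) := by
  funext η γ
  simp [eb, Pi.single_apply]

lemma linearIndependent_eb : LinearIndependent K (eb : (Fin n → Fin 2) → V n) :=
  eb_eq_basisFun ▸ (Pi.basisFun K (Fin n → Fin 2)).linearIndependent

lemma linearIndependent_eb_comp {η : Fin n → Fin 2} (hη : Monotone η) :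
    LinearIndependent K fun w : {w // IsShort n (levelSteps η) w} => eb (η ∘ w.1) :=
  linearIndependent_eb.comp _ fun w w' h => Subtype.ext (w.2.eq_of_comp_eq hη w'.2 h)

lemma eb_apply_comp_s (η γ : Fin n → Fin 2) (i : Fin (n - 1)) :
    eb η (γ ∘ s n i) = eb (η ∘ s n i) γ := by
  have : γ ∘ s n i = η ↔ γ = η ∘ s n i :=
    ⟨by rintro rfl; funext a; simp, by rintro rfl; funext a; simp⟩
  simp only [eb, this]

lemma Hop_eb_apply (η γ : Fin n → Fin 2) (i : Fin (n - 1)) :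
    Hop n i (val_add_one_lt i) (eb η) γ =
      if γ (lower i) = 0 ∧ γ (upper i) = 0 then q⁻¹ * eb η γ
      else if γ (lower i) = 1 ∧ γ (upper i) = 1 then -q * eb η γ
      else if γ (lower i) = 0 ∧ γ (upper i) = 1 then eb (η ∘ s n i) γ
      else (q⁻¹ - q) * eb η γ + eb (η ∘ s n i) γ := by
  rw [← eb_apply_comp_s]
  rfl

variable {η : Fin n → Fin 2} {i : Fin (n - 1)}

lemma Hop_eb_of_eq (h : η (lower i) = η (upper i)) :
    Hop n i (val_add_one_lt i) (eb η) = (![q⁻¹, -q] : Fin 2 → K) (η (lower i)) • eb η := by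
  funext γ
  rw [Hop_eb_apply, comp_s_eq_self h]
  by_cases hγ : γ = η
  · subst hγ
    rw [← h]
    generalize γ (lower i) = c
    fin_cases c <;> simp
  · simp [eb, hγ]

lemma Hop_eb_of_lt (h : η (lower i) < η (upper i)) :
    Hop n i (val_add_one_lt i) (eb η) = eb (η ∘ s n i) := by
  obtain ⟨hl, hu⟩ : η (lower i) = 0 ∧ η (upper i) = 1 := by omega
  have hne : η ≠ η ∘ s n i := fun hs => by simpa [hl, hu] using congrFun hs (lower i)
  funext γ
  rw [Hop_eb_apply]
  by_cases hγ : γ = η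
  · subst hγ
    simp [hl, hu]
  by_cases hγs : γ = η ∘ s n i
  · subst hγs
    simp [eb, hl, hu, hne.symm]
  · simp [eb, hγ, hγs]

lemma Hop_eb_of_gt (h : η (upper i) < η (lower i)) :
    Hop n i (val_add_one_lt i) (eb η) = (q⁻¹ - q) • eb η + eb (η ∘ s n i) := by
  obtain ⟨hl, hu⟩ : η (lower i) = 1 ∧ η (upper i) = 0 := by omega
  have hne : η ≠ η ∘ s n i := fun hs => by simpa [hl, hu] using congrFun hs (lower i)
  funext γ
  rw [Hop_eb_apply, Pi.add_apply, Pi.smul_apply, smul_eq_mul]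
  by_cases hγ : γ = η
  · subst hγ
    simp [hl, hu]
  by_cases hγs : γ = η ∘ s n i
  · subst hγs
    simp [eb, hl, hu, hne.symm]
  · simp [eb, hγ, hγs]

end TensorPower

section WeightSpace

variable {n k : ℕ}

lemma monotone_etaMin : Monotone (etaMin n k) := by
  intro a b hab
  simp only [etaMin, Fin.le_def] at *
  split_ifs <;> omega

lemma etaMin_eq_zero_iff {a : Fin n} : etaMin n k a = 0 ↔ (a : ℕ) < k := by
  simp [etaMin]

lemma etaMin_lower_eq_one {i : Fin (n - 1)} (hi : i ∈ Pset n k) : etaMin n k (lower i) = 1 := by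
  simp only [Pset, Finset.mem_filter, Finset.mem_univ, true_and] at hi
  exact if_neg hi.not_gt

lemma etaMin_lower_eq_zero {i : Fin (n - 1)} (hi : i ∈ Qset n k) : etaMin n k (lower i) = 0 := by
  simp only [Qset, Finset.mem_filter, Finset.mem_univ, true_and] at hi
  exact etaMin_eq_zero_iff.2 (Nat.lt_of_succ_lt hi)

lemma Pset_union_Qset : Pset n k ∪ Qset n k = levelSteps (etaMin n k) := by
  ext i
  simp only [Pset, Qset, Finset.mem_union, Finset.mem_filter, Finset.mem_univ, true_and,
    mem_levelSteps, etaMin, lower, upper]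
  grind

lemma card_etaMin_eq_zero (hk : k ≤ n) :
    (Finset.univ.filter fun i => etaMin n k i = 0).card = k := by
  simp only [etaMin_eq_zero_iff]
  rw [Fin.card_filter_val_lt, min_eq_right hk]

lemma card_comp_perm_eq_zero (ξ : Fin n → Fin 2) (w : Equiv.Perm (Fin n)) :
    (Finset.univ.filter fun i => ξ (w i) = 0).card = (Finset.univ.filter fun i => ξ i = 0).card :=
  Finset.card_equiv w (by simp)

lemma comp_sort_eq_etaMin {ξ : Fin n → Fin 2}
    (hξ : (Finset.univ.filter fun i => ξ i = 0).card = k) : ξ ∘ Tuple.sort ξ = etaMin n k := by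
  have hzero : ∀ a, (ξ ∘ Tuple.sort ξ) a = 0 ↔ etaMin n k a = 0 := fun a => by
    have := Tuple.lt_card_le_iff_apply_le_of_monotone (j := a) (a := 0) (Tuple.monotone_sort ξ)
    simp only [Function.comp_apply, Fin.le_zero_iff, card_comp_perm_eq_zero, hξ] at this
    rw [etaMin_eq_zero_iff, this, Function.comp_apply]
  funext a
  have := hzero a
  omega

lemma exists_isShort_etaMin_comp_eq {ξ : Fin n → Fin 2}
    (hξ : (Finset.univ.filter fun i => ξ i = 0).card = k) :
    ∃ w, IsShort n (levelSteps (etaMin n k)) w ∧ etaMin n k ∘ w = ξ := by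
  have hcomp : etaMin n k ∘ ⇑(Tuple.sort ξ)⁻¹ = ξ := by
    rw [← comp_sort_eq_etaMin hξ]
    funext a
    simp
  exact ⟨(Tuple.sort ξ)⁻¹, (isShort_iff_inv_eq_sort monotone_etaMin).2 (by rw [hcomp, inv_inv]),
    hcomp⟩

lemma weightSpace_eq_span_range (hk : k ≤ n) :
    weightSpace n k = Submodule.span K (Set.range
      fun w : {w // IsShort n (levelSteps (etaMin n k)) w} => eb (etaMin n k ∘ w.1)) := by
  rw [weightSpace]
  congr 1
  ext f
  constructor
  · rintro ⟨ξ, hξ, rfl⟩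
    obtain ⟨w, hw, rfl⟩ := exists_isShort_etaMin_comp_eq hξ
    exact ⟨⟨w, hw⟩, rfl⟩
  · rintro ⟨w, rfl⟩
    exact ⟨_, (card_comp_perm_eq_zero _ w.1).trans (card_etaMin_eq_zero hk), rfl⟩

end WeightSpace

section Isomorphism

variable {n k : ℕ} {A M : Type*} [Ring A] [Algebra K A] [AddCommGroup M] [Module K M]
  {H : Equiv.Perm (Fin n) → A} {act : M →ₗ[K] A →ₗ[K] M} {N : Equiv.Perm (Fin n) → M}

lemma IsInducedFamily.of_mem_Pset_Qset (hact : ∀ m a b, act m (a * b) = act (act m a) b)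
    (hN : ∀ w, N w = act (N 1) (H w))
    (hP : ∀ i ∈ Pset n k, act (N 1) (H (s n i)) = (-q) • N 1)
    (hQ : ∀ i ∈ Qset n k, act (N 1) (H (s n i)) = q⁻¹ • N 1) :
    IsInducedFamily H act (etaMin n k) ![q⁻¹, -q] N := by
  refine ⟨hact, hN, fun i hi => ?_⟩
  rw [← Pset_union_Qset, Finset.mem_union] at hi
  rcases hi with hi | hi
  · rw [hP i hi, etaMin_lower_eq_one hi, Matrix.cons_val_one, Matrix.cons_val_fin_one]
  · rw [hQ i hi, etaMin_lower_eq_zero hi, Matrix.cons_val_zero]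

lemma IsInducedFamily.map_act_map_s {η : Fin n → Fin 2} (hη : Monotone η)
    (hN : IsInducedFamily H act η ![q⁻¹, -q] N) (hH : IsHeckeFamily (q⁻¹ - q) H) {Ψ : M →ₗ[K] V n}
    (hΨ : ∀ w, IsShort n (levelSteps η) w → Ψ (N w) = eb (η ∘ w))
    {w : Equiv.Perm (Fin n)} (hw : IsShort n (levelSteps η) w) (i : Fin (n - 1)) :
    Ψ (act (N w) (H (s n i))) = Hop n i (val_add_one_lt i) (Ψ (N w)) := by
  rw [hΨ w hw]
  rcases lt_trichotomy (η (w (lower i))) (η (w (upper i))) with h | h | h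
  · rw [hN.act_map_s_of_lt hH (hη.reflect_lt h), hΨ _ (hw.mul_s hη h.ne), Hop_eb_of_lt h]
    rfl
  · rw [hN.act_map_s_of_eq hH hη hw h, map_smul, hΨ w hw, Hop_eb_of_eq h]
    rfl
  · rw [hN.act_map_s_of_gt hH (hη.reflect_lt h), map_add, map_smul, hΨ w hw,
      hΨ _ (hw.mul_s hη h.ne'), Hop_eb_of_gt h]
    rfl

theorem statement9_general (hk : k ≤ n) (hH : IsHeckeFamily (q⁻¹ - q) H)
    (hN : IsInducedFamily H act (etaMin n k) ![q⁻¹, -q] N)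
    (hNLI : LinearIndependent K
      fun w : {w : Equiv.Perm (Fin n) // IsShort n (Pset n k ∪ Qset n k) w} => N w)
    (hNspan : Submodule.span K (N '' {w | IsShort n (Pset n k ∪ Qset n k) w}) = ⊤) :
    ∃ Ψ : M →ₗ[K] V n,
      (∀ w : Equiv.Perm (Fin n), IsShort n (Pset n k ∪ Qset n k) w →
        Ψ (N w) = eb (fun i => etaMin n k (w i))) ∧
      Function.Injective Ψ ∧
      LinearMap.range Ψ = weightSpace n k ∧
      (∀ (m : M) (i : Fin (n - 1)),
        Ψ (act m (H (s n i))) = Hop n i (val_add_one_lt i) (Ψ m)) := by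
  rw [Pset_union_Qset] at *
  let b := Module.Basis.mk hNLI (Set.image_eq_range N _ ▸ hNspan.ge)
  have hb : ∀ w, b w = N w := Module.Basis.mk_apply _ _
  let Ψ := b.constr K fun w => eb (etaMin n k ∘ w.1)
  have hΨ : ∀ w, IsShort n (levelSteps (etaMin n k)) w → Ψ (N w) = eb (etaMin n k ∘ w) :=
    fun w hw => by rw [← hb ⟨w, hw⟩, b.constr_basis]
  refine ⟨Ψ, hΨ,
    b.injective_constr_of_linearIndependent (linearIndependent_eb_comp monotone_etaMin),
    by rw [weightSpace_eq_span_range hk, b.constr_range], fun m i => ?_⟩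
  have hcomm : Ψ ∘ₗ act.flip (H (s n i)) = Hop n i (val_add_one_lt i) ∘ₗ Ψ := b.ext fun w => by
    simpa [hb] using hN.map_act_map_s monotone_etaMin hH hΨ w.2 i
  exact LinearMap.congr_fun hcomm m

end Isomorphism

/-!
STATEMENT 9: The map `Ψ : M^p_q → (V^{⊗n})_k`, `N_w ↦ v_{η_min·w}`, is an isomorphism of
right `H_n`-modules, where `W_q = ⟨s_1,…,s_{k-1}⟩`, `W_p = ⟨s_{k+1},…,s_{n-1}⟩`,
`η_min = (0,…,0,1,…,1)` (`k` zeros), `S_n` acts on `{0,1}^n` from the right by permuting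
entries, and `H_n` acts on `V^{⊗n}` by `H_i ↦ Ȟ_i`.
-/

theorem statement9 (n k : ℕ) (hk : k ≤ n)
    (A : Type) [Ring A] [Algebra K A]
    (H : Equiv.Perm (Fin n) → A)
    (hHLI : LinearIndependent K H)
    (hHspan : Submodule.span K (Set.range H) = ⊤)
    (hone : H 1 = 1)
    (hmul : ∀ (w : Equiv.Perm (Fin n)) (i : Fin (n - 1)),
      len n (w * s n i) = len n w + 1 → H (w * s n i) = H w * H (s n i))
    (hquad : ∀ i : Fin (n - 1),
      H (s n i) * H (s n i) = (q⁻¹ - q) • H (s n i) + 1)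
    (M : Type) [AddCommGroup M] [Module K M]
    (act : M → A → M)
    (hact_addl : ∀ (m m' : M) (a : A), act (m + m') a = act m a + act m' a)
    (hact_addr : ∀ (m : M) (a b : A), act m (a + b) = act m a + act m b)
    (hact_smull : ∀ (c : K) (m : M) (a : A), act (c • m) a = c • act m a)
    (hact_smulr : ∀ (c : K) (m : M) (a : A), act m (c • a) = c • act m a)
    (hact_one : ∀ m : M, act m 1 = m)
    (hact_mul : ∀ (m : M) (a b : A), act m (a * b) = act (act m a) b)
    (N : Equiv.Perm (Fin n) → M)
    (hN : ∀ w, N w = act (N 1) (H w))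
    (hgenP : ∀ i ∈ Pset n k, act (N 1) (H (s n i)) = (-q) • N 1)
    (hgenQ : ∀ i ∈ Qset n k, act (N 1) (H (s n i)) = q⁻¹ • N 1)
    (hNLI : LinearIndependent K
      (fun w : {w : Equiv.Perm (Fin n) // IsShort n (Pset n k ∪ Qset n k) w} => N w))
    (hNspan : Submodule.span K (N '' {w | IsShort n (Pset n k ∪ Qset n k) w}) = ⊤)
 :
    ∃ Ψ : M →ₗ[K] V n,
      (∀ w : Equiv.Perm (Fin n), IsShort n (Pset n k ∪ Qset n k) w →
        Ψ (N w) = eb (fun i => etaMin n k (w i))) ∧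
      Function.Injective Ψ ∧
      LinearMap.range Ψ = weightSpace n k ∧
      (∀ (m : M) (i : Fin (n - 1)),
        Ψ (act m (H (s n i))) = Hop n (i : ℕ) (by have := i.isLt; omega) (Ψ m)) :=
  statement9_general (act := LinearMap.mk₂ K act hact_addl hact_smull hact_addr hact_smulr)
    hk ⟨hone, hmul, hquad⟩ (.of_mem_Pset_Qset hact_mul hN hgenP hgenQ) hNLI hNspan
end
end
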